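/- Every τ-tilting-finite finite-dimensional algebra over an algebraically closed field K whose quiver has underlying graph a tree is representation-finite. -/

import Mathlib

/- Formalization of statements from
   "Report on the finiteness of silting objects"
   by T. Aihara, T. Honma, K. Miyamoto, Q. Wang. -/

open CategoryTheory CategoryTheory.Limits

universe u v w

noncomputable section
namespace PaperSilting
/-! ### Module-theoretic notions.

We model right `Λ`-modules as left modules over the opposite ring; all the
definitions below are stated for left modules over a ring `R` and are applied
with `R := Λᵐᵒᵖ`. -/

/-- The category of `R`-modules (in `Type 0`). -/
abbrev ModCat (R : Type) [Ring R] := ModuleCat.{0} R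

variable {R : Type} [Ring R]

/-- The module object `M` is finitely generated. -/
def IsFGMod {R : Type} [Ring R] (M : ModCat R) : Prop := Module.Finite R M

/-- Indecomposable module object. -/
def IsIndecMod {R : Type} [Ring R] (M : ModCat R) : Prop :=
  ¬ IsZero M ∧ ∀ A B : ModCat R, Nonempty (M ≅ A ⊞ B) → IsZero A ∨ IsZero B

/-- `N` belongs to `add M`, i.e. `N` is a direct summand of a finite direct sum
of copies of `M`. -/
def MemAddMod {R : Type} [Ring R] (N M : ModCat R) : Prop :=
  ∃ (k : ℕ) (g : N ⟶ ⨁ (fun _ : Fin k => M)) (h : (⨁ (fun _ : Fin k => M)) ⟶ N),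
    g ≫ h = 𝟙 N

/-- A basic module: it has no direct summand of the form `N ⊕ N` with `N ≠ 0`. -/
def IsBasicMod {R : Type} [Ring R] (M : ModCat R) : Prop :=
  ∀ N X : ModCat R, Nonempty (M ≅ (N ⊞ N) ⊞ X) → IsZero N

/-- `M` is τ-rigid, i.e. `Hom(M, τM) = 0`: there is a projective presentation
`P₁ → P₀ → M → 0` by finitely generated projectives such that
`Hom(P₀, M) → Hom(P₁, M)` is surjective (Adachi–Iyama–Reiten). -/
def IsTauRigidMod {R : Type} [Ring R] (M : ModCat R) : Prop :=
  ∃ (P₁ P₀ : ModCat R) (f : P₁ ⟶ P₀) (g : P₀ ⟶ M),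
    Projective P₁ ∧ Projective P₀ ∧ IsFGMod P₁ ∧ IsFGMod P₀ ∧
    Function.Surjective g ∧ Function.Exact f g ∧
    ∀ h : P₁ ⟶ M, ∃ k : P₀ ⟶ M, f ≫ k = h

/-- A τ-rigid pair `(M, P)`: `M` is a τ-rigid module and `P` is a finitely
generated projective with `Hom(P, M) = 0`. -/
def IsTauRigidPairMod {R : Type} [Ring R] (M P : ModCat R) : Prop :=
  IsFGMod M ∧ IsTauRigidMod M ∧ IsFGMod P ∧ Projective P ∧ ∀ f : P ⟶ M, f = 0

/-- `M` is a support τ-tilting module: `(M, P)` is a maximal τ-rigid pair for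
some projective `P` (Adachi–Iyama–Reiten; equivalently, `M` is the `0`-th
cohomology of a two-term silting complex in `K^b(proj)`). -/
def IsSupportTauTiltingMod {R : Type} [Ring R] (M : ModCat R) : Prop :=
  ∃ P : ModCat R, IsTauRigidPairMod M P ∧
    ∀ N Q : ModCat R, IsTauRigidPairMod (M ⊞ N) (P ⊞ Q) → MemAddMod N M ∧ MemAddMod Q P

/-- The ring `R` admits only finitely many basic support τ-tilting modules up
to isomorphism. -/
def IsTauTiltingFiniteRing (R : Type) [Ring R] : Prop :=
  ∃ (n : ℕ) (f : Fin n → ModCat R),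
    ∀ M : ModCat R, IsSupportTauTiltingMod M → IsBasicMod M → ∃ i, Nonempty (M ≅ f i)

/-- The ring `R` admits only finitely many finitely generated indecomposable
modules up to isomorphism. -/
def IsRepFiniteRing (R : Type) [Ring R] : Prop :=
  ∃ (n : ℕ) (f : Fin n → ModCat R),
    ∀ M : ModCat R, IsFGMod M → IsIndecMod M → ∃ i, Nonempty (M ≅ f i)

/-- `R` has exactly `n` isomorphism classes of basic support τ-tilting modules. -/
def SupportTauTiltingCount (R : Type) [Ring R] (n : ℕ) : Prop :=
  ∃ f : Fin n → ModCat R,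
    (∀ i, IsSupportTauTiltingMod (f i) ∧ IsBasicMod (f i)) ∧
    (∀ i j, Nonempty (f i ≅ f j) → i = j) ∧
    (∀ M : ModCat R, IsSupportTauTiltingMod M → IsBasicMod M → ∃ i, Nonempty (M ≅ f i))

/-- An algebra `Λ` is τ-tilting-finite (with respect to right modules,
i.e. left `Λᵐᵒᵖ`-modules). -/
def IsTauTiltingFinite (Λ : Type) [Ring Λ] : Prop := IsTauTiltingFiniteRing Λᵐᵒᵖ

/-- An algebra `Λ` is representation-finite (with respect to right modules). -/
def IsRepFinite (Λ : Type) [Ring Λ] : Prop := IsRepFiniteRing Λᵐᵒᵖ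
/-! ### Radical, idempotents and the (Gabriel) quiver of an algebra. -/

/-- `x` lies in the Jacobson radical (left quasi-regular characterization). -/
def InRad (Λ : Type) [Ring Λ] (x : Λ) : Prop := ∀ y : Λ, IsUnit (1 - y * x)

/-- `x` lies in the square of the Jacobson radical. -/
def InRadSq (Λ : Type) [Ring Λ] (x : Λ) : Prop :=
  x ∈ AddSubgroup.closure {z : Λ | ∃ a b : Λ, InRad Λ a ∧ InRad Λ b ∧ z = a * b}

/-- The Jacobson radical squares to zero. -/
def RadSqZero (Λ : Type) [Ring Λ] : Prop :=
  ∀ x y : Λ, InRad Λ x → InRad Λ y → x * y = 0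

/-- A primitive idempotent. -/
def IsPrimitiveIdem (Λ : Type) [Ring Λ] (f : Λ) : Prop :=
  IsIdempotentElem f ∧ f ≠ 0 ∧
  ∀ a b : Λ, IsIdempotentElem a → IsIdempotentElem b →
    a * b = 0 → b * a = 0 → a + b = f → a = 0 ∨ b = 0

/-- A complete family of pairwise orthogonal primitive idempotents. -/
def IsCompletePrimitiveFamily (Λ : Type) [Ring Λ] {n : ℕ} (e : Fin n → Λ) : Prop :=
  (∀ i, IsPrimitiveIdem Λ (e i)) ∧ (∀ i j, i ≠ j → e i * e j = 0) ∧ (∑ i, e i) = 1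

/-- There is an arrow `i → j` in the Gabriel quiver of `Λ`
(i.e. `e i · (rad Λ / rad² Λ) · e j ≠ 0`). -/
def HasArrow (Λ : Type) [Ring Λ] {n : ℕ} (e : Fin n → Λ) (i j : Fin n) : Prop :=
  ∃ x : Λ, InRad Λ x ∧ ¬ InRadSq Λ (e i * x * e j)

/-- The underlying graph of the Gabriel quiver of `Λ`. -/
def QuiverGraph (Λ : Type) [Ring Λ] {n : ℕ} (e : Fin n → Λ) : SimpleGraph (Fin n) :=
  SimpleGraph.fromRel (fun i j => HasArrow Λ e i j)

/-- Between any two vertices there is (up to scalars) at most a one-dimensional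
space of arrows, i.e. `dim_K (e i · (rad/rad²) · e j) ≤ 1`. -/
def ArrowMultLE1 (Λ : Type) [Ring Λ] (K : Type) [Field K] [Algebra K Λ] {n : ℕ}
    (e : Fin n → Λ) : Prop :=
  ∀ (i j : Fin n) (x y : Λ), InRad Λ x → InRad Λ y →
    ∃ a b : K, (a ≠ 0 ∨ b ≠ 0) ∧ InRadSq Λ (a • (e i * x * e j) + b • (e i * y * e j))

/-- `Λ` is presented by a quiver whose underlying graph is a tree. -/
def IsTreeQuiverAlgebra (Λ : Type) [Ring Λ] (K : Type) [Field K] [Algebra K Λ] : Prop :=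
  ∃ (n : ℕ) (e : Fin n → Λ), IsCompletePrimitiveFamily Λ e ∧
    (∀ i, ¬ HasArrow Λ e i i) ∧
    (∀ i j, ¬ (HasArrow Λ e i j ∧ HasArrow Λ e j i)) ∧
    ArrowMultLE1 Λ K e ∧
    (QuiverGraph Λ e).IsTree

/-!
A splitting chain `D₀, D₁, …` cuts out a decreasing sequence of torsion classes `T₀ ⊇ T₁ ⊇ …`: each
`D_l` lies in `T_l = {X | Hom(X, D_j) = 0 for j < l}`, and every nonzero map from `T_l` to `D_l`
splits. Each `T_l` has an `Ext`-progenerator, which is a support τ-tilting module, and the classes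
`T_l` decrease strictly, so τ-tilting finiteness bounds the lengths of splitting chains. If a
projective generator is torsion-free for the chain, the chain can be extended until `T_k = 0`, and
then every indecomposable module is one of the `D_l`.

To make the projective generator torsion-free, induct on the set of vertices supporting the modules.
In a forest, the radical of the projective module at `y` is a sum of local modules `M_c`, one for
each arrow `y ⟶ c`, supported on disjoint branches. By induction the branches have complete chains;
merging these gives a chain for which all `M_c` are torsion-free, and to such a chain the
projective modules at the vertices can be adjoined.
-/

/-! ### Split surjections and pushouts -/

/-- The linear map `f` is a split epimorphism. -/
def HasSection {A B : Type} [AddCommGroup A] [Module R A] [AddCommGroup B] [Module R B]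
    (f : A →ₗ[R] B) : Prop :=
  ∃ s : B →ₗ[R] A, ∀ y, f (s y) = y

/-- `Y` is a direct summand of `X`. -/
def IsRetract (R : Type) [Ring R] (Y X : Type) [AddCommGroup Y] [Module R Y] [AddCommGroup X]
    [Module R X] : Prop :=
  ∃ f : X →ₗ[R] Y, HasSection f

/-- Every linear map from the source of `i` to `Y` extends along `i`. -/
def ExtendsAlong {A B : Type} [AddCommGroup A] [Module R A] [AddCommGroup B] [Module R B]
    (i : A →ₗ[R] B) (Y : Type) [AddCommGroup Y] [Module R Y] : Prop :=
  ∀ g : A →ₗ[R] Y, ∃ k : B →ₗ[R] Y, ∀ x, k (i x) = g x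

section Splitting

variable {A B C D X Y : Type} [AddCommGroup A] [Module R A] [AddCommGroup B] [Module R B]
  [AddCommGroup C] [Module R C] [AddCommGroup D] [Module R D] [AddCommGroup X] [Module R X]
  [AddCommGroup Y] [Module R Y]

theorem HasSection.surjective {f : A →ₗ[R] B} (hf : HasSection f) : Function.Surjective f :=
  let ⟨s, hs⟩ := hf
  fun y => ⟨s y, hs y⟩

theorem HasSection.of_comp {f : B →ₗ[R] C} {g : A →ₗ[R] B} (h : HasSection (f ∘ₗ g)) :
    HasSection f :=
  let ⟨s, hs⟩ := h
  ⟨g ∘ₗ s, hs⟩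

theorem hasSection_linearEquiv (e : A ≃ₗ[R] B) : HasSection e.toLinearMap :=
  ⟨e.symm.toLinearMap, e.apply_symm_apply⟩

theorem IsRetract.of_equiv (e : X ≃ₗ[R] Y) : IsRetract R Y X :=
  ⟨e.toLinearMap, hasSection_linearEquiv e⟩

theorem IsRetract.trans (hAB : IsRetract R A B) (hBC : IsRetract R B C) : IsRetract R A C :=
  let ⟨f, s, hs⟩ := hAB
  let ⟨g, t, ht⟩ := hBC
  ⟨f ∘ₗ g, t ∘ₗ s, fun y => by simp only [LinearMap.comp_apply, ht, hs]⟩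

theorem HasSection.exists_retraction {i : A →ₗ[R] B} {p : B →ₗ[R] C} (hp : HasSection p)
    (hi : Function.Injective i) (hip : Function.Exact i p) :
    ∃ r : B →ₗ[R] A, ∀ x, r (i x) = x := by
  obtain ⟨s, hs⟩ := hp
  have hsplit := hip.split_tfae'.out 0 1
  obtain ⟨-, r, hr⟩ := hsplit.1 ⟨hi, s, LinearMap.ext hs⟩
  exact ⟨r, LinearMap.congr_fun hr⟩

theorem HasSection.nonempty_equiv_prod {i : A →ₗ[R] B} {p : B →ₗ[R] C} (hp : HasSection p)
    (hi : Function.Injective i) (hip : Function.Exact i p) : Nonempty (B ≃ₗ[R] C × A) := by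
  obtain ⟨s, hs⟩ := hp
  have hsplit := hip.split_tfae'.out 0 2
  obtain ⟨e, -⟩ := hsplit.1 ⟨hi, s, LinearMap.ext hs⟩
  exact ⟨e.trans (LinearEquiv.prodComm R A C)⟩

theorem HasSection.nonempty_equiv_prod_ker {f : A →ₗ[R] B} (hf : HasSection f) :
    Nonempty (A ≃ₗ[R] B × LinearMap.ker f) :=
  hf.nonempty_equiv_prod (LinearMap.ker f).subtype_injective f.exact_subtype_ker_map

theorem exists_factor_of_surjective {f : A →ₗ[R] B} (hf : Function.Surjective f) (g : A →ₗ[R] C)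
    (h : ∀ x, f x = 0 → g x = 0) : ∃ k : B →ₗ[R] C, ∀ x, k (f x) = g x :=
  have hle : LinearMap.ker f ≤ LinearMap.ker g := h
  ⟨(LinearMap.ker f).liftQ g hle ∘ₗ (f.quotKerEquivOfSurjective hf).symm.toLinearMap, fun x => by
    rw [LinearMap.comp_apply, LinearEquiv.coe_coe, LinearMap.quotKerEquivOfSurjective_symm_apply,
      Submodule.liftQ_apply]⟩

theorem exists_factor_of_injective {i : A →ₗ[R] B} (hi : Function.Injective i) (g : C →ₗ[R] B)
    (h : ∀ c, ∃ a, i a = g c) : ∃ k : C →ₗ[R] A, ∀ c, i (k c) = g c :=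
  ⟨(LinearEquiv.ofInjective i hi).symm.toLinearMap ∘ₗ g.codRestrict (LinearMap.range i) h, fun c =>
    congrArg Subtype.val ((LinearEquiv.ofInjective i hi).apply_symm_apply ⟨g c, h c⟩)⟩

theorem hasSection_of_retraction {i : A →ₗ[R] B} {p : B →ₗ[R] C} (hp : Function.Surjective p)
    (hip : Function.Exact i p) (hi : ∃ r : B →ₗ[R] A, ∀ x, r (i x) = x) : HasSection p := by
  obtain ⟨r, hr⟩ := hi
  have hsplit := hip.split_tfae'.out 1 0
  obtain ⟨-, s, hs⟩ := hsplit.1 ⟨hp, r, LinearMap.ext hr⟩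
  exact ⟨s, LinearMap.congr_fun hs⟩

theorem exact_inl_snd : Function.Exact (LinearMap.inl R A B) (LinearMap.snd R A B) :=
  LinearMap.exact_iff.2 (LinearMap.ker_snd R A B)

/-- The pushout of `u : A → D` along `a : A → B`, realised as a quotient of `D × B`. -/
abbrev PushoutModule (a : A →ₗ[R] B) (u : A →ₗ[R] D) : Type :=
  (D × B) ⧸ LinearMap.range (u.prod (-a))

namespace PushoutModule

variable (a : A →ₗ[R] B) (u : A →ₗ[R] D)

/-- The structure map of the pushout out of the target of `u`. -/
def inl : D →ₗ[R] PushoutModule a u :=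
  (LinearMap.range (u.prod (-a))).mkQ ∘ₗ LinearMap.inl R D B

/-- The structure map of the pushout out of the target of `a`. -/
def inr : B →ₗ[R] PushoutModule a u :=
  (LinearMap.range (u.prod (-a))).mkQ ∘ₗ LinearMap.inr R D B

theorem exists_rep (z : PushoutModule a u) : ∃ d b, z = inl a u d + inr a u b := by
  obtain ⟨⟨d, b⟩, rfl⟩ := Submodule.mkQ_surjective _ z
  refine ⟨d, b, ?_⟩
  rw [inl, inr, LinearMap.comp_apply, LinearMap.comp_apply, ← map_add, LinearMap.inl_apply,
    LinearMap.inr_apply, Prod.mk_add_mk, add_zero, zero_add]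

theorem inl_add_inr_eq_zero_iff (d : D) (b : B) :
    inl a u d + inr a u b = 0 ↔ ∃ x, u x = d ∧ -a x = b := by
  rw [inl, inr, LinearMap.comp_apply, LinearMap.comp_apply, ← map_add, LinearMap.inl_apply,
    LinearMap.inr_apply, Prod.mk_add_mk, add_zero, zero_add, Submodule.mkQ_apply,
    Submodule.Quotient.mk_eq_zero]
  exact exists_congr fun x => Prod.mk.injEq ..|>.to_iff

theorem condition (x : A) : inr a u (a x) = inl a u (u x) := by
  have h := (inl_add_inr_eq_zero_iff a u (u x) (-a x)).2 ⟨x, rfl, rfl⟩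
  rw [map_neg, add_neg_eq_zero] at h
  exact h.symm

variable {a u}

theorem inl_injective (ha : Function.Injective a) : Function.Injective (inl a u) := by
  rw [injective_iff_map_eq_zero]
  intro d hd
  obtain ⟨x, rfl, hx⟩ := (inl_add_inr_eq_zero_iff a u d 0).1 (by rw [hd, map_zero, add_zero])
  rw [(injective_iff_map_eq_zero a).1 ha x (neg_eq_zero.1 hx), map_zero]

theorem inr_injective (hu : Function.Injective u) : Function.Injective (inr a u) := by
  rw [injective_iff_map_eq_zero]
  intro b hb
  obtain ⟨x, hx, rfl⟩ := (inl_add_inr_eq_zero_iff a u 0 b).1 (by rw [hb, map_zero, add_zero])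
  rw [(injective_iff_map_eq_zero u).1 hu x hx, map_zero, neg_zero]

/-- The map out of the pushout induced by a compatible pair of maps. -/
def desc (f : D →ₗ[R] C) (g : B →ₗ[R] C) (h : ∀ x, g (a x) = f (u x)) :
    PushoutModule a u →ₗ[R] C :=
  (LinearMap.range (u.prod (-a))).liftQ (f.coprod g) (by
    rintro _ ⟨x, rfl⟩
    change f (u x) + g (-a x) = 0
    rw [map_neg, h, add_neg_cancel])

variable {f : D →ₗ[R] C} {g : B →ₗ[R] C} (h : ∀ x, g (a x) = f (u x))

@[simp]
theorem desc_inl (d : D) : desc f g h (inl a u d) = f d := by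
  simp only [desc, inl, LinearMap.comp_apply, Submodule.mkQ_apply, Submodule.liftQ_apply,
    LinearMap.coprod_apply, LinearMap.inl_apply, map_zero, add_zero]

@[simp]
theorem desc_inr (b : B) : desc f g h (inr a u b) = g b := by
  simp only [desc, inr, LinearMap.comp_apply, Submodule.mkQ_apply, Submodule.liftQ_apply,
    LinearMap.coprod_apply, LinearMap.inr_apply, map_zero, zero_add]

theorem exact_inl_desc {q : B →ₗ[R] C} (haq : Function.Exact a q) :
    Function.Exact (inl a u) (desc 0 q haq.apply_apply_eq_zero) := by
  intro z
  constructor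
  · obtain ⟨d, b, rfl⟩ := exists_rep a u z
    intro hz
    rw [map_add, desc_inl, desc_inr, LinearMap.zero_apply, zero_add] at hz
    obtain ⟨x, rfl⟩ := (haq b).1 hz
    exact ⟨d + u x, by rw [map_add, condition]⟩
  · rintro ⟨d, rfl⟩
    rw [desc_inl, LinearMap.zero_apply]

theorem exact_inr_desc {q : D →ₗ[R] C} (huq : Function.Exact u q) :
    Function.Exact (inr a u) (desc q 0 fun x => (huq.apply_apply_eq_zero x).symm) := by
  intro z
  constructor
  · obtain ⟨d, b, rfl⟩ := exists_rep a u z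
    intro hz
    rw [map_add, desc_inl, desc_inr, LinearMap.zero_apply, add_zero] at hz
    obtain ⟨x, rfl⟩ := (huq d).1 hz
    exact ⟨a x + b, by rw [map_add, condition]⟩
  · rintro ⟨b, rfl⟩
    rw [desc_inr, LinearMap.zero_apply]

theorem desc_surjective_of_right (hg : Function.Surjective g) :
    Function.Surjective (desc f g h) := fun c =>
  let ⟨b, hb⟩ := hg c
  ⟨inr a u b, (desc_inr h b).trans hb⟩

end PushoutModule

end Splitting

/-! ### Vanishing of `Ext¹` -/

/-- The vanishing of `Ext¹(X, N)`. -/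
abbrev ExtVanishes (R : Type) [Ring R] (X N : Type) [AddCommGroup X] [Module R X] [AddCommGroup N]
    [Module R N] : Prop :=
  Subsingleton (Abelian.Ext (ModuleCat.of R X) (ModuleCat.of R N) 1)

section ExtVanishes

variable {A B C E N X Y : Type} [AddCommGroup A] [Module R A] [AddCommGroup B] [Module R B]
  [AddCommGroup C] [Module R C] [AddCommGroup E] [Module R E] [AddCommGroup N] [Module R N]
  [AddCommGroup X] [Module R X] [AddCommGroup Y] [Module R Y]

theorem shortExact_of_exact {i : A →ₗ[R] B} {p : B →ₗ[R] C} (hi : Function.Injective i)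
    (hp : Function.Surjective p) (hip : Function.Exact i p) :
    (ShortComplex.mk (ModuleCat.ofHom i) (ModuleCat.ofHom p)
      (ModuleCat.hom_ext hip.linearMap_comp_eq_zero)).ShortExact where
  exact := (ShortComplex.ShortExact.moduleCat_exact_iff_function_exact _).2 hip
  mono_f := (ModuleCat.mono_iff_injective _).2 hi
  epi_g := (ModuleCat.epi_iff_surjective _).2 hp

theorem ExtVanishes.exists_lift (hX : ExtVanishes R X N) {i : N →ₗ[R] E} {p : E →ₗ[R] Y}
    (hi : Function.Injective i) (hp : Function.Surjective p) (hip : Function.Exact i p)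
    (f : X →ₗ[R] Y) : ∃ g : X →ₗ[R] E, ∀ x, p (g x) = f x := by
  obtain ⟨y, hy⟩ := Abelian.Ext.covariant_sequence_exact₃ _ (shortExact_of_exact hi hp hip)
    (Abelian.Ext.mk₀ (ModuleCat.ofHom f)) rfl (Subsingleton.elim _ _)
  obtain ⟨g, rfl⟩ := Abelian.Ext.mk₀_bijective _ _ |>.2 y
  rw [Abelian.Ext.mk₀_comp_mk₀] at hy
  have hgf := (Abelian.Ext.mk₀_bijective _ _).1 hy
  exact ⟨g.hom, fun x => LinearMap.congr_fun (congrArg ModuleCat.Hom.hom hgf) x⟩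

theorem ExtVanishes.extendsAlong (hX : ExtVanishes R X N) {i : A →ₗ[R] B} {p : B →ₗ[R] X}
    (hi : Function.Injective i) (hp : Function.Surjective p) (hip : Function.Exact i p) :
    ExtendsAlong i N := by
  intro g
  obtain ⟨y, hy⟩ := Abelian.Ext.contravariant_sequence_exact₁ (shortExact_of_exact hi hp hip) _
    (Abelian.Ext.mk₀ (ModuleCat.ofHom g)) rfl (Subsingleton.elim _ _)
  obtain ⟨k, rfl⟩ := Abelian.Ext.mk₀_bijective _ _ |>.2 y
  rw [Abelian.Ext.mk₀_comp_mk₀] at hy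
  have hkg := (Abelian.Ext.mk₀_bijective _ _).1 hy
  exact ⟨k.hom, fun x => LinearMap.congr_fun (congrArg ModuleCat.Hom.hom hkg) x⟩

theorem extVanishes_of_extendsAlong {i : A →ₗ[R] B} {p : B →ₗ[R] X} (hi : Function.Injective i)
    (hp : Function.Surjective p) (hip : Function.Exact i p) (hB : ExtVanishes R B N)
    (h : ExtendsAlong i N) : ExtVanishes R X N := by
  refine subsingleton_of_forall_eq 0 fun x => ?_
  obtain ⟨g, rfl⟩ := Abelian.Ext.contravariant_sequence_exact₃ (shortExact_of_exact hi hp hip) _ x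
    (Subsingleton.elim _ _) (add_zero 1)
  obtain ⟨g, rfl⟩ := Abelian.Ext.mk₀_bijective _ _ |>.2 g
  obtain ⟨k, hk⟩ := h g.hom
  have hkg : g = ModuleCat.ofHom i ≫ ModuleCat.ofHom k :=
    ModuleCat.hom_ext (LinearMap.ext fun x => (hk x).symm)
  rw [hkg, ← Abelian.Ext.mk₀_comp_mk₀]
  exact (shortExact_of_exact hi hp hip).extClass_comp_assoc _

theorem extVanishes_of_projective [Module.Projective R X] : ExtVanishes R X N :=
  have := (IsProjective.iff_projective X).1 ‹_›
  subsingleton_of_forall_eq 0 Abelian.Ext.eq_zero_of_projective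

theorem extendsAlong_of_forall_hasSection
    (h : ∀ (E : Type) [AddCommGroup E] [Module R E] (i : N →ₗ[R] E) (p : E →ₗ[R] X),
      Function.Injective i → Function.Surjective p → Function.Exact i p → HasSection p)
    {i : A →ₗ[R] B} {p : B →ₗ[R] X} (hi : Function.Injective i) (hp : Function.Surjective p)
    (hip : Function.Exact i p) : ExtendsAlong i N := by
  intro g
  have hinl := PushoutModule.inl_injective (u := g) hi
  have hexact := PushoutModule.exact_inl_desc (u := g) hip
  have hsec := h _ _ _ hinl (PushoutModule.desc_surjective_of_right _ hp) hexact
  obtain ⟨r, hr⟩ := hsec.exists_retraction hinl hexact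
  exact ⟨r ∘ₗ PushoutModule.inr i g, fun x =>
    (congrArg r (PushoutModule.condition i g x)).trans (hr (g x))⟩

theorem extVanishes_of_forall_hasSection
    (h : ∀ (E : Type) [AddCommGroup E] [Module R E] (i : N →ₗ[R] E) (p : E →ₗ[R] X),
      Function.Injective i → Function.Surjective p → Function.Exact i p → HasSection p) :
    ExtVanishes R X N :=
  let q := Finsupp.linearCombination R (id : X → X)
  have hq : Function.Surjective q := Finsupp.linearCombination_id_surjective R X
  have hinj : Function.Injective (LinearMap.ker q).subtype := (LinearMap.ker q).subtype_injective
  have hexact : Function.Exact (LinearMap.ker q).subtype q := q.exact_subtype_ker_map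
  extVanishes_of_extendsAlong (A := LinearMap.ker q) hinj hq hexact extVanishes_of_projective
    (extendsAlong_of_forall_hasSection (A := LinearMap.ker q) h hinj hq hexact)

theorem ExtVanishes.of_retract_left (hX : ExtVanishes R X N) (h : IsRetract R Y X) :
    ExtVanishes R Y N := by
  obtain ⟨f, s, hs⟩ := h
  have hsf : ModuleCat.ofHom s ≫ ModuleCat.ofHom f = 𝟙 (ModuleCat.of R Y) :=
    ModuleCat.hom_ext (LinearMap.ext hs)
  refine subsingleton_of_forall_eq 0 fun y => ?_
  rw [← Abelian.Ext.mk₀_id_comp y, ← hsf, ← Abelian.Ext.mk₀_comp_mk₀_assoc,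
    Subsingleton.elim ((Abelian.Ext.mk₀ (ModuleCat.ofHom f)).comp y _) 0, Abelian.Ext.comp_zero]

theorem ExtVanishes.of_retract_right (hX : ExtVanishes R X N) (h : IsRetract R Y N) :
    ExtVanishes R X Y := by
  obtain ⟨f, s, hs⟩ := h
  have hsf : ModuleCat.ofHom s ≫ ModuleCat.ofHom f = 𝟙 (ModuleCat.of R Y) :=
    ModuleCat.hom_ext (LinearMap.ext hs)
  refine subsingleton_of_forall_eq 0 fun y => ?_
  rw [← Abelian.Ext.comp_mk₀_id y, ← hsf, ← Abelian.Ext.mk₀_comp_mk₀,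
    ← Abelian.Ext.comp_assoc_of_third_deg_zero,
    Subsingleton.elim (y.comp (Abelian.Ext.mk₀ (ModuleCat.ofHom s)) _) 0, Abelian.Ext.zero_comp]

theorem extVanishes_of_exact_right {i : A →ₗ[R] B} {p : B →ₗ[R] C} (hi : Function.Injective i)
    (hp : Function.Surjective p) (hip : Function.Exact i p) (hA : ExtVanishes R X A)
    (hC : ExtVanishes R X C) : ExtVanishes R X B := by
  refine subsingleton_of_forall_eq 0 fun y => ?_
  obtain ⟨z, rfl⟩ := Abelian.Ext.covariant_sequence_exact₂ _ (shortExact_of_exact hi hp hip) y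
    (Subsingleton.elim _ _)
  rw [Subsingleton.elim z 0, Abelian.Ext.zero_comp]

theorem extVanishes_of_exact_left {i : A →ₗ[R] B} {p : B →ₗ[R] C} (hi : Function.Injective i)
    (hp : Function.Surjective p) (hip : Function.Exact i p) (hA : ExtVanishes R A N)
    (hC : ExtVanishes R C N) : ExtVanishes R B N := by
  refine subsingleton_of_forall_eq 0 fun y => ?_
  obtain ⟨z, rfl⟩ := Abelian.Ext.contravariant_sequence_exact₂ (shortExact_of_exact hi hp hip) _ y
    (Subsingleton.elim _ _)
  rw [Subsingleton.elim z 0, Abelian.Ext.comp_zero]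

theorem extVanishes_of_subsingleton_left [Subsingleton X] : ExtVanishes R X N :=
  extVanishes_of_projective

theorem ExtVanishes.prod_left (hX : ExtVanishes R X N) (hY : ExtVanishes R Y N) :
    ExtVanishes R (X × Y) N :=
  extVanishes_of_exact_left LinearMap.inl_injective LinearMap.snd_surjective exact_inl_snd hX hY

theorem ExtVanishes.prod_right (hX : ExtVanishes R N X) (hY : ExtVanishes R N Y) :
    ExtVanishes R N (X × Y) :=
  extVanishes_of_exact_right LinearMap.inl_injective LinearMap.snd_surjective exact_inl_snd hX hY

/-- The splitting `A^(m+1) = A × A^m` along which powers are built inductively. -/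
def powSuccEquiv (R A : Type) [Ring R] [AddCommGroup A] [Module R A] (m : ℕ) :
    (A × (Fin m → A)) ≃ₗ[R] (Fin (m + 1) → A) :=
  Fin.consLinearEquiv R fun _ : Fin (m + 1) => A

theorem ExtVanishes.pi_left (hX : ExtVanishes R X N) : ∀ m : ℕ, ExtVanishes R (Fin m → X) N
  | 0 => extVanishes_of_subsingleton_left
  | m + 1 => (hX.prod_left (hX.pi_left m)).of_retract_left (.of_equiv (powSuccEquiv R X m))

theorem ExtVanishes.pi_right (hX : ExtVanishes R X N) : ∀ m : ℕ, ExtVanishes R X (Fin m → N)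
  | 0 => extVanishes_of_forall_hasSection fun _ _ _ _ _ _ hp hip =>
      hasSection_of_retraction hp hip ⟨0, fun _ => Subsingleton.elim _ _⟩
  | m + 1 => (hX.prod_right (hX.pi_right m)).of_retract_right (.of_equiv (powSuccEquiv R N m))

end ExtVanishes

/-! ### Torsion classes and splitting chains -/

section ModuleClasses

/-- A class of `R`-modules, kept unbundled so that products and function modules are covered
without wrapping them in the category of modules. -/
abbrev ModuleClass (R : Type) [Ring R] := ∀ (M : Type) [AddCommGroup M] [Module R M], Prop

/-- A torsion class of finitely generated modules. -/
structure IsTorsionClass (𝒯 : ModuleClass R) : Prop where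
  finite : ∀ {A : Type} [AddCommGroup A] [Module R A], 𝒯 A → Module.Finite R A
  zero : 𝒯 PUnit
  quotient : ∀ {A B : Type} [AddCommGroup A] [Module R A] [AddCommGroup B] [Module R B]
    (p : A →ₗ[R] B), Function.Surjective p → 𝒯 A → 𝒯 B
  extension : ∀ {A B C : Type} [AddCommGroup A] [Module R A] [AddCommGroup B] [Module R B]
    [AddCommGroup C] [Module R C] (i : A →ₗ[R] B) (p : B →ₗ[R] C), Function.Exact i p →
    Function.Surjective p → 𝒯 A → 𝒯 C → 𝒯 B

/-- A Serre class of finitely generated modules; the exact sequences are not required to be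
short, so that closure under submodules and quotients is included. -/
structure IsSerreClass (𝒜 : ModuleClass R) : Prop where
  finite : ∀ {A : Type} [AddCommGroup A] [Module R A], 𝒜 A → Module.Finite R A
  zero : 𝒜 PUnit
  middle : ∀ {A B C : Type} [AddCommGroup A] [Module R A] [AddCommGroup B] [Module R B]
    [AddCommGroup C] [Module R C] (i : A →ₗ[R] B) (p : B →ₗ[R] C), Function.Exact i p →
    𝒜 A → 𝒜 C → 𝒜 B

/-- The subclass of those members of `𝒯` that admit no nonzero map to `Z`. -/
def homVanishing (𝒯 : ModuleClass R) (Z : ModCat R) : ModuleClass R :=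
  fun X _ _ => 𝒯 X ∧ ∀ f : X →ₗ[R] Z, f = 0

variable {𝒯 𝒜 : ModuleClass R}
variable {A B C : Type} [AddCommGroup A] [Module R A] [AddCommGroup B] [Module R B]
  [AddCommGroup C] [Module R C]

theorem IsSerreClass.sub (h𝒜 : IsSerreClass 𝒜) (i : A →ₗ[R] B) (hi : Function.Injective i)
    (hB : 𝒜 B) : 𝒜 A :=
  h𝒜.middle (0 : PUnit →ₗ[R] A) i
    (LinearMap.exact_iff.2 (by rw [LinearMap.ker_eq_bot.2 hi, LinearMap.range_zero])) h𝒜.zero hB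

theorem IsSerreClass.submodule (h𝒜 : IsSerreClass 𝒜) (hA : 𝒜 A) (S : Submodule R A) : 𝒜 S :=
  h𝒜.sub S.subtype S.subtype_injective hA

theorem IsSerreClass.isTorsionClass (h𝒜 : IsSerreClass 𝒜) : IsTorsionClass 𝒜 where
  finite := h𝒜.finite
  zero := h𝒜.zero
  quotient p hp hA := h𝒜.middle p (0 : _ →ₗ[R] PUnit)
    (LinearMap.exact_iff.2 (by rw [LinearMap.range_eq_top.2 hp, LinearMap.ker_zero])) hA h𝒜.zero
  extension i p hip _ := h𝒜.middle i p hip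

namespace IsTorsionClass

variable (h𝒯 : IsTorsionClass 𝒯)
include h𝒯

theorem equiv (e : A ≃ₗ[R] B) (hA : 𝒯 A) : 𝒯 B := h𝒯.quotient e.toLinearMap e.surjective hA

theorem quotientModule (hA : 𝒯 A) (S : Submodule R A) : 𝒯 (A ⧸ S) :=
  h𝒯.quotient S.mkQ S.mkQ_surjective hA

theorem prod (hA : 𝒯 A) (hB : 𝒯 B) : 𝒯 (A × B) :=
  h𝒯.extension (LinearMap.inl R A B) (LinearMap.snd R A B) exact_inl_snd
    LinearMap.snd_surjective hA hB

theorem of_subsingleton [Subsingleton A] : 𝒯 A :=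
  h𝒯.quotient (0 : PUnit →ₗ[R] A) (fun _ => ⟨0, Subsingleton.elim _ _⟩) h𝒯.zero

theorem pi (hA : 𝒯 A) : ∀ m : ℕ, 𝒯 (Fin m → A)
  | 0 => h𝒯.of_subsingleton
  | m + 1 => h𝒯.equiv (powSuccEquiv R A m) (h𝒯.prod hA (pi hA m))

theorem of_hasSection {f : A →ₗ[R] B} (hf : HasSection f) (hA : 𝒯 A) : 𝒯 (LinearMap.ker f) := by
  obtain ⟨e⟩ := hf.nonempty_equiv_prod_ker
  have hsnd : Function.Surjective (LinearMap.snd R B (LinearMap.ker f)) := LinearMap.snd_surjective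
  exact h𝒯.quotient (LinearMap.snd R B _ ∘ₗ e.toLinearMap) (hsnd.comp e.surjective) hA

theorem homVanishing (Z : ModCat R) : IsTorsionClass (homVanishing 𝒯 Z) where
  finite hA := h𝒯.finite hA.1
  zero := ⟨h𝒯.zero, fun f => Subsingleton.elim f 0⟩
  quotient p hp hA := ⟨h𝒯.quotient p hp hA.1, fun f => by
    rw [← LinearMap.cancel_right hp, hA.2 (f ∘ₗ p), LinearMap.zero_comp]⟩
  extension i p hip hp hA hC := ⟨h𝒯.extension i p hip hp hA.1 hC.1, fun f => by
    obtain ⟨g, hg⟩ := exists_factor_of_surjective hp f (fun x hx => by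
      obtain ⟨a, rfl⟩ := (hip x).1 hx
      exact LinearMap.congr_fun (hA.2 (f ∘ₗ i)) a)
    ext x
    rw [← hg, hC.2 g, LinearMap.zero_apply, LinearMap.zero_apply]⟩

end IsTorsionClass

end ModuleClasses

section SplittingChains

/-- A nonzero member `Z` of `𝒯` such that every nonzero map from a member of `𝒯` to `Z` is a
split epimorphism. -/
structure IsSplittingObject (𝒯 : ModuleClass R) (Z : ModCat R) : Prop where
  mem : 𝒯 Z
  nontrivial : Nontrivial Z
  hasSection : ∀ (X : Type) [AddCommGroup X] [Module R X], 𝒯 X → ∀ f : X →ₗ[R] Z, f ≠ 0 →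
    HasSection f

/-- The members of `𝒜` that admit no nonzero map to any entry of the list `D`. -/
def ChainTorsion (𝒜 : ModuleClass R) : List (ModCat R) → ModuleClass R
  | [] => 𝒜
  | Z :: D => homVanishing (ChainTorsion 𝒜 D) Z

/-- The members of `𝒜` that admit no nonzero map from a module in `ChainTorsion 𝒜 D`. -/
def ChainFree (𝒜 : ModuleClass R) (D : List (ModCat R)) : ModuleClass R := fun F _ _ =>
  𝒜 F ∧ ∀ (Y : Type) [AddCommGroup Y] [Module R Y], ChainTorsion 𝒜 D Y → ∀ f : Y →ₗ[R] F, f = 0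

/-- The list `D` is built from `[]` by repeatedly adding at its head a splitting object for the
torsion class cut out by the previous entries. -/
inductive IsSplittingChain (𝒜 : ModuleClass R) : List (ModCat R) → Prop
  | nil : IsSplittingChain 𝒜 []
  | cons {Z : ModCat R} {D : List (ModCat R)} : IsSplittingObject (ChainTorsion 𝒜 D) Z →
      IsSplittingChain 𝒜 D → IsSplittingChain 𝒜 (Z :: D)

variable {𝒯 𝒜 : ModuleClass R} {D E : List (ModCat R)} {Z : ModCat R}
variable {A B C X Y : Type} [AddCommGroup A] [Module R A] [AddCommGroup B] [Module R B]
  [AddCommGroup C] [Module R C] [AddCommGroup X] [Module R X] [AddCommGroup Y] [Module R Y]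

theorem IsSerreClass.isTorsionClass_chainTorsion (h𝒜 : IsSerreClass 𝒜) :
    ∀ D, IsTorsionClass (ChainTorsion 𝒜 D)
  | [] => h𝒜.isTorsionClass
  | Z :: D => (h𝒜.isTorsionClass_chainTorsion D).homVanishing Z

theorem ChainTorsion.of_suffix (hDE : E <:+ D) (hX : ChainTorsion 𝒜 D X) : ChainTorsion 𝒜 E X := by
  induction D with
  | nil => rwa [List.suffix_nil.1 hDE]
  | cons Z D ih =>
    rcases List.suffix_cons_iff.1 hDE with rfl | hDE
    · exact hX
    · exact ih hDE hX.1

theorem ChainTorsion.mem (hX : ChainTorsion 𝒜 D X) : 𝒜 X := hX.of_suffix D.nil_suffix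

theorem ChainTorsion.eq_zero_of_suffix (hX : ChainTorsion 𝒜 D X) (hZ : Z :: E <:+ D)
    (f : X →ₗ[R] Z) : f = 0 :=
  (hX.of_suffix hZ).2 f

theorem ChainFree.of_suffix (hDE : E <:+ D) (hX : ChainFree 𝒜 E X) : ChainFree 𝒜 D X :=
  ⟨hX.1, fun Y _ _ hY => hX.2 Y (hY.of_suffix hDE)⟩

theorem ChainFree.subsingleton (hX : ChainFree 𝒜 D X) (hX' : ChainTorsion 𝒜 D X) :
    Subsingleton X :=
  subsingleton_of_forall_eq 0 fun x => LinearMap.congr_fun (hX.2 X hX' LinearMap.id) x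

theorem ChainFree.sub (h𝒜 : IsSerreClass 𝒜) (hB : ChainFree 𝒜 D B) (i : A →ₗ[R] B)
    (hi : Function.Injective i) : ChainFree 𝒜 D A :=
  ⟨h𝒜.sub i hi hB.1, fun Y _ _ hY f => by
    rw [← LinearMap.cancel_left hi, hB.2 Y hY (i ∘ₗ f), LinearMap.comp_zero]⟩

theorem ChainFree.equiv (h𝒜 : IsSerreClass 𝒜) (hA : ChainFree 𝒜 D A) (e : A ≃ₗ[R] B) :
    ChainFree 𝒜 D B :=
  hA.sub h𝒜 e.symm.toLinearMap e.symm.injective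

theorem ChainFree.extension (h𝒜 : IsSerreClass 𝒜) (i : A →ₗ[R] B) (p : B →ₗ[R] C)
    (hi : Function.Injective i) (hip : Function.Exact i p) (hA : ChainFree 𝒜 D A)
    (hC : ChainFree 𝒜 D C) : ChainFree 𝒜 D B := by
  refine ⟨h𝒜.middle i p hip hA.1 hC.1, fun Y _ _ hY f => ?_⟩
  obtain ⟨g, hg⟩ := exists_factor_of_injective hi f
    fun y => (hip _).1 (LinearMap.congr_fun (hC.2 Y hY (p ∘ₗ f)) y)
  ext y
  rw [← hg, hA.2 Y hY g, LinearMap.zero_apply, map_zero, LinearMap.zero_apply]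

theorem ChainFree.prod (h𝒜 : IsSerreClass 𝒜) (hA : ChainFree 𝒜 D A) (hB : ChainFree 𝒜 D B) :
    ChainFree 𝒜 D (A × B) :=
  .extension h𝒜 (LinearMap.inl R A B) (LinearMap.snd R A B) LinearMap.inl_injective
    exact_inl_snd hA hB

theorem IsSerreClass.chainFree_of_subsingleton (h𝒜 : IsSerreClass 𝒜) [Subsingleton A] :
    ChainFree 𝒜 D A :=
  ⟨h𝒜.isTorsionClass.of_subsingleton, fun _ _ _ _ _ => Subsingleton.elim _ _⟩

theorem ChainFree.pi (h𝒜 : IsSerreClass 𝒜) (hA : ChainFree 𝒜 D A) :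
    ∀ m : ℕ, ChainFree 𝒜 D (Fin m → A)
  | 0 => h𝒜.chainFree_of_subsingleton
  | m + 1 => (hA.prod h𝒜 (hA.pi h𝒜 m)).equiv h𝒜 (powSuccEquiv R A m)

theorem IsSplittingChain.of_suffix (hDE : E <:+ D) (hD : IsSplittingChain 𝒜 D) :
    IsSplittingChain 𝒜 E := by
  induction hD with
  | nil => rw [List.suffix_nil.1 hDE]; exact .nil
  | cons hZ hD ih =>
    rcases List.suffix_cons_iff.1 hDE with rfl | hDE
    · exact .cons hZ hD
    · exact ih hDE

theorem IsSplittingChain.isSplittingObject (hD : IsSplittingChain 𝒜 D) (hZ : Z :: E <:+ D) :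
    IsSplittingObject (ChainTorsion 𝒜 E) Z := by
  cases hD.of_suffix hZ with
  | cons hZ _ => exact hZ

theorem IsSplittingChain.chainFree (hD : IsSplittingChain 𝒜 D) (hZ : Z :: E <:+ D) :
    ChainFree 𝒜 D Z :=
  ⟨(hD.isSplittingObject hZ).mem.mem, fun _ _ _ hY f => hY.eq_zero_of_suffix hZ f⟩

theorem IsSplittingChain.exists_hasSection (hD : IsSplittingChain 𝒜 D) (hX : 𝒜 X)
    (hXD : ¬ ChainTorsion 𝒜 D X) :
    ∃ (Z : ModCat R) (E : List (ModCat R)), Z :: E <:+ D ∧ ChainTorsion 𝒜 E X ∧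
      ∃ f : X →ₗ[R] Z, HasSection f := by
  induction hD with
  | nil => exact absurd hX hXD
  | @cons Z D hZ _ ih =>
    by_cases hXE : ChainTorsion 𝒜 D X
    · obtain ⟨f, hf⟩ : ∃ f : X →ₗ[R] Z, f ≠ 0 := by
        by_contra! h
        exact hXD ⟨hXE, h⟩
      exact ⟨Z, D, List.suffix_rfl, hXE, f, hZ.hasSection X hXE f hf⟩
    · obtain ⟨Z', E, hE, h⟩ := ih hXE
      exact ⟨Z', E, hE.trans (List.suffix_cons Z D), h⟩

section Artinian

variable [IsArtinianRing R]

theorem length_ker_lt_of_surjective [Module.Finite R X] [Nontrivial Y] {f : X →ₗ[R] Y}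
    (hf : Function.Surjective f) : Module.length R (LinearMap.ker f) < Module.length R X := by
  refine Submodule.length_lt fun h => ?_
  obtain ⟨y, hy⟩ := exists_ne (0 : Y)
  obtain ⟨x, rfl⟩ := hf y
  exact hy (LinearMap.mem_ker.1 (h ▸ Submodule.mem_top))

theorem IsSplittingObject.exists_equiv_prod (hZ : IsSplittingObject 𝒯 Z) (h𝒯 : IsTorsionClass 𝒯)
    (hX : 𝒯 X) :
    ∃ (a : ℕ) (X' : ModCat R), homVanishing 𝒯 Z X' ∧ Nonempty (X ≃ₗ[R] (Fin a → Z) × X') := by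
  induction hn : Module.length R X using WellFoundedLT.induction generalizing X with
  | _ n ih =>
    have := h𝒯.finite hX
    have := hZ.nontrivial
    by_cases hf : ∀ f : X →ₗ[R] Z, f = 0
    · exact ⟨0, .of R X, ⟨hX, hf⟩, ⟨LinearEquiv.uniqueProd.symm⟩⟩
    push Not at hf
    obtain ⟨f, hf⟩ := hf
    have hs := hZ.hasSection X hX f hf
    obtain ⟨e⟩ := hs.nonempty_equiv_prod_ker
    obtain ⟨a, X', hX', ⟨e'⟩⟩ := ih _ (hn ▸ length_ker_lt_of_surjective hs.surjective)
      (h𝒯.of_hasSection hs hX) rfl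
    exact ⟨a + 1, X', hX', ⟨e.trans (((LinearEquiv.refl R Z).prodCongr e').trans
      ((LinearEquiv.prodAssoc R _ _ _).symm.trans
        ((powSuccEquiv R Z a).prodCongr (LinearEquiv.refl R _))))⟩⟩

theorem IsSplittingChain.exists_equiv_prod (h𝒜 : IsSerreClass 𝒜) (hD : IsSplittingChain 𝒜 D)
    (hX : 𝒜 X) :
    ∃ F X' : ModCat R, ChainFree 𝒜 D F ∧ ChainTorsion 𝒜 D X' ∧ Nonempty (X ≃ₗ[R] F × X') := by
  induction hD with
  | nil => exact ⟨.of R PUnit, .of R X, h𝒜.chainFree_of_subsingleton, hX,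
      ⟨LinearEquiv.uniqueProd.symm⟩⟩
  | @cons Z D hZ hD ih =>
    obtain ⟨F, X', hF, hX', ⟨e⟩⟩ := ih
    obtain ⟨a, X'', hX'', ⟨e'⟩⟩ :=
      hZ.exists_equiv_prod (h𝒜.isTorsionClass_chainTorsion D) hX'
    have hZfree := (IsSplittingChain.cons hZ hD).chainFree List.suffix_rfl
    exact ⟨.of R (F × (Fin a → Z)), X'',
      (hF.of_suffix (List.suffix_cons Z D)).prod h𝒜 (hZfree.pi h𝒜 a), hX'',
      ⟨e.trans (((LinearEquiv.refl R F).prodCongr e').trans (LinearEquiv.prodAssoc R _ _ _).symm)⟩⟩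

theorem IsSplittingChain.chainFree_induction (h𝒜 : IsSerreClass 𝒜) (hD : IsSplittingChain 𝒜 D)
    (P : ModuleClass R)
    (zero : ∀ (X : Type) [AddCommGroup X] [Module R X], Subsingleton X → P X)
    (prod : ∀ (X F : Type) [AddCommGroup X] [Module R X] [AddCommGroup F] [Module R F]
      (Z : ModCat R) (E : List (ModCat R)), Z :: E <:+ D → ChainFree 𝒜 D X → P F →
      (X ≃ₗ[R] Z × F) → P X)
    (hX : ChainFree 𝒜 D X) : P X := by
  induction hn : Module.length R X using WellFoundedLT.induction generalizing X with
  | _ n ih =>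
    by_cases hXt : ChainTorsion 𝒜 D X
    · exact zero X (hX.subsingleton hXt)
    obtain ⟨Z, E, hZ, -, f, hf⟩ := hD.exists_hasSection hX.1 hXt
    obtain ⟨e⟩ := hf.nonempty_equiv_prod_ker
    have := h𝒜.finite hX.1
    have := (hD.isSplittingObject hZ).nontrivial
    exact prod X _ Z E hZ hX
      (ih _ (hn ▸ length_ker_lt_of_surjective hf.surjective)
        (hX.sub h𝒜 _ (Submodule.subtype_injective _)) rfl) e

end Artinian

theorem IsSplittingChain.exists_extension_chainFree (h𝒜 : IsSerreClass 𝒜)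
    (hD : IsSplittingChain 𝒜 D) (hZ : 𝒜 Z)
    (hs : ∀ (X : Type) [AddCommGroup X] [Module R X], ChainTorsion 𝒜 D X → ∀ f : X →ₗ[R] Z,
      f ≠ 0 → HasSection f) :
    ∃ D', D <:+ D' ∧ IsSplittingChain 𝒜 D' ∧ ChainFree 𝒜 D' Z := by
  by_cases hfree : ChainFree 𝒜 D Z
  · exact ⟨D, List.suffix_rfl, hD, hfree⟩
  obtain ⟨Y, _, _, hY, f, hf⟩ : ∃ (Y : Type) (_ : AddCommGroup Y) (_ : Module R Y),
      ChainTorsion 𝒜 D Y ∧ ∃ f : Y →ₗ[R] Z, f ≠ 0 := by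
    by_contra! h
    exact hfree ⟨hZ, fun Y _ _ hY f => h Y _ _ hY f⟩
  have hZt : ChainTorsion 𝒜 D Z :=
    (h𝒜.isTorsionClass_chainTorsion D).quotient f (hs Y hY f hf).surjective hY
  have hZn : Nontrivial Z := by
    by_contra h
    have := not_nontrivial_iff_subsingleton.1 h
    exact hf (Subsingleton.elim _ _)
  have hD' := hD.cons ⟨hZt, hZn, hs⟩
  exact ⟨Z :: D, List.suffix_cons Z D, hD', hD'.chainFree List.suffix_rfl⟩

theorem IsSplittingChain.exists_merge (h𝒜 : IsSerreClass 𝒜) (hD : IsSplittingChain 𝒜 D)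
    (hE : IsSplittingChain 𝒜 E) :
    ∃ D', D <:+ D' ∧ IsSplittingChain 𝒜 D' ∧
      ∀ (X : Type) [AddCommGroup X] [Module R X], ChainTorsion 𝒜 D' X → ChainTorsion 𝒜 E X := by
  induction hE with
  | nil => exact ⟨D, List.suffix_rfl, hD, fun _ _ _ hX => hX.mem⟩
  | @cons Z E hZ _ ih =>
    obtain ⟨D₁, hDD₁, hD₁, htors⟩ := ih
    obtain ⟨D₂, hD₁₂, hD₂, hZfree⟩ := hD₁.exists_extension_chainFree h𝒜 hZ.mem.mem
      fun X _ _ hX => hZ.hasSection X (htors X hX)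
    exact ⟨D₂, hDD₁.trans hD₁₂, hD₂,
      fun X _ _ hX => ⟨htors X (hX.of_suffix hD₁₂), fun f => hZfree.2 X hX f⟩⟩

end SplittingChains

/-! ### `Ext`-progenerators -/

section SummandsOfPowers

/-- `X` is a direct summand of a finite power of `T`; the unbundled form of `MemAddMod`. -/
def IsSummandOfPower (R : Type) [Ring R] (X T : Type) [AddCommGroup X] [Module R X]
    [AddCommGroup T] [Module R T] : Prop :=
  ∃ m : ℕ, IsRetract R X (Fin m → T)

variable {A B C M T X Y : Type} [AddCommGroup A] [Module R A] [AddCommGroup B] [Module R B]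
  [AddCommGroup C] [Module R C] [AddCommGroup X] [Module R X] [AddCommGroup Y] [Module R Y]
  [AddCommGroup M] [Module R M] [AddCommGroup T] [Module R T]

theorem IsRetract.trans_isSummandOfPower (hXY : IsRetract R X Y) (hY : IsSummandOfPower R Y T) :
    IsSummandOfPower R X T :=
  hY.imp fun _ h => hXY.trans h

theorem IsRetract.isSummandOfPower (h : IsRetract R X T) : IsSummandOfPower R X T :=
  h.trans_isSummandOfPower ⟨1, .of_equiv (LinearEquiv.funUnique (Fin 1) R T)⟩

theorem IsSummandOfPower.prod (hX : IsSummandOfPower R X T) (hY : IsSummandOfPower R Y T) :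
    IsSummandOfPower R (X × Y) T := by
  obtain ⟨m, f, s, hs⟩ := hX
  obtain ⟨n, g, t, ht⟩ := hY
  have hfg : IsRetract R (X × Y) ((Fin m → T) × (Fin n → T)) :=
    ⟨f.prodMap g, s.prodMap t, fun x => Prod.ext (hs x.1) (ht x.2)⟩
  exact ⟨m + n, hfg.trans (.of_equiv ((LinearEquiv.funCongrLeft R T finSumFinEquiv).trans
    (LinearEquiv.sumArrowLequivProdArrow (Fin m) (Fin n) R T)))⟩

theorem IsSummandOfPower.pi (hX : IsSummandOfPower R X T) :
    ∀ m : ℕ, IsSummandOfPower R (Fin m → X) T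
  | 0 => ⟨0, 0, 0, fun _ => Subsingleton.elim _ _⟩
  | m + 1 => IsRetract.trans_isSummandOfPower (.of_equiv (powSuccEquiv R X m)) (hX.prod (hX.pi m))

theorem ExtVanishes.of_isSummandOfPower_left (hT : ExtVanishes R T Y)
    (hX : IsSummandOfPower R X T) : ExtVanishes R X Y := by
  obtain ⟨m, hX⟩ := hX
  exact (hT.pi_left m).of_retract_left hX

theorem IsTorsionClass.of_isSummandOfPower {𝒯 : ModuleClass R} (h𝒯 : IsTorsionClass 𝒯)
    (hX : IsSummandOfPower R X T) (hT : 𝒯 T) : 𝒯 X := by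
  obtain ⟨m, f, hf⟩ := hX
  exact h𝒯.quotient f hf.surjective (h𝒯.pi hT m)

theorem ExtendsAlong.pi_target {φ : A →ₗ[R] B} (h : ExtendsAlong φ C) (m : ℕ) :
    ExtendsAlong φ (Fin m → C) := by
  intro g
  choose k hk using fun j => h (LinearMap.proj j ∘ₗ g)
  exact ⟨LinearMap.pi k, fun x => funext fun j => hk j x⟩

theorem ExtendsAlong.compLeft {φ : A →ₗ[R] B} (h : ExtendsAlong φ C) (m : ℕ) :
    ExtendsAlong (φ.compLeft (Fin m)) C := by
  intro g
  choose k hk using fun j => h (g ∘ₗ LinearMap.single R (fun _ => A) j)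
  refine ⟨LinearMap.lsum R (fun _ => B) ℕ k, fun x => ?_⟩
  calc LinearMap.lsum R (fun _ => B) ℕ k (φ.compLeft (Fin m) x)
      = ∑ j, k j (φ (x j)) := by simp
    _ = ∑ j, g (Pi.single j (x j)) := Finset.sum_congr rfl fun j _ => hk j (x j)
    _ = g x := by rw [← map_sum, Finset.univ_sum_single]

theorem exact_compLeft {f : A →ₗ[R] B} {g : B →ₗ[R] C} (hfg : Function.Exact f g) (m : ℕ) :
    Function.Exact (f.compLeft (Fin m)) (g.compLeft (Fin m)) := by
  intro y
  constructor
  · intro hy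
    choose x hx using fun j => (hfg (y j)).1 (congrFun hy j)
    exact ⟨x, funext hx⟩
  · rintro ⟨x, rfl⟩
    exact funext fun j => hfg.apply_apply_eq_zero (x j)

/-- The product of a power of `A × B` as the product of the powers. -/
def powProdEquiv (R A B : Type) [Ring R] [AddCommGroup A] [Module R A] [AddCommGroup B]
    [Module R B] (m : ℕ) : (Fin m → A × B) ≃ₗ[R] (Fin m → A) × (Fin m → B) :=
  { (LinearMap.compLeft (LinearMap.fst R A B) (Fin m)).prod
      (LinearMap.compLeft (LinearMap.snd R A B) (Fin m)) with
    invFun := fun x j => (x.1 j, x.2 j)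
    left_inv := fun _ => rfl
    right_inv := fun _ => rfl }

/-- An iterated power `(A^n)^m` as a single power. -/
def powPowEquiv (R A : Type) [Ring R] [AddCommGroup A] [Module R A] (m n : ℕ) :
    (Fin m → Fin n → A) ≃ₗ[R] (Fin (m * n) → A) :=
  (LinearEquiv.curry R A (Fin m) (Fin n)).symm.trans
    (LinearEquiv.funCongrLeft R A finProdFinEquiv.symm)

end SummandsOfPowers

section Resolutions

/-- `Y` is the quotient of `M` by a submodule in `𝒯`. -/
def IsResolvedBy (𝒯 : ModuleClass R) (M Y : Type) [AddCommGroup M] [Module R M]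
    [AddCommGroup Y] [Module R Y] : Prop :=
  ∃ π : M →ₗ[R] Y, Function.Surjective π ∧ 𝒯 (LinearMap.ker π)

variable {𝒯 : ModuleClass R} {Z : ModCat R}
variable {A B C M N T W Y : Type} [AddCommGroup A] [Module R A] [AddCommGroup B] [Module R B]
  [AddCommGroup C] [Module R C] [AddCommGroup Y] [Module R Y] [AddCommGroup M] [Module R M]
  [AddCommGroup N] [Module R N] [AddCommGroup T] [Module R T] [AddCommGroup W] [Module R W]

theorem IsTorsionClass.isResolvedBy_of_exact (h𝒯 : IsTorsionClass 𝒯) {j : W →ₗ[R] M}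
    {π : M →ₗ[R] Y} (hπ : Function.Surjective π) (hjπ : Function.Exact j π) (hW : 𝒯 W) :
    IsResolvedBy 𝒯 M Y := by
  refine ⟨π, hπ, ?_⟩
  rw [LinearMap.exact_iff.1 hjπ]
  exact h𝒯.quotient j.rangeRestrict j.surjective_rangeRestrict hW

theorem IsResolvedBy.comp_surjective (h𝒯 : IsTorsionClass 𝒯) (h : IsResolvedBy 𝒯 M Y)
    {f : N →ₗ[R] M} (hf : Function.Surjective f) (hker : 𝒯 (LinearMap.ker f)) :
    IsResolvedBy 𝒯 N Y := by
  obtain ⟨π, hπ, hπker⟩ := h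
  let p : LinearMap.ker (π ∘ₗ f) →ₗ[R] LinearMap.ker π := f.restrict fun _ hx => hx
  refine ⟨π ∘ₗ f, hπ.comp hf,
    h𝒯.extension (Submodule.inclusion (LinearMap.ker_le_ker_comp f π)) p ?_ ?_ hker hπker⟩
  · intro x
    constructor
    · intro hx
      exact ⟨⟨x, congrArg Subtype.val hx⟩, rfl⟩
    · rintro ⟨y, rfl⟩
      exact Subtype.ext y.2
  · intro y
    obtain ⟨x, hx⟩ := hf y
    exact ⟨⟨x, by rw [LinearMap.mem_ker, LinearMap.comp_apply, hx, y.2]⟩, Subtype.ext hx⟩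

theorem IsResolvedBy.of_isRetract (h𝒯 : IsTorsionClass 𝒯) (h : IsResolvedBy 𝒯 M Y)
    (hMN : IsRetract R M N) (hN : 𝒯 N) : IsResolvedBy 𝒯 N Y := by
  obtain ⟨f, hf⟩ := hMN
  exact h.comp_surjective h𝒯 hf.surjective (h𝒯.of_hasSection hf hN)

theorem IsResolvedBy.equiv (h𝒯 : IsTorsionClass 𝒯) (h : IsResolvedBy 𝒯 M Y) (e : M ≃ₗ[R] N) :
    IsResolvedBy 𝒯 N Y := by
  refine h.comp_surjective h𝒯 (f := e.symm.toLinearMap) e.symm.surjective ?_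
  rw [LinearEquiv.ker]
  exact h𝒯.of_subsingleton

theorem IsResolvedBy.of_isSummandOfPower (h𝒯 : IsTorsionClass 𝒯) (h : IsResolvedBy 𝒯 M Y)
    (hM : IsSummandOfPower R M T) (hT : 𝒯 T) : ∃ m, IsResolvedBy 𝒯 (Fin m → T) Y := by
  obtain ⟨m, hM⟩ := hM
  exact ⟨m, h.of_isRetract h𝒯 hM (h𝒯.pi hT m)⟩

/-- The kernel of the resolution splits off `Z`, since otherwise the projection to `Z` would
factor through `Y`. -/
theorem IsSplittingObject.cancel_resolution (hZ : IsSplittingObject 𝒯 Z)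
    (h𝒯 : IsTorsionClass 𝒯) (hY : ∀ f : Y →ₗ[R] Z, f = 0) (h : IsResolvedBy 𝒯 (Z × M) Y) :
    IsResolvedBy 𝒯 M Y := by
  obtain ⟨π, hπ, hker⟩ := h
  have := hZ.nontrivial
  let q : LinearMap.ker π →ₗ[R] Z := LinearMap.fst R Z M ∘ₗ (LinearMap.ker π).subtype
  have hq : q ≠ 0 := fun hq => by
    obtain ⟨g, hg⟩ := exists_factor_of_surjective hπ (LinearMap.fst R Z M)
      fun x hx => LinearMap.congr_fun hq ⟨x, hx⟩
    obtain ⟨z, hz⟩ := exists_ne (0 : Z)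
    have hgz : g (π (z, 0)) = z := hg (z, 0)
    exact hz (by rw [← hgz, hY g, LinearMap.zero_apply])
  obtain ⟨s, hs⟩ := hZ.hasSection _ hker q hq
  let r : Z × M →ₗ[R] M := LinearMap.snd R Z M -
    LinearMap.snd R Z M ∘ₗ (LinearMap.ker π).subtype ∘ₗ s ∘ₗ LinearMap.fst R Z M
  have hr : ∀ x, π (0, r x) = π x := fun x => by
    have hx : ((0 : Z), r x) = x - (s x.1).1 :=
      Prod.ext (by rw [Prod.fst_sub, eq_comm, sub_eq_zero]; exact (hs x.1).symm) rfl
    rw [hx, map_sub, LinearMap.mem_ker.1 (s x.1).2, sub_zero]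
  refine h𝒯.isResolvedBy_of_exact (j := r ∘ₗ (LinearMap.ker π).subtype)
    (π := π ∘ₗ LinearMap.inr R Z M) ?_ (fun m => ⟨fun hm => ?_, ?_⟩) hker
  · intro y
    obtain ⟨x, rfl⟩ := hπ y
    exact ⟨r x, hr x⟩
  · exact ⟨⟨(0, m), hm⟩, by simp [r]⟩
  · rintro ⟨x, rfl⟩
    exact (hr x).trans x.2

theorem IsSplittingObject.cancel_pow_resolution (hZ : IsSplittingObject 𝒯 Z)
    (h𝒯 : IsTorsionClass 𝒯) (hY : ∀ f : Y →ₗ[R] Z, f = 0) :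
    ∀ a : ℕ, IsResolvedBy 𝒯 ((Fin a → Z) × M) Y → IsResolvedBy 𝒯 M Y
  | 0, h => h.equiv h𝒯 LinearEquiv.uniqueProd
  | a + 1, h => hZ.cancel_pow_resolution h𝒯 hY a <| hZ.cancel_resolution h𝒯 hY <|
      h.equiv h𝒯 (((powSuccEquiv R Z a).symm.prodCongr (LinearEquiv.refl R M)).trans
        (LinearEquiv.prodAssoc R _ _ _))

theorem IsSplittingObject.extVanishes (hZ : IsSplittingObject 𝒯 Z) (h𝒯 : IsTorsionClass 𝒯)
    (hY : 𝒯 Y) : ExtVanishes R Z Y :=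
  extVanishes_of_forall_hasSection fun E _ _ i p _ hp hip =>
    have := hZ.nontrivial
    hZ.hasSection E (h𝒯.extension i p hip hp hY hZ.mem) p fun h =>
      not_subsingleton Z ⟨hp.forall₂.2 fun x y => by rw [h]; rfl⟩

/-- `Ext¹` of the cokernel of an approximation `φ : A → B` into `Y`: a map `A → Y` lifts along a
resolution `M → Y`, extends from `A` to `B` there, and is pushed back to `Y`. -/
theorem extVanishes_of_approximation {φ : A →ₗ[R] B} {q : B →ₗ[R] C} {π : M →ₗ[R] Y}
    (hφq : Function.Exact φ q) (hq : Function.Surjective q) (hπ : Function.Surjective π)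
    (hB : ExtVanishes R B Y) (hA : ExtVanishes R A (LinearMap.ker π)) (hφ : ExtendsAlong φ M) :
    ExtVanishes R C Y := by
  have hexact : Function.Exact (LinearMap.ker q).subtype q := q.exact_subtype_ker_map
  refine extVanishes_of_extendsAlong (A := LinearMap.ker q) (LinearMap.ker q).subtype_injective
    hq hexact hB fun g => ?_
  let φ' : A →ₗ[R] LinearMap.ker q := φ.codRestrict _ hφq.apply_apply_eq_zero
  have hφ' : Function.Surjective φ' := fun x => by
    obtain ⟨a, ha⟩ := (hφq x).1 x.2
    exact ⟨a, Subtype.ext ha⟩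
  obtain ⟨u, hu⟩ := hA.exists_lift (N := LinearMap.ker π) (LinearMap.ker π).subtype_injective hπ
    π.exact_subtype_ker_map (g ∘ₗ φ')
  obtain ⟨k, hk⟩ := hφ u
  refine ⟨π ∘ₗ k, hφ'.forall.2 fun a => ?_⟩
  calc π (k (φ a)) = π (u a) := by rw [hk]
    _ = g (φ' a) := hu a

/-- Pushing the summand `A` of the relations of `Y` out along `φ : A → B`. -/
theorem exists_exact_of_approximation {φ : A →ₗ[R] B} {q : B →ₗ[R] C} {κ : A × W →ₗ[R] M}
    {π : M →ₗ[R] Y} {ψ : B →ₗ[R] M} (hφq : Function.Exact φ q) (hq : Function.Surjective q)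
    (hκπ : Function.Exact κ π) (hψ : ∀ a, ψ (φ a) = κ (a, 0)) :
    ∃ ρ : C →ₗ[R] Y, Function.Exact
      ((ψ.coprod (κ ∘ₗ LinearMap.inr R A W)).prod (q ∘ₗ LinearMap.fst R B W))
      (π.coprod (-ρ)) := by
  obtain ⟨ρ, hρ⟩ := exists_factor_of_surjective hq (π ∘ₗ ψ) fun b hb => by
    obtain ⟨a, rfl⟩ := (hφq b).1 hb
    rw [LinearMap.comp_apply, hψ, hκπ.apply_apply_eq_zero]
  refine ⟨ρ, fun ⟨m, c⟩ => ⟨fun hmc => ?_, ?_⟩⟩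
  · obtain ⟨b, rfl⟩ := hq c
    have hmb : π (m - ψ b) = 0 := by
      have hρb := hρ b
      rw [LinearMap.coprod_apply, LinearMap.neg_apply, hρb] at hmc
      rw [map_sub, sub_eq_add_neg]
      exact hmc
    obtain ⟨⟨a, w⟩, haw⟩ := (hκπ _).1 hmb
    have hκ : ψ (φ a) + κ (0, w) = m - ψ b := by
      rw [hψ, ← haw, ← map_add, Prod.mk_add_mk, add_zero, zero_add]
    refine ⟨(b + φ a, w), Prod.ext ?_ ?_⟩
    · change ψ (b + φ a) + κ (0, w) = m
      rw [map_add, add_assoc, hκ, add_sub_cancel]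
    · change q (b + φ a) = q b
      rw [map_add, hφq.apply_apply_eq_zero, add_zero]
  · rintro ⟨⟨b, w⟩, hbw⟩
    obtain ⟨rfl, rfl⟩ := Prod.ext_iff.1 hbw
    change π (ψ b + κ (0, w)) + -ρ (q b) = 0
    rw [map_add, hκπ.apply_apply_eq_zero, add_zero, hρ b, LinearMap.comp_apply, add_neg_cancel]

end Resolutions

section ExtProgenerators

/-- Every map between finitely generated modules factors through one left approximation of the
source by a power of the target. -/
def HasLeftApproximations (R : Type) [Ring R] : Prop :=
  ∀ (M N : Type) [AddCommGroup M] [Module R M] [AddCommGroup N] [Module R N]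
    [Module.Finite R M] [Module.Finite R N],
    ∃ (m : ℕ) (φ : M →ₗ[R] (Fin m → N)), ExtendsAlong φ N

/-- `G` is a member of `𝒜` that generates `𝒜` and is projective relative to surjections in
`𝒜`. -/
structure IsProgenerator (𝒜 : ModuleClass R) (G : Type) [AddCommGroup G] [Module R G] : Prop where
  mem : 𝒜 G
  exists_surjective : ∀ (X : Type) [AddCommGroup X] [Module R X], 𝒜 X →
    ∃ (m : ℕ) (f : (Fin m → G) →ₗ[R] X), Function.Surjective f
  hasSection : ∀ {X : Type} [AddCommGroup X] [Module R X] (f : X →ₗ[R] G), 𝒜 X →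
    Function.Surjective f → HasSection f

/-- `T` is an `Ext`-progenerator of `𝒯`: an `Ext`-projective member of which every member of `𝒯`
is the cokernel of a map from a module in `𝒯` to a power of `T`. -/
structure IsExtProgenerator (𝒯 : ModuleClass R) (T : Type) [AddCommGroup T] [Module R T] :
    Prop where
  mem : 𝒯 T
  extVanishes : ∀ (Y : Type) [AddCommGroup Y] [Module R Y], 𝒯 Y → ExtVanishes R T Y
  exists_isResolvedBy : ∀ (Y : Type) [AddCommGroup Y] [Module R Y], 𝒯 Y →
    ∃ m : ℕ, IsResolvedBy 𝒯 (Fin m → T) Y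

variable {𝒯 𝒜 : ModuleClass R} {D : List (ModCat R)} {Z : ModCat R}
variable {G T T' X Y : Type} [AddCommGroup G] [Module R G] [AddCommGroup T] [Module R T]
  [AddCommGroup T'] [Module R T'] [AddCommGroup X] [Module R X] [AddCommGroup Y] [Module R Y]

theorem IsProgenerator.isExtProgenerator (hG : IsProgenerator 𝒜 G) (h𝒜 : IsSerreClass 𝒜) :
    IsExtProgenerator 𝒜 G where
  mem := hG.mem
  extVanishes Y _ _ hY := extVanishes_of_forall_hasSection fun E _ _ i p _ hp hip =>
    hG.hasSection p (h𝒜.middle i p hip hY hG.mem) hp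
  exists_isResolvedBy Y _ _ hY := by
    obtain ⟨m, f, hf⟩ := hG.exists_surjective Y hY
    exact ⟨m, f, hf, h𝒜.submodule (h𝒜.isTorsionClass.pi hG.mem m) _⟩

theorem IsExtProgenerator.isSummandOfPower (hT : IsExtProgenerator 𝒯 T) (hX : 𝒯 X)
    (h : ∀ (Y : Type) [AddCommGroup Y] [Module R Y], 𝒯 Y → ExtVanishes R X Y) :
    IsSummandOfPower R X T := by
  obtain ⟨m, π, hπ, hker⟩ := hT.exists_isResolvedBy X hX
  exact ⟨m, π, (h _ hker).exists_lift (N := LinearMap.ker π) (LinearMap.ker π).subtype_injective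
    hπ π.exact_subtype_ker_map LinearMap.id⟩

theorem IsExtProgenerator.of_isSummandOfPower (h𝒯 : IsTorsionClass 𝒯)
    (hT : IsExtProgenerator 𝒯 T) (hT' : IsSummandOfPower R T' T)
    (hTT' : IsSummandOfPower R T T') : IsExtProgenerator 𝒯 T' where
  mem := h𝒯.of_isSummandOfPower hT' hT.mem
  extVanishes Y _ _ hY := (hT.extVanishes Y hY).of_isSummandOfPower_left hT'
  exists_isResolvedBy Y _ _ hY := by
    obtain ⟨m, hm⟩ := hT.exists_isResolvedBy Y hY
    exact hm.of_isSummandOfPower h𝒯 (hTT'.pi m) (h𝒯.of_isSummandOfPower hT' hT.mem)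

theorem IsExtProgenerator.isResolvedBy_of_homVanishing (hT : IsExtProgenerator 𝒯 T)
    (h𝒯 : IsTorsionClass 𝒯) (hZ : IsSplittingObject 𝒯 Z) {a : ℕ}
    (e : T ≃ₗ[R] (Fin a → Z) × T') (hY : homVanishing 𝒯 Z Y) :
    ∃ m : ℕ, IsResolvedBy 𝒯 (Fin m → T') Y := by
  obtain ⟨m, hm⟩ := hT.exists_isResolvedBy Y hY.1
  exact ⟨m, hZ.cancel_pow_resolution h𝒯 hY.2 (m * a) <| hm.equiv h𝒯 <|
    (LinearEquiv.piCongrRight fun _ => e).trans <| (powProdEquiv R _ _ m).trans <|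
      (powPowEquiv R Z m a).prodCongr (LinearEquiv.refl R _)⟩

/-- The progenerator `T = Z^a × T'` is replaced by `T' × C`, where `C` is the cokernel of a left
approximation `Z → T'^s`. -/
theorem IsExtProgenerator.exists_homVanishing [IsArtinianRing R] (hR : HasLeftApproximations R)
    (h𝒯 : IsTorsionClass 𝒯) (hZ : IsSplittingObject 𝒯 Z) (hT : IsExtProgenerator 𝒯 T) :
    ∃ T₁ : ModCat R, IsExtProgenerator (homVanishing 𝒯 Z) T₁ := by
  have h𝒯Z := h𝒯.homVanishing Z
  obtain ⟨a, T', hT', ⟨e⟩⟩ := hZ.exists_equiv_prod h𝒯 hT.mem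
  have := h𝒯.finite hZ.mem
  have := h𝒯.finite hT'.1
  obtain ⟨s, φ, hφ⟩ := hR Z T'
  let C := (Fin s → T') ⧸ LinearMap.range φ
  let q : (Fin s → T') →ₗ[R] C := (LinearMap.range φ).mkQ
  have hq : Function.Surjective q := (LinearMap.range φ).mkQ_surjective
  have hφq : Function.Exact φ q := LinearMap.exact_map_mkQ_range φ
  have hC : homVanishing 𝒯 Z C := h𝒯Z.quotientModule (h𝒯Z.pi hT' s) _
  have hT'T : IsRetract R T' T :=
    ⟨LinearMap.snd R _ _ ∘ₗ e.toLinearMap, e.symm.toLinearMap ∘ₗ LinearMap.inr R _ _, by simp⟩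
  have hT'ext : ∀ (Y : Type) [AddCommGroup Y] [Module R Y], 𝒯 Y → ExtVanishes R T' Y :=
    fun Y _ _ hY => (hT.extVanishes Y hY).of_retract_left hT'T
  refine ⟨.of R (T' × C), h𝒯Z.prod hT' hC, fun Y _ _ hY => ?_, fun Y _ _ hY => ?_⟩
  · obtain ⟨m, π, hπ, hker⟩ := hT.isResolvedBy_of_homVanishing h𝒯 hZ e hY
    exact (hT'ext Y hY.1).prod_left (extVanishes_of_approximation hφq hq hπ
      ((hT'ext Y hY.1).pi_left s) (hZ.extVanishes h𝒯 hker) (hφ.pi_target m))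
  · obtain ⟨m, π, hπ, hker⟩ := hT.isResolvedBy_of_homVanishing h𝒯 hZ e hY
    obtain ⟨b, W, hW, ⟨e'⟩⟩ := hZ.exists_equiv_prod h𝒯 hker
    let κ : (Fin b → Z) × W →ₗ[R] (Fin m → T') := (LinearMap.ker π).subtype ∘ₗ e'.symm.toLinearMap
    have hκπ : Function.Exact κ π := LinearMap.exact_iff.2 <| by
      rw [LinearMap.range_comp_of_range_eq_top _ e'.symm.range, Submodule.range_subtype]
    obtain ⟨ψ, hψ⟩ := ((hφ.pi_target m).compLeft b) (κ ∘ₗ LinearMap.inl R _ _)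
    obtain ⟨ρ, hρ⟩ := exists_exact_of_approximation (exact_compLeft hφq b) hq.comp_left hκπ hψ
    have hres : IsResolvedBy (homVanishing 𝒯 Z) ((Fin m → T') × (Fin b → C)) Y :=
      h𝒯Z.isResolvedBy_of_exact (fun y => (hπ y).imp' (·, 0) (by simp)) hρ
        (h𝒯Z.prod (h𝒯Z.pi (h𝒯Z.pi hT' s) b) hW)
    have hT'S : IsRetract R T' (T' × C) := ⟨LinearMap.fst R _ _, LinearMap.inl R _ _, fun _ => rfl⟩
    have hCS : IsRetract R C (T' × C) := ⟨LinearMap.snd R _ _, LinearMap.inr R _ _, fun _ => rfl⟩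
    exact hres.of_isSummandOfPower h𝒯Z
      ((hT'S.isSummandOfPower.pi m).prod (hCS.isSummandOfPower.pi b)) (h𝒯Z.prod hT' hC)

theorem IsSplittingChain.exists_isExtProgenerator [IsArtinianRing R]
    (hR : HasLeftApproximations R) (h𝒜 : IsSerreClass 𝒜) (hG : IsProgenerator 𝒜 G)
    (hD : IsSplittingChain 𝒜 D) : ∃ T : ModCat R, IsExtProgenerator (ChainTorsion 𝒜 D) T := by
  induction hD with
  | nil => exact ⟨.of R G, hG.isExtProgenerator h𝒜⟩
  | @cons Z D hZ _ ih =>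
    obtain ⟨T, hT⟩ := ih
    exact hT.exists_homVanishing hR (h𝒜.isTorsionClass_chainTorsion D) hZ

end ExtProgenerators

/-! ### Support τ-tilting modules -/

section Presentations

/-- `P₁ → P₀ → M → 0` is an exact sequence whose first two terms are finitely generated
projective. -/
structure IsProjectivePresentation {P₁ P₀ M : Type} [AddCommGroup P₁] [Module R P₁]
    [AddCommGroup P₀] [Module R P₀] [AddCommGroup M] [Module R M] (f : P₁ →ₗ[R] P₀)
    (g : P₀ →ₗ[R] M) : Prop where
  projective_left : Module.Projective R P₁
  projective_right : Module.Projective R P₀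
  finite_left : Module.Finite R P₁
  finite_right : Module.Finite R P₀
  surjective : Function.Surjective g
  exact : Function.Exact f g

variable {C F M N P P₁ P₀ Q T Y : Type} [AddCommGroup C] [Module R C] [AddCommGroup F] [Module R F]
  [AddCommGroup M] [Module R M] [AddCommGroup N] [Module R N] [AddCommGroup P] [Module R P]
  [AddCommGroup P₁] [Module R P₁] [AddCommGroup P₀] [Module R P₀] [AddCommGroup Q] [Module R Q]
  [AddCommGroup T] [Module R T] [AddCommGroup Y] [Module R Y]

theorem exists_lift_of_projective [Module.Projective R P] {f : M →ₗ[R] N}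
    (hf : Function.Surjective f) (g : P →ₗ[R] N) : ∃ h : P →ₗ[R] M, ∀ x, f (h x) = g x :=
  (Module.projective_lifting_property f g hf).imp fun _ h => LinearMap.congr_fun h

theorem projective_of_isCompl [Module.Projective R Q] {S S' : Submodule R Q} (h : IsCompl S S') :
    Module.Projective R S :=
  .of_split S.subtype (Submodule.projectionOnto S S' h) <| by
    ext x
    simp

theorem projective_pi [Module.Projective R P] (m : ℕ) : Module.Projective R (Fin m → P) :=
  .of_equiv' (DirectSum.linearEquivFunOnFintype R (Fin m) fun _ => P)

theorem exists_extension_modulo {a : Q →ₗ[R] P₀} {c : P₀ →ₗ[R] C} (h : IsProjectivePresentation a c)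
    (g : Q →ₗ[R] Y) (hext : ExtVanishes R C (Y ⧸ (LinearMap.ker a).map g)) :
    ∃ k : P₀ →ₗ[R] Y, ∀ x, ∃ z, a z = 0 ∧ (g - k ∘ₗ a) x = (g - k ∘ₗ a) z := by
  have := h.projective_right
  let S := (LinearMap.ker a).map g
  let a' : Q →ₗ[R] LinearMap.ker c := a.codRestrict _ h.exact.apply_apply_eq_zero
  have ha' : Function.Surjective a' := by
    rintro ⟨z, hz⟩
    obtain ⟨x, rfl⟩ := (h.exact z).1 hz
    exact ⟨x, rfl⟩
  obtain ⟨g₁, hg₁⟩ := exists_factor_of_surjective ha' (S.mkQ ∘ₗ g) fun x hx =>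
    (Submodule.Quotient.mk_eq_zero S).2 ⟨x, congrArg Subtype.val hx, rfl⟩
  obtain ⟨k₁, hk₁⟩ := hext.extendsAlong (LinearMap.ker c).subtype_injective h.surjective
    c.exact_subtype_ker_map g₁
  obtain ⟨k, hk⟩ := exists_lift_of_projective S.mkQ_surjective k₁
  refine ⟨k, fun x => ?_⟩
  have hx : S.mkQ ((g - k ∘ₗ a) x) = 0 := by
    rw [LinearMap.sub_apply, map_sub, LinearMap.comp_apply, hk, sub_eq_zero]
    exact (hg₁ x).symm.trans (hk₁ (a' x)).symm
  obtain ⟨z, hz, hzx⟩ := (Submodule.Quotient.mk_eq_zero S).1 hx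
  have hz : a z = 0 := hz
  exact ⟨z, hz, by rw [← hzx, LinearMap.sub_apply, LinearMap.comp_apply, hz, map_zero, sub_zero]⟩

theorem exists_endomorphism_over [Module.Projective R Q] {a : Q →ₗ[R] P₀} {d : Q →ₗ[R] Y}
    (h : ∀ x, ∃ z, a z = 0 ∧ d x = d z) :
    ∃ φ : Q →ₗ[R] Q, (∀ x, a (φ x) = a x) ∧ ∀ x, d (φ x) = 0 := by
  have hsurj : Function.Surjective (a.rangeRestrict ∘ₗ (LinearMap.ker d).subtype) := by
    rintro ⟨_, x, rfl⟩
    obtain ⟨z, hz, hzx⟩ := h x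
    refine ⟨⟨x - z, by rw [LinearMap.mem_ker, map_sub, hzx, sub_self]⟩, Subtype.ext ?_⟩
    change a (x - z) = a x
    rw [map_sub, hz, sub_zero]
  obtain ⟨φ, hφ⟩ := exists_lift_of_projective hsurj a.rangeRestrict
  exact ⟨(LinearMap.ker d).subtype ∘ₗ φ, fun x => congrArg Subtype.val (hφ x), fun x => (φ x).2⟩

/-- By Fitting's lemma, a map that agrees with one factoring through `a` up to an endomorphism
over `P₀` differs from it only on a direct summand of `P₁` contained in the kernel of `a`. -/
theorem IsProjectivePresentation.extendsAlong [IsArtinianRing R] {a : P₁ →ₗ[R] P₀} {c : P₀ →ₗ[R] C}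
    (h : IsProjectivePresentation a c) (hext : ∀ S : Submodule R Y, ExtVanishes R C (Y ⧸ S))
    (hker : ∀ S S' : Submodule R P₁, IsCompl S S' → S ≤ LinearMap.ker a → ∀ u : S →ₗ[R] Y, u = 0) :
    ExtendsAlong a Y := by
  intro g
  have := h.projective_left
  have := h.finite_left
  obtain ⟨k, hk⟩ := exists_extension_modulo h g (hext _)
  obtain ⟨φ, haφ, hgφ⟩ := exists_endomorphism_over hk
  obtain ⟨n, hn⟩ := Filter.eventually_atTop.1 (LinearMap.eventually_isCompl_ker_pow_range_pow φ)
  have hcompl := hn (n + 1) n.le_succ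
  have haφn : ∀ (r : ℕ) (x : P₁), a ((φ ^ r) x) = a x := fun r => by
    induction r with
    | zero => exact fun x => rfl
    | succ r ih => exact fun x => by rw [pow_succ, Module.End.mul_apply, ih, haφ]
  refine ⟨k, fun x => ?_⟩
  obtain ⟨y, hy, _, ⟨z, rfl⟩, rfl⟩ := Submodule.mem_sup.1 (hcompl.sup_eq_top ▸ Submodule.mem_top :
    x ∈ LinearMap.ker (φ ^ (n + 1)) ⊔ LinearMap.range (φ ^ (n + 1)))
  have hle : LinearMap.ker (φ ^ (n + 1)) ≤ LinearMap.ker a := fun x hx => by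
    rw [LinearMap.mem_ker, ← haφn (n + 1), LinearMap.mem_ker.1 hx, map_zero]
  have hy : (g - k ∘ₗ a) y = 0 :=
    LinearMap.congr_fun (hker _ _ hcompl hle ((g - k ∘ₗ a).domRestrict _)) ⟨y, hy⟩
  have hz : (g - k ∘ₗ a) ((φ ^ (n + 1)) z) = 0 := by
    rw [pow_succ', Module.End.mul_apply, hgφ]
  have hyz : (g - k ∘ₗ a) (y + (φ ^ (n + 1)) z) = 0 := by rw [map_add, hy, hz, add_zero]
  exact (sub_eq_zero.1 hyz).symm

theorem exists_minimal_projective_cover [IsArtinianRing R] [Module.Finite R M] :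
    ∃ (P : ModCat R) (f : P →ₗ[R] M), Module.Projective R P ∧ Module.Finite R P ∧
      Function.Surjective f ∧
      ∀ S S' : Submodule R P, IsCompl S S' → S ≤ LinearMap.ker f → S = ⊥ := by
  let covers : Set (ModCat R) := {P | Module.Projective R P ∧ Module.Finite R P ∧
    ∃ f : P →ₗ[R] M, Function.Surjective f}
  have hcovers : covers.Nonempty := by
    obtain ⟨m, f, hf⟩ := Module.Finite.exists_fin' R M
    exact ⟨.of R (Fin m → R), inferInstanceAs (Module.Projective R (Fin m → R)),
      inferInstanceAs (Module.Finite R (Fin m → R)), f, hf⟩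
  obtain ⟨P, ⟨hP, hPfin, f, hf⟩, hmin⟩ :=
    WellFounded.has_min (InvImage.wf (fun P : ModCat R => Module.length R P) wellFounded_lt) covers
      hcovers
  refine ⟨P, f, hP, hPfin, hf, fun S S' hS hSf => ?_⟩
  have hS' : Function.Surjective (f ∘ₗ S'.subtype) := fun y => by
    obtain ⟨x, rfl⟩ := hf y
    obtain ⟨s, hs, s', hs', rfl⟩ := Submodule.mem_sup.1
      (hS.sup_eq_top ▸ Submodule.mem_top : x ∈ S ⊔ S')
    exact ⟨⟨s', hs'⟩, by simp [LinearMap.mem_ker.1 (hSf hs)]⟩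
  have hlen : ¬ Module.length R S' < Module.length R P :=
    hmin (.of R S') ⟨projective_of_isCompl hS.symm, inferInstanceAs (Module.Finite R S'), _, hS'⟩
  have htop : S' = ⊤ := by
    by_contra hne
    exact hlen (Submodule.length_lt hne)
  exact eq_bot_of_isCompl_top (htop ▸ hS)

theorem exists_minimal_projectivePresentation [IsArtinianRing R] [Module.Finite R M] :
    ∃ (P₁ P₀ : ModCat R) (f : P₁ →ₗ[R] P₀) (g : P₀ →ₗ[R] M), IsProjectivePresentation f g ∧
      ∀ S S' : Submodule R P₁, IsCompl S S' → S ≤ LinearMap.ker f → S = ⊥ := by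
  obtain ⟨n, g, hg⟩ := Module.Finite.exists_fin' R M
  obtain ⟨P, f, hP, hPfin, hf, hmin⟩ := exists_minimal_projective_cover (R := R)
    (M := LinearMap.ker g)
  refine ⟨P, .of R (Fin n → R), (LinearMap.ker g).subtype ∘ₗ f, g,
    ⟨hP, inferInstanceAs (Module.Projective R (Fin n → R)), hPfin,
      inferInstanceAs (Module.Finite R (Fin n → R)), hg, ?_⟩, fun S S' hS hSf => hmin S S' hS ?_⟩
  · rw [LinearMap.exact_iff, LinearMap.range_comp_of_range_eq_top _ (LinearMap.range_eq_top.2 hf),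
      Submodule.range_subtype]
  · rwa [LinearMap.ker_comp_of_ker_eq_bot _ (Submodule.ker_subtype _)] at hSf

theorem IsProjectivePresentation.pi {f : P₁ →ₗ[R] P₀} {g : P₀ →ₗ[R] M}
    (h : IsProjectivePresentation f g) (m : ℕ) :
    IsProjectivePresentation (f.compLeft (Fin m)) (g.compLeft (Fin m)) where
  projective_left := have := h.projective_left; projective_pi m
  projective_right := have := h.projective_right; projective_pi m
  finite_left := have := h.finite_left; inferInstance
  finite_right := have := h.finite_right; inferInstance
  surjective := h.surjective.comp_left
  exact := exact_compLeft h.exact m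

theorem IsProjectivePresentation.cokernel [Module.Projective R F] [Module.Finite R F]
    {f : P₁ →ₗ[R] P₀} {g : P₀ →ₗ[R] M} (h : IsProjectivePresentation f g) {u : F →ₗ[R] M}
    {l : F →ₗ[R] P₀} (hl : ∀ x, g (l x) = u x) :
    IsProjectivePresentation (f.coprod l) ((LinearMap.range u).mkQ ∘ₗ g) where
  projective_left := have := h.projective_left; inferInstance
  projective_right := h.projective_right
  finite_left := have := h.finite_left; inferInstance
  finite_right := h.finite_right
  surjective := (Submodule.mkQ_surjective _).comp h.surjective
  exact y := by
    rw [LinearMap.comp_apply, Submodule.mkQ_apply, Submodule.Quotient.mk_eq_zero]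
    constructor
    · rintro ⟨x, hx⟩
      obtain ⟨z, hz⟩ := (h.exact (y - l x)).1 (by rw [map_sub, hl, hx, sub_self])
      exact ⟨(z, x), by rw [LinearMap.coprod_apply, hz, sub_add_cancel]⟩
    · rintro ⟨⟨z, x⟩, rfl⟩
      exact ⟨x, by rw [LinearMap.coprod_apply, map_add, h.exact.apply_apply_eq_zero, hl, zero_add]⟩

theorem ExtendsAlong.coprod {f : P₁ →ₗ[R] P₀} {g : P₀ →ₗ[R] M} {u : F →ₗ[R] M} {l : F →ₗ[R] P₀}
    (hf : ExtendsAlong f Y) (hu : ExtendsAlong u Y) (hfg : ∀ x, g (f x) = 0)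
    (hl : ∀ x, g (l x) = u x) : ExtendsAlong (f.coprod l) Y := by
  intro h
  obtain ⟨k, hk⟩ := hf (h ∘ₗ LinearMap.inl R P₁ F)
  obtain ⟨k', hk'⟩ := hu (h ∘ₗ LinearMap.inr R P₁ F - k ∘ₗ l)
  refine ⟨k + k' ∘ₗ g, fun ⟨x, y⟩ => ?_⟩
  calc (k + k' ∘ₗ g) (f.coprod l (x, y)) = k (f x) + (k (l y) + k' (u y)) := by
        simp [hfg, hl, add_assoc]
    _ = h (x, 0) + h (0, y) := by simp [hk, hk']
    _ = h (x, y) := by rw [← map_add, Prod.mk_add_mk, add_zero, zero_add]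

theorem ExtendsAlong.of_coprod {f : P₁ →ₗ[R] P₀} {g : P₀ →ₗ[R] M} {u : F →ₗ[R] M}
    {l : F →ₗ[R] P₀} (h : ExtendsAlong (f.coprod l) Y) (hg : Function.Surjective g)
    (hfg : Function.Exact f g) (hl : ∀ x, g (l x) = u x) : ExtendsAlong u Y := by
  intro v
  obtain ⟨κ, hκ⟩ := h (v ∘ₗ LinearMap.snd R P₁ F)
  obtain ⟨k, hk⟩ := exists_factor_of_surjective hg κ fun x hx => by
    obtain ⟨z, rfl⟩ := (hfg x).1 hx
    simpa using hκ (z, 0)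
  refine ⟨k, fun x => ?_⟩
  rw [← hl, hk]
  simpa using hκ (0, x)

/-- The unbundled form of `IsTauRigidMod`. -/
def IsTauRigid (R : Type) [Ring R] (M : Type) [AddCommGroup M] [Module R M] : Prop :=
  ∃ (P₁ P₀ : ModCat R) (f : P₁ →ₗ[R] P₀) (g : P₀ →ₗ[R] M),
    IsProjectivePresentation f g ∧ ExtendsAlong f M

theorem isTauRigidMod_iff {M : ModCat R} : IsTauRigidMod M ↔ IsTauRigid R M := by
  constructor
  · rintro ⟨P₁, P₀, f, g, hP₁, hP₀, hfin₁, hfin₀, hg, hfg, h⟩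
    refine ⟨P₁, P₀, f.hom, g.hom, ⟨(IsProjective.iff_projective _).2 hP₁,
      (IsProjective.iff_projective _).2 hP₀, hfin₁, hfin₀, hg, hfg⟩, fun u => ?_⟩
    obtain ⟨k, hk⟩ := h (ModuleCat.ofHom u)
    exact ⟨k.hom, fun x => LinearMap.congr_fun (congrArg ModuleCat.Hom.hom hk) x⟩
  · rintro ⟨P₁, P₀, f, g, h, hf⟩
    refine ⟨P₁, P₀, ModuleCat.ofHom f, ModuleCat.ofHom g,
      (IsProjective.iff_projective _).1 h.projective_left,
      (IsProjective.iff_projective _).1 h.projective_right, h.finite_left, h.finite_right,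
      h.surjective, h.exact, fun u => ?_⟩
    obtain ⟨k, hk⟩ := hf u.hom
    exact ⟨ModuleCat.ofHom k, ModuleCat.hom_ext (LinearMap.ext hk)⟩

theorem IsTauRigid.of_equiv (hM : IsTauRigid R M) (e : M ≃ₗ[R] N) : IsTauRigid R N := by
  obtain ⟨P₁, P₀, f, g, h, hf⟩ := hM
  refine ⟨P₁, P₀, f, e.toLinearMap ∘ₗ g, { h with
    surjective := e.surjective.comp h.surjective
    exact := fun y => by rw [← h.exact y]; exact e.map_eq_zero_iff }, fun u => ?_⟩
  obtain ⟨k, hk⟩ := hf (e.symm.toLinearMap ∘ₗ u)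
  exact ⟨e.toLinearMap ∘ₗ k, fun x => by simp [hk]⟩

theorem IsTauRigid.extVanishes (hT : IsTauRigid R T) {n : ℕ} {π : (Fin n → T) →ₗ[R] Y}
    (hπ : Function.Surjective π) : ExtVanishes R T Y := by
  obtain ⟨P₁, P₀, f, g, h, hf⟩ := hT
  have := h.projective_left
  have := h.projective_right
  refine extVanishes_of_extendsAlong (LinearMap.ker g).subtype_injective h.surjective
    g.exact_subtype_ker_map extVanishes_of_projective fun u => ?_
  let f' : P₁ →ₗ[R] LinearMap.ker g := f.codRestrict _ h.exact.apply_apply_eq_zero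
  obtain ⟨v, hv⟩ := exists_lift_of_projective hπ (u ∘ₗ f')
  obtain ⟨k, hk⟩ := hf.pi_target n v
  refine ⟨π ∘ₗ k, fun ⟨y, hy⟩ => ?_⟩
  obtain ⟨x, rfl⟩ := (h.exact y).1 hy
  exact (congrArg π (hk x)).trans (hv x)

theorem isTauRigid_of_extVanishes [IsArtinianRing R] [Module.Finite R M]
    (h : ∀ S : Submodule R M, ExtVanishes R M (M ⧸ S)) : IsTauRigid R M := by
  obtain ⟨P₁, P₀, f, g, hfg, hmin⟩ := exists_minimal_projectivePresentation (R := R) (M := M)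
  refine ⟨P₁, P₀, f, g, hfg, hfg.extendsAlong h fun S S' hS hSf u => ?_⟩
  obtain rfl := hmin S S' hS hSf
  exact Subsingleton.elim _ _

end Presentations

section SupportTauTilting

variable {𝒯 𝒜 : ModuleClass R} {D : List (ModCat R)} {Z : ModCat R}
variable {A F G N Q T X Y : Type} [AddCommGroup A] [Module R A] [AddCommGroup F] [Module R F]
  [AddCommGroup G] [Module R G] [AddCommGroup N] [Module R N] [AddCommGroup Q] [Module R Q]
  [AddCommGroup T] [Module R T] [AddCommGroup X] [Module R X] [AddCommGroup Y] [Module R Y]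

theorem isSummandOfPower_of_forall_mem_range [Module.Projective R Q] [Module.Finite R Q]
    {P : Type} [AddCommGroup P] [Module R P] {f : P →ₗ[R] R}
    (h : ∀ (α : Q →ₗ[R] R) (q : Q), α q ∈ LinearMap.range f) : IsSummandOfPower R Q P := by
  obtain ⟨n, β, hβ⟩ := Module.Finite.exists_fin' R Q
  obtain ⟨α, hα⟩ := exists_lift_of_projective hβ LinearMap.id
  have hsurj : Function.Surjective (β ∘ₗ f.compLeft (Fin n)) := fun q => by
    choose p hp using fun j => h (LinearMap.proj j ∘ₗ α) q
    exact ⟨p, (congrArg β (funext hp)).trans (hα q)⟩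
  obtain ⟨s, hs⟩ := exists_lift_of_projective hsurj LinearMap.id
  exact ⟨n, _, s, hs⟩

/-- The image in `R` of a projective module without maps to `T` is chosen maximal. -/
theorem exists_projective_generating_homVanishing [IsNoetherianRing R] (T : Type) [AddCommGroup T]
    [Module R T] :
    ∃ P : ModCat R, Module.Projective R P ∧ Module.Finite R P ∧ (∀ f : P →ₗ[R] T, f = 0) ∧
      ∀ (Q : Type) [AddCommGroup Q] [Module R Q], Module.Projective R Q → Module.Finite R Q →
        (∀ f : Q →ₗ[R] T, f = 0) → IsSummandOfPower R Q P := by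
  let 𝒮 : Set (Submodule R R) := {S | ∃ (P : ModCat R) (f : P →ₗ[R] R), Module.Projective R P ∧
    Module.Finite R P ∧ (∀ f : P →ₗ[R] T, f = 0) ∧ S = LinearMap.range f}
  have h𝒮 : 𝒮.Nonempty := ⟨_, .of R PUnit, 0, inferInstanceAs (Module.Projective R PUnit),
    inferInstanceAs (Module.Finite R PUnit),
    fun f => LinearMap.ext fun x => by rw [Subsingleton.elim x 0, map_zero, map_zero], rfl⟩
  obtain ⟨_, ⟨P, f, hP, hPfin, hPT, rfl⟩, hmax⟩ :=
    set_has_maximal_iff_noetherian.2 (inferInstance : IsNoetherian R R) 𝒮 h𝒮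
  refine ⟨P, hP, hPfin, hPT, fun Q _ _ hQ hQfin hQT =>
    isSummandOfPower_of_forall_mem_range (f := f) fun α q => ?_⟩
  have hmem : LinearMap.range (f.coprod α) ∈ 𝒮 :=
    ⟨.of R (P × Q), f.coprod α, inferInstanceAs (Module.Projective R (P × Q)),
      inferInstanceAs (Module.Finite R (P × Q)),
      fun u => LinearMap.prod_ext (hPT _) (hQT _), rfl⟩
  have hle : LinearMap.range f ≤ LinearMap.range (f.coprod α) := by
    rw [LinearMap.range_coprod]
    exact le_sup_left
  have heq : LinearMap.range f = LinearMap.range (f.coprod α) :=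
    hle.eq_of_not_lt (hmax _ hmem)
  rw [heq]
  exact ⟨(0, q), by simp⟩

theorem IsSummandOfPower.homVanishing (hQ : IsSummandOfPower R Q T) (hT : ∀ f : T →ₗ[R] N, f = 0)
    (f : Q →ₗ[R] N) : f = 0 := by
  obtain ⟨m, p, s, hs⟩ := hQ
  have hfp : f ∘ₗ p = 0 := LinearMap.pi_ext' fun j => hT _
  ext x
  rw [← hs x]
  exact LinearMap.congr_fun hfp (s x)

theorem IsTorsionClass.of_forall_mem_range (h𝒯 : IsTorsionClass 𝒯) (hT : 𝒯 T) [Module.Finite R X]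
    (h : ∀ x : X, ∃ f : T →ₗ[R] X, x ∈ LinearMap.range f) : 𝒯 X := by
  obtain ⟨n, β, hβ⟩ := Module.Finite.exists_fin' R X
  choose f t hft using fun j : Fin n => h (β (Pi.single j 1))
  refine h𝒯.quotient (LinearMap.lsum R (fun _ : Fin n => T) ℕ f) (fun x => ?_) (h𝒯.pi hT n)
  obtain ⟨c, rfl⟩ := hβ x
  refine ⟨fun j => c j • t j, ?_⟩
  calc LinearMap.lsum R (fun _ : Fin n => T) ℕ f (fun j => c j • t j)
      = ∑ j, c j • β (Pi.single j 1) := by simp [hft]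
    _ = β (∑ j, c j • Pi.single j 1) := by simp only [map_sum, map_smul]
    _ = β c := by simp only [← Pi.single_smul, smul_eq_mul, mul_one, Finset.univ_sum_single]

theorem IsExtProgenerator.extendsAlong [Module.Projective R F] (hT : IsExtProgenerator 𝒯 T)
    {B : Type} [AddCommGroup B] [Module R B] {u : F →ₗ[R] B} (hu : ExtendsAlong u T) (hY : 𝒯 Y) :
    ExtendsAlong u Y := by
  intro h
  obtain ⟨l, π, hπ, -⟩ := hT.exists_isResolvedBy Y hY
  obtain ⟨h', hh'⟩ := exists_lift_of_projective hπ h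
  obtain ⟨k, hk⟩ := hu.pi_target l h'
  exact ⟨π ∘ₗ k, fun x => (congrArg π (hk x)).trans (hh' x)⟩

theorem IsExtProgenerator.isSummandOfPower_cokernel [Module.Projective R F]
    (hT : IsExtProgenerator 𝒯 T) (h𝒯 : IsTorsionClass 𝒯) {m : ℕ} {u : F →ₗ[R] (Fin m → T)}
    (hu : ExtendsAlong u T) : IsSummandOfPower R ((Fin m → T) ⧸ LinearMap.range u) T :=
  hT.isSummandOfPower (h𝒯.quotientModule (h𝒯.pi hT.mem m) _) fun Y _ _ hY =>
    extVanishes_of_approximation (LinearMap.exact_map_mkQ_range u) (Submodule.mkQ_surjective _)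
      (π := (LinearMap.id : Y →ₗ[R] Y)) Function.surjective_id ((hT.extVanishes Y hY).pi_left m)
      extVanishes_of_projective (hT.extendsAlong hu hY)

/-- Let `u : F → T^m` be a left approximation of a projective module. The cokernel `C` of `u`
lies in `add T`, so `Ext¹(C, -)` vanishes on quotients of `N`, and maps extend along a projective
presentation of `C` obtained from one of `T^m` by adding the summand `F`. -/
theorem IsExtProgenerator.extendsAlong_of_homVanishing [IsArtinianRing R] [Module.Projective R F]
    [Module.Finite R F] (hT : IsExtProgenerator 𝒯 T) (h𝒯 : IsTorsionClass 𝒯) {m : ℕ}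
    {u : F →ₗ[R] (Fin m → T)} (hu : ExtendsAlong u T)
    (hext : ∀ S : Submodule R N, ExtVanishes R T (N ⧸ S))
    (hN : ∀ (Q : Type) [AddCommGroup Q] [Module R Q], Module.Projective R Q → Module.Finite R Q →
      (∀ f : Q →ₗ[R] T, f = 0) → ∀ f : Q →ₗ[R] N, f = 0) : ExtendsAlong u N := by
  have := h𝒯.finite hT.mem
  obtain ⟨P₁, P₀, p₁, p₀, hp, hmin⟩ := exists_minimal_projectivePresentation (R := R) (M := T)
  have hp₁ : ExtendsAlong p₁ T := hp.extendsAlong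
    (fun S => hT.extVanishes _ (h𝒯.quotientModule hT.mem S)) fun S S' hS hSp v => by
      obtain rfl := hmin S S' hS hSp
      exact Subsingleton.elim _ _
  have hpm := hp.pi m
  obtain ⟨l, hl⟩ := exists_lift_of_projective hpm.surjective u
  have hC := hpm.cokernel hl
  have haT : ExtendsAlong ((p₁.compLeft (Fin m)).coprod l) T :=
    (hp₁.compLeft m).coprod hu hpm.exact.apply_apply_eq_zero hl
  refine ExtendsAlong.of_coprod (hC.extendsAlong (fun S => ?_) fun S S' hS hSa => ?_)
    hpm.surjective hpm.exact hl
  · exact (hext S).of_isSummandOfPower_left (hT.isSummandOfPower_cokernel h𝒯 hu)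
  · have := hC.projective_left
    have := hC.finite_left
    refine hN S (projective_of_isCompl hS)
      (.of_surjective (S.projectionOnto S' hS) (Submodule.projectionOnto_surjective hS)) fun v => ?_
    obtain ⟨k, hk⟩ := haT (v ∘ₗ S.projectionOnto S' hS)
    ext x
    have hx := hk x
    rw [LinearMap.mem_ker.1 (hSa x.2), map_zero] at hx
    simpa using hx.symm

theorem IsExtProgenerator.isSummandOfPower_of_isTauRigid [IsArtinianRing R]
    (hR : HasLeftApproximations R) (hT : IsExtProgenerator 𝒯 T) (h𝒯 : IsTorsionClass 𝒯)
    [Module.Finite R N] (hTN : IsTauRigid R (T × N))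
    (hN : ∀ (Q : Type) [AddCommGroup Q] [Module R Q], Module.Projective R Q → Module.Finite R Q →
      (∀ f : Q →ₗ[R] T, f = 0) → ∀ f : Q →ₗ[R] N, f = 0) : IsSummandOfPower R N T := by
  have := h𝒯.finite hT.mem
  have hTTN : IsRetract R T (T × N) := ⟨LinearMap.fst R T N, LinearMap.inl R T N, fun _ => rfl⟩
  have hNTN : IsRetract R N (T × N) := ⟨LinearMap.snd R T N, LinearMap.inr R T N, fun _ => rfl⟩
  have hext : ∀ S : Submodule R N, ExtVanishes R T (N ⧸ S) := fun S =>
    (hTN.extVanishes (n := 1) (π := S.mkQ ∘ₗ LinearMap.snd R T N ∘ₗ LinearMap.proj 0)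
      (S.mkQ_surjective.comp fun y => ⟨fun _ => (0, y), rfl⟩)).of_retract_left hTTN
  obtain ⟨m, u, hu⟩ := hR R T
  have huN : ExtendsAlong u N := hT.extendsAlong_of_homVanishing h𝒯 hu hext hN
  have hN𝒯 : 𝒯 N := h𝒯.of_forall_mem_range (h𝒯.pi hT.mem m) fun y => by
    obtain ⟨k, hk⟩ := huN (LinearMap.toSpanSingleton R N y)
    exact ⟨k, u 1, (hk 1).trans (one_smul R y)⟩
  refine hT.isSummandOfPower hN𝒯 fun Y _ _ hY => ?_
  obtain ⟨l, π, hπ, -⟩ := hT.exists_isResolvedBy Y hY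
  have hfst : Function.Surjective (LinearMap.fst R T N) := LinearMap.fst_surjective
  exact (hTN.extVanishes (π := π ∘ₗ (LinearMap.fst R T N).compLeft (Fin l))
    (hπ.comp hfst.comp_left)).of_retract_left hNTN

theorem IsRetract.finite (h : IsRetract R Y X) [Module.Finite R X] : Module.Finite R Y :=
  let ⟨f, hf⟩ := h
  .of_surjective f hf.surjective

theorem IsRetract.projective (h : IsRetract R Y X) [Module.Projective R X] :
    Module.Projective R Y :=
  let ⟨f, s, hs⟩ := h
  .of_split s f (LinearMap.ext hs)

theorem IsRetract.homVanishing (hX : IsRetract R X A) (hY : IsRetract R Y N)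
    (h : ∀ f : A →ₗ[R] N, f = 0) (f : X →ₗ[R] Y) : f = 0 := by
  obtain ⟨p, s, hs⟩ := hX
  obtain ⟨q, t, ht⟩ := hY
  ext x
  have h0 : t (f (p (s x))) = 0 := LinearMap.congr_fun (h (t ∘ₗ f ∘ₗ p)) (s x)
  rw [← ht (f x), ← congrArg f (hs x), h0, map_zero, LinearMap.zero_apply]

theorem IsTauRigidPairMod.of_biprod {M N P Q : ModCat R} (h : IsTauRigidPairMod (M ⊞ N) (P ⊞ Q)) :
    Module.Finite R N ∧ IsTauRigid R (M × N) ∧ Module.Projective R Q ∧ Module.Finite R Q ∧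
      (∀ f : P →ₗ[R] N, f = 0) ∧ ∀ f : Q →ₗ[R] M, f = 0 := by
  obtain ⟨hMN, hrigid, hPQ, hPQproj, hzero⟩ := h
  have : Module.Finite R (M ⊞ N : ModCat R) := hMN
  have : Module.Finite R (P ⊞ Q : ModCat R) := hPQ
  have : Module.Projective R (P ⊞ Q : ModCat R) := (IsProjective.iff_projective _).2 hPQproj
  have hfst (A B : ModCat R) : IsRetract R A (A ⊞ B : ModCat R) :=
    .trans ⟨LinearMap.fst R A B, LinearMap.inl R A B, fun _ => rfl⟩
      (.of_equiv (ModuleCat.biprodIsoProd A B).toLinearEquiv)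
  have hsnd (A B : ModCat R) : IsRetract R B (A ⊞ B : ModCat R) :=
    .trans ⟨LinearMap.snd R A B, LinearMap.inr R A B, fun _ => rfl⟩
      (.of_equiv (ModuleCat.biprodIsoProd A B).toLinearEquiv)
  have hhom (f : (P ⊞ Q : ModCat R) →ₗ[R] (M ⊞ N : ModCat R)) : f = 0 :=
    congrArg ModuleCat.Hom.hom (hzero (ModuleCat.ofHom f))
  exact ⟨(hsnd M N).finite, (isTauRigidMod_iff.1 hrigid).of_equiv
    (ModuleCat.biprodIsoProd M N).toLinearEquiv, (hsnd P Q).projective, (hsnd P Q).finite,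
    (hfst P Q).homVanishing (hsnd M N) hhom, (hsnd P Q).homVanishing (hfst M N) hhom⟩

theorem memAddMod_of_isSummandOfPower {M N : ModCat R} (h : IsSummandOfPower R N M) :
    MemAddMod N M := by
  obtain ⟨m, f, s, hs⟩ := h
  refine ⟨m, ModuleCat.ofHom s ≫ (ModuleCat.biproductIsoPi fun _ : Fin m => M).inv,
    (ModuleCat.biproductIsoPi fun _ : Fin m => M).hom ≫ ModuleCat.ofHom f, ?_⟩
  rw [Category.assoc, Iso.inv_hom_id_assoc, ← ModuleCat.ofHom_comp]
  exact ModuleCat.hom_ext (LinearMap.ext hs)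

theorem IsExtProgenerator.isSupportTauTiltingMod [IsArtinianRing R] (hR : HasLeftApproximations R)
    (h𝒯 : IsTorsionClass 𝒯) {T : ModCat R} (hT : IsExtProgenerator 𝒯 T) :
    IsSupportTauTiltingMod T := by
  have : Module.Finite R T := h𝒯.finite hT.mem
  obtain ⟨P, hP, hPfin, hPT, hmax⟩ := exists_projective_generating_homVanishing (R := R) T
  have hrigid : IsTauRigid R T :=
    isTauRigid_of_extVanishes fun S => hT.extVanishes _ (h𝒯.quotientModule hT.mem S)
  refine ⟨P, ⟨this, isTauRigidMod_iff.2 hrigid, hPfin, (IsProjective.iff_projective _).1 hP,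
    fun f => ModuleCat.hom_ext (hPT f.hom)⟩, fun N Q hNQ => ?_⟩
  obtain ⟨hN, hTN, hQ, hQfin, hPN, hQT⟩ := hNQ.of_biprod
  exact ⟨memAddMod_of_isSummandOfPower <| hT.isSummandOfPower_of_isTauRigid hR h𝒯 hTN
      fun Q' _ _ hQ' hQ'fin hQ'T => (hmax Q' hQ' hQ'fin hQ'T).homVanishing hPN,
    memAddMod_of_isSummandOfPower (hmax Q hQ hQfin hQT)⟩

theorem IsExtProgenerator.exists_isBasicMod [IsArtinianRing R] (h𝒯 : IsTorsionClass 𝒯)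
    {T₀ : ModCat R} (hT₀ : IsExtProgenerator 𝒯 T₀) :
    ∃ T : ModCat R, IsExtProgenerator 𝒯 T ∧ IsBasicMod T := by
  obtain ⟨T, hT, hmin⟩ := WellFounded.has_min
    (InvImage.wf (fun T : ModCat R => Module.length R T) wellFounded_lt)
    {T : ModCat R | IsExtProgenerator 𝒯 T} ⟨T₀, hT₀⟩
  refine ⟨T, hT, fun N X ⟨i⟩ => ?_⟩
  let e : T ≃ₗ[R] (N × N) × X := (i ≪≫ biprod.mapIso (ModuleCat.biprodIsoProd N N) (Iso.refl X) ≪≫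
    ModuleCat.biprodIsoProd (.of R (N × N)) X).toLinearEquiv
  let e' : T ≃ₗ[R] N × N × X := e.trans (LinearEquiv.prodAssoc R N N X)
  have hNXT : IsRetract R (N × X) T :=
    .trans ⟨LinearMap.snd R N (N × X), LinearMap.inr R N (N × X), fun _ => rfl⟩ (.of_equiv e')
  have hNNX : IsRetract R N (N × X) := ⟨LinearMap.fst R N X, LinearMap.inl R N X, fun _ => rfl⟩
  have hTNX : IsSummandOfPower R T (N × X) := (IsRetract.of_equiv e'.symm).trans_isSummandOfPower
    (hNNX.isSummandOfPower.prod (IsRetract.of_equiv (.refl R _)).isSummandOfPower)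
  have hlen : ¬ Module.length R (N × X) < Module.length R T :=
    hmin (.of R (N × X)) (hT.of_isSummandOfPower h𝒯 hNXT.isSummandOfPower hTNX)
  have : Module.Finite R T := h𝒯.finite hT.mem
  have : Module.Finite R (N × X) := hNXT.finite
  have : Subsingleton N := by
    rw [e'.length_eq, Module.length_prod R N (N × X)] at hlen
    exact Module.length_eq_zero_iff.1 <| by_contra fun h0 =>
      hlen (ENat.lt_add_left Module.length_ne_top (pos_iff_ne_zero.2 h0))
  exact ModuleCat.isZero_of_subsingleton N

theorem IsExtProgenerator.not_homVanishing (hT : IsExtProgenerator 𝒯 T) (hZ : 𝒯 Z) [Nontrivial Z] :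
    ¬ homVanishing 𝒯 Z T := fun h => by
  obtain ⟨m, π, hπ, -⟩ := hT.exists_isResolvedBy Z hZ
  have hπ0 : π = 0 := LinearMap.pi_ext' fun j => h.2 _
  obtain ⟨z, hz⟩ := exists_ne (0 : Z)
  obtain ⟨x, rfl⟩ := hπ z
  exact hz (LinearMap.congr_fun hπ0 x)

theorem IsExtProgenerator.of_equiv (h𝒯 : IsTorsionClass 𝒯) (hT : IsExtProgenerator 𝒯 T)
    (e : T ≃ₗ[R] X) : IsExtProgenerator 𝒯 X :=
  hT.of_isSummandOfPower h𝒯 (IsRetract.of_equiv e).isSummandOfPower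
    (IsRetract.of_equiv e.symm).isSummandOfPower

theorem IsSplittingChain.length_lt [IsArtinianRing R] (hR : HasLeftApproximations R)
    (h𝒜 : IsSerreClass 𝒜) (hG : IsProgenerator 𝒜 G) {n : ℕ} {f : Fin n → ModCat R}
    (hf : ∀ M : ModCat R, IsSupportTauTiltingMod M → IsBasicMod M → ∃ i, Nonempty (M ≅ f i))
    (hD : IsSplittingChain 𝒜 D) : D.length < n := by
  let progens (D : List (ModCat R)) : Set (Fin n) :=
    {i | ∃ E, E <:+ D ∧ IsExtProgenerator (ChainTorsion 𝒜 E) (f i)}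
  have hmem {D} (hD : IsSplittingChain 𝒜 D) : ∃ i, IsExtProgenerator (ChainTorsion 𝒜 D) (f i) := by
    have h𝒯 := h𝒜.isTorsionClass_chainTorsion D
    obtain ⟨T₀, hT₀⟩ := hD.exists_isExtProgenerator hR h𝒜 hG
    obtain ⟨T, hT, hbasic⟩ := hT₀.exists_isBasicMod h𝒯
    obtain ⟨i, ⟨e⟩⟩ := hf T (hT.isSupportTauTiltingMod hR h𝒯) hbasic
    exact ⟨i, hT.of_equiv h𝒯 e.toLinearEquiv⟩
  suffices h : D.length < (progens D).ncard by
    simpa using h.trans_le (Set.ncard_le_card (progens D))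
  induction hD with
  | nil =>
    obtain ⟨i, hi⟩ := hmem .nil
    exact (Set.ncard_pos).2 ⟨i, [], List.suffix_rfl, hi⟩
  | @cons Z D hZ hD ih =>
    obtain ⟨i, hi⟩ := hmem (hD.cons hZ)
    have := hZ.nontrivial
    have hlt : progens D ⊂ progens (Z :: D) := by
      have hle : progens D ⊆ progens (Z :: D) := fun j ⟨E, hE, hj⟩ =>
        ⟨E, hE.trans (List.suffix_cons Z D), hj⟩
      refine (Set.ssubset_iff_of_subset hle).2 ⟨i, ⟨_, List.suffix_rfl, hi⟩, ?_⟩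
      rintro ⟨E, hE, hiE⟩
      exact hiE.not_homVanishing (hZ.mem.of_suffix hE) ⟨hi.mem.1.of_suffix hE, hi.mem.2⟩
    exact Nat.lt_of_le_of_lt (Nat.succ_le_of_lt ih) (Set.ncard_lt_ncard hlt)

end SupportTauTilting

/-! ### Complete chains -/

section UniversalExtensions

/-- All `Hom` groups between finitely generated `R`-modules are finitely generated over the
centre of `R`; phrased with coefficients acting on the source, so that no module structure on the
`Hom` groups is needed. -/
def IsHomFiniteOverCenter (R : Type) [Ring R] : Prop :=
  ∀ (M N : Type) [AddCommGroup M] [Module R M] [AddCommGroup N] [Module R N]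
    [Module.Finite R M] [Module.Finite R N], ∃ (m : ℕ) (φ : Fin m → M →ₗ[R] N),
    ∀ g : M →ₗ[R] N, ∃ c : Fin m → Subring.center R, ∀ x, g x = ∑ j, φ j (c j • x)

variable {N P Q Ω : Type} [AddCommGroup N] [Module R N] [AddCommGroup P] [Module R P]
  [AddCommGroup Q] [Module R Q] [AddCommGroup Ω] [Module R Ω]

/-- Multiplication by a central element, as an `R`-linear endomorphism. -/
def centerSMul (M : Type) [AddCommGroup M] [Module R M] (c : Subring.center R) : M →ₗ[R] M where
  toFun x := c • x
  map_add' := smul_add c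
  map_smul' r x := by
    change (c : R) • r • x = r • (c : R) • x
    rw [smul_smul, smul_smul, Subring.mem_center_iff.1 c.2 r]

theorem IsHomFiniteOverCenter.hasLeftApproximations (hR : IsHomFiniteOverCenter R) :
    HasLeftApproximations R := by
  intro M N _ _ _ _ _ _
  obtain ⟨m, φ, hφ⟩ := hR M N
  refine ⟨m, LinearMap.pi φ, fun g => ?_⟩
  obtain ⟨c, hc⟩ := hφ g
  refine ⟨∑ j, centerSMul N (c j) ∘ₗ LinearMap.proj j, fun x => ?_⟩
  rw [hc, LinearMap.sum_apply]
  exact Finset.sum_congr rfl fun j _ => ((φ j).map_smul (c j : R) x).symm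

/-- The universal extension of a power of `Q` by `N` is the pushout of a power of `Ω → P → Q`
along generators of `Hom(Ω, N)`: every map `Ω → N` then extends to `P` modulo central scalars. -/
theorem exists_universal_extension (hR : IsHomFiniteOverCenter R) [Module.Finite R Ω]
    [Module.Finite R N] {a : Ω →ₗ[R] P} {q : P →ₗ[R] Q} (ha : Function.Injective a)
    (hq : Function.Surjective q) (haq : Function.Exact a q) (hPN : ExtVanishes R P N)
    (hPQ : ExtVanishes R P Q) (hQQ : ExtVanishes R Q Q) :
    ∃ (N₁ : ModCat R) (m : ℕ) (i : N →ₗ[R] N₁) (p : N₁ →ₗ[R] (Fin m → Q)),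
      Function.Injective i ∧ Function.Surjective p ∧ Function.Exact i p ∧ ExtVanishes R Q N₁ := by
  obtain ⟨m, φ, hφ⟩ := hR Ω N
  let A := a.compLeft (Fin m)
  let u := LinearMap.lsum R (fun _ : Fin m => Ω) ℕ φ
  have hAq : Function.Exact A (q.compLeft (Fin m)) := exact_compLeft haq m
  let i := PushoutModule.inl A u
  let p := PushoutModule.desc (u := u) 0 (q.compLeft (Fin m)) hAq.apply_apply_eq_zero
  have hi : Function.Injective i := PushoutModule.inl_injective ha.comp_left
  have hp : Function.Surjective p := PushoutModule.desc_surjective_of_right _ hq.comp_left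
  have hip : Function.Exact i p := PushoutModule.exact_inl_desc hAq
  refine ⟨.of R (PushoutModule A u), m, i, p, hi, hp, hip, extVanishes_of_extendsAlong ha hq haq
    (extVanishes_of_exact_right hi hp hip hPN (hPQ.pi_right m)) fun g => ?_⟩
  obtain ⟨k₁, hk₁⟩ := (hQQ.pi_right m).extendsAlong ha hq haq (p ∘ₗ g)
  obtain ⟨k₂, hk₂⟩ := hPN.exists_lift hi hp hip k₁
  obtain ⟨g', hg'⟩ := exists_factor_of_injective hi (g - k₂ ∘ₗ a) fun x => (hip _).1 <| by
    rw [LinearMap.sub_apply, map_sub, LinearMap.comp_apply, hk₂, hk₁, LinearMap.comp_apply,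
      sub_self]
  obtain ⟨c, hc⟩ := hφ g'
  have hcond (x : Ω) : PushoutModule.inr A u (LinearMap.pi (fun j => centerSMul P (c j)) (a x)) =
      i (g' x) := by
    have hA : LinearMap.pi (fun j => centerSMul P (c j)) (a x) = A fun j => c j • x :=
      funext fun j => (a.map_smul (c j : R) x).symm
    rw [hA, PushoutModule.condition, hc]
    simp only [u, i, LinearMap.lsum_apply, LinearMap.sum_apply, LinearMap.comp_apply,
      LinearMap.proj_apply]
  refine ⟨k₂ + PushoutModule.inr A u ∘ₗ LinearMap.pi fun j => centerSMul P (c j), fun x => ?_⟩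
  rw [LinearMap.add_apply, LinearMap.comp_apply, hcond, hg', LinearMap.sub_apply,
    LinearMap.comp_apply, add_sub_cancel]

end UniversalExtensions

section TorsionFreePresentations

variable {𝒜 : ModuleClass R} {D E : List (ModCat R)} {Z : ModCat R}
variable {F G K X : Type} [AddCommGroup F] [Module R F] [AddCommGroup G] [Module R G]
  [AddCommGroup K] [Module R K] [AddCommGroup X] [Module R X]

/-- A short exact sequence `0 → K → F → X → 0` with `F` torsion-free for the chain `D` and
`Ext¹(Z, K) = 0` for all entries `Z` of the list `E`, a final segment of `D` in the applications. -/
structure IsTorsionFreePresentation (𝒜 : ModuleClass R) (D E : List (ModCat R)) (i : K →ₗ[R] F)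
    (p : F →ₗ[R] X) : Prop where
  injective : Function.Injective i
  surjective : Function.Surjective p
  exact : Function.Exact i p
  chainFree : ChainFree 𝒜 D F
  extVanishes : ∀ Z ∈ E, ExtVanishes R Z K

theorem exists_suffix_of_mem (hZ : Z ∈ D) : ∃ E, Z :: E <:+ D :=
  let ⟨s, E, h⟩ := List.append_of_mem hZ
  ⟨E, s, h.symm⟩

theorem IsSplittingChain.extVanishes (h𝒜 : IsSerreClass 𝒜) (hD : IsSplittingChain 𝒜 D)
    (hX : ChainTorsion 𝒜 D X) (hZ : Z ∈ D) : ExtVanishes R Z X := by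
  obtain ⟨E, hE⟩ := exists_suffix_of_mem hZ
  exact (hD.isSplittingObject hE).extVanishes (h𝒜.isTorsionClass_chainTorsion E)
    (hX.of_suffix ((List.suffix_cons Z E).trans hE))

theorem IsProgenerator.exists_extVanishes_extension (hR : IsHomFiniteOverCenter R)
    (h𝒜 : IsSerreClass 𝒜) (hG : IsProgenerator 𝒜 G) (hZ : 𝒜 Z) (hZZ : ExtVanishes R Z Z)
    (hK : 𝒜 K) : ∃ (K₁ : ModCat R) (m : ℕ) (i : K →ₗ[R] K₁) (p : K₁ →ₗ[R] (Fin m → Z)),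
      Function.Injective i ∧ Function.Surjective p ∧ Function.Exact i p ∧ ExtVanishes R Z K₁ := by
  obtain ⟨s, q, hq⟩ := hG.exists_surjective Z hZ
  have := h𝒜.finite hK
  have := h𝒜.finite (h𝒜.submodule (h𝒜.isTorsionClass.pi hG.mem s) (LinearMap.ker q))
  have hext := (hG.isExtProgenerator h𝒜).extVanishes
  exact exists_universal_extension hR (LinearMap.ker q).injective_subtype hq q.exact_subtype_ker_map
    ((hext K hK).pi_left s) ((hext Z hZ).pi_left s) hZZ

theorem IsTorsionFreePresentation.exists_cons (hR : IsHomFiniteOverCenter R) (h𝒜 : IsSerreClass 𝒜)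
    (hG : IsProgenerator 𝒜 G) (hD : IsSplittingChain 𝒜 D) (hE : Z :: E <:+ D) {i : K →ₗ[R] F}
    {p : F →ₗ[R] X} (h : IsTorsionFreePresentation 𝒜 D E i p) :
    ∃ (K₁ F₁ : ModCat R) (i₁ : K₁ →ₗ[R] F₁) (p₁ : F₁ →ₗ[R] X),
      IsTorsionFreePresentation 𝒜 D (Z :: E) i₁ p₁ := by
  have hZ := hD.isSplittingObject hE
  have h𝒯 := h𝒜.isTorsionClass_chainTorsion E
  obtain ⟨K₁, m, j, r, hj, hr, hjr, hK₁⟩ := hG.exists_extVanishes_extension hR h𝒜 hZ.mem.mem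
    (hZ.extVanishes h𝒯 hZ.mem) (h𝒜.sub i h.injective h.chainFree.1)
  refine ⟨K₁, .of R (PushoutModule i j), PushoutModule.inl i j,
    PushoutModule.desc 0 p h.exact.apply_apply_eq_zero, PushoutModule.inl_injective h.injective,
    PushoutModule.desc_surjective_of_right _ h.surjective, PushoutModule.exact_inl_desc h.exact,
    .extension h𝒜 (PushoutModule.inr i j) _ (PushoutModule.inr_injective hj)
      (PushoutModule.exact_inr_desc hjr) h.chainFree ((hD.chainFree hE).pi h𝒜 m), fun Z' hZ' => ?_⟩
  rcases List.mem_cons.1 hZ' with rfl | hZ'E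
  · exact hK₁
  · exact extVanishes_of_exact_right hj hr hjr (h.extVanishes Z' hZ'E) <| ExtVanishes.pi_right
      ((hD.of_suffix ((List.suffix_cons Z E).trans hE)).extVanishes h𝒜 hZ.mem hZ'E) m

theorem IsProgenerator.exists_isTorsionFreePresentation (hR : IsHomFiniteOverCenter R)
    (h𝒜 : IsSerreClass 𝒜) (hG : IsProgenerator 𝒜 G) (hD : IsSplittingChain 𝒜 D)
    (hGD : ChainFree 𝒜 D G) (hX : 𝒜 X) (hE : E <:+ D) :
    ∃ (K F : ModCat R) (i : K →ₗ[R] F) (p : F →ₗ[R] X),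
      IsTorsionFreePresentation 𝒜 D E i p := by
  induction E with
  | nil =>
    obtain ⟨s, q, hq⟩ := hG.exists_surjective X hX
    exact ⟨.of R (LinearMap.ker q), .of R (Fin s → G), (LinearMap.ker q).subtype, q,
      (LinearMap.ker q).injective_subtype, hq, q.exact_subtype_ker_map, hGD.pi h𝒜 s,
      fun Z hZ => absurd hZ List.not_mem_nil⟩
  | cons Z E ih =>
    obtain ⟨K, F, i, p, h⟩ := ih ((List.suffix_cons Z E).trans hE)
    exact h.exists_cons hR h𝒜 hG hD hE

/-- A torsion-free presentation whose middle term has minimal length. -/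
def IsReducedPresentation (𝒜 : ModuleClass R) (D : List (ModCat R)) (i : K →ₗ[R] F)
    (p : F →ₗ[R] X) : Prop :=
  IsTorsionFreePresentation 𝒜 D D i p ∧
    ∀ (K' F' : ModCat R) (i' : K' →ₗ[R] F') (p' : F' →ₗ[R] X),
      IsTorsionFreePresentation 𝒜 D D i' p' → Module.length R F ≤ Module.length R F'

theorem IsProgenerator.exists_isReducedPresentation (hR : IsHomFiniteOverCenter R)
    (h𝒜 : IsSerreClass 𝒜) (hG : IsProgenerator 𝒜 G) (hD : IsSplittingChain 𝒜 D)
    (hGD : ChainFree 𝒜 D G) (hX : 𝒜 X) :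
    ∃ (K F : ModCat R) (i : K →ₗ[R] F) (p : F →ₗ[R] X), IsReducedPresentation 𝒜 D i p := by
  obtain ⟨K₀, F₀, i₀, p₀, h₀⟩ :=
    hG.exists_isTorsionFreePresentation hR h𝒜 hD hGD hX List.suffix_rfl
  obtain ⟨F, ⟨K, i, p, h⟩, hmin⟩ := WellFounded.has_min
    (InvImage.wf (fun F : ModCat R => Module.length R F) wellFounded_lt)
    {F : ModCat R | ∃ (K : ModCat R) (i : K →ₗ[R] F) (p : F →ₗ[R] X),
      IsTorsionFreePresentation 𝒜 D D i p} ⟨F₀, K₀, i₀, p₀, h₀⟩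
  exact ⟨K, F, i, p, h, fun K' F' i' p' h' => not_lt.1 (hmin F' ⟨K', i', p', h'⟩)⟩

theorem eq_zero_of_comp_eq_zero {i : K →ₗ[R] F} {p : F →ₗ[R] X} (hp : Function.Surjective p)
    (hip : Function.Exact i p) {g : F →ₗ[R] G} (hgi : g ∘ₗ i = 0) (hX : ∀ f : X →ₗ[R] G, f = 0) :
    g = 0 := by
  obtain ⟨f, hf⟩ := exists_factor_of_surjective hp g fun x hx => by
    obtain ⟨a, rfl⟩ := (hip x).1 hx
    exact LinearMap.congr_fun hgi a
  ext x
  rw [← hf, hX f, LinearMap.zero_apply, LinearMap.zero_apply]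

theorem IsTorsionFreePresentation.ker (h𝒜 : IsSerreClass 𝒜) {i : K →ₗ[R] F} {p : F →ₗ[R] X}
    (h : IsTorsionFreePresentation 𝒜 D E i p) {g : F →ₗ[R] G} (hg : HasSection (g ∘ₗ i)) :
    ∃ (i' : LinearMap.ker (g ∘ₗ i) →ₗ[R] LinearMap.ker g),
      IsTorsionFreePresentation 𝒜 D E i' (p ∘ₗ (LinearMap.ker g).subtype) := by
  obtain ⟨r, hr⟩ := hg.exists_retraction (LinearMap.ker (g ∘ₗ i)).injective_subtype
    (g ∘ₗ i).exact_subtype_ker_map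
  have hretract : IsRetract R (LinearMap.ker (g ∘ₗ i)) K := ⟨r, _, hr⟩
  obtain ⟨s, hs⟩ := hg
  have hs (x : G) : g (i (s x)) = x := hs x
  refine ⟨i.restrict fun x hx => hx, fun x y hxy =>
    Subtype.ext (h.injective (congrArg Subtype.val hxy)), fun y => ?_, fun y => ⟨fun hy => ?_, ?_⟩,
    h.chainFree.sub h𝒜 _ (LinearMap.ker g).injective_subtype,
    fun Z hZ => (h.extVanishes Z hZ).of_retract_right hretract⟩
  · obtain ⟨x, rfl⟩ := h.surjective y
    refine ⟨⟨x - i (s (g x)), by rw [LinearMap.mem_ker, map_sub, hs, sub_self]⟩, ?_⟩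
    rw [LinearMap.comp_apply, Submodule.subtype_apply, map_sub, h.exact.apply_apply_eq_zero,
      sub_zero]
  · obtain ⟨x, hx⟩ := (h.exact y).1 hy
    exact ⟨⟨x, by rw [LinearMap.mem_ker, LinearMap.comp_apply, hx, y.2]⟩, Subtype.ext hx⟩
  · rintro ⟨x, rfl⟩
    exact h.exact.apply_apply_eq_zero x

theorem IsReducedPresentation.homVanishing [IsArtinianRing R] (h𝒜 : IsSerreClass 𝒜)
    (hD : IsSplittingChain 𝒜 D) (hE : Z :: E <:+ D) (hX : ChainTorsion 𝒜 D X) {i : K →ₗ[R] F}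
    {p : F →ₗ[R] X} (h : IsReducedPresentation 𝒜 D i p) (hK : ChainTorsion 𝒜 E K) :
    ChainTorsion 𝒜 (Z :: E) F := by
  obtain ⟨h, hmin⟩ := h
  have hED := (List.suffix_cons Z E).trans hE
  have hZ := hD.isSplittingObject hE
  refine ⟨(h𝒜.isTorsionClass_chainTorsion E).extension i p h.exact h.surjective hK
    (hX.of_suffix hED), fun g => by_contra fun hg => ?_⟩
  have hgi : g ∘ₗ i ≠ 0 := fun h0 =>
    hg (eq_zero_of_comp_eq_zero h.surjective h.exact h0 (hX.eq_zero_of_suffix hE))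
  have hsec := hZ.hasSection K hK (g ∘ₗ i) hgi
  obtain ⟨i', h'⟩ := h.ker h𝒜 hsec
  have := h𝒜.finite h.chainFree.1
  have := hZ.nontrivial
  exact (length_ker_lt_of_surjective hsec.of_comp.surjective).not_ge
    (hmin (.of R _) (.of R _) i' _ h')

theorem exists_suffix_cons_of_not {P : List (ModCat R) → Prop} (hnil : P []) (hD : ¬ P D) :
    ∃ Z E, Z :: E <:+ D ∧ P E ∧ ¬ P (Z :: E) := by
  induction D with
  | nil => exact absurd hnil hD
  | cons Z D ih =>
    by_cases h : P D
    · exact ⟨Z, D, List.suffix_rfl, h, hD⟩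
    · obtain ⟨Z', E, hE, hPE, hPZE⟩ := ih h
      exact ⟨Z', E, hE.trans (List.suffix_cons Z D), hPE, hPZE⟩

/-- `Z` is the oldest chain entry met by a kernel of a reduced presentation of a torsion module;
it is then a direct summand of such a kernel. -/
theorem IsSplittingChain.exists_pivot [IsArtinianRing R] (hR : IsHomFiniteOverCenter R)
    (h𝒜 : IsSerreClass 𝒜) (hG : IsProgenerator 𝒜 G) (hD : IsSplittingChain 𝒜 D)
    (hGD : ChainFree 𝒜 D G) (hX : ChainTorsion 𝒜 D X) [Nontrivial X] :
    ∃ Z E, Z :: E <:+ D ∧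
      (∀ (L : Type) [AddCommGroup L] [Module R L], ChainTorsion 𝒜 D L →
        ∃ (K F : ModCat R) (i : K →ₗ[R] F) (p : F →ₗ[R] L),
          IsTorsionFreePresentation 𝒜 D D i p ∧ ChainTorsion 𝒜 (Z :: E) F) ∧
      ∃ (L K F : ModCat R) (i : K →ₗ[R] F) (p : F →ₗ[R] L),
        IsTorsionFreePresentation 𝒜 D D i p ∧ ChainTorsion 𝒜 (Z :: E) F ∧ IsRetract R Z K := by
  let P (E : List (ModCat R)) : Prop :=
    ∀ (L K F : ModCat R) (i : K →ₗ[R] F) (p : F →ₗ[R] L), ChainTorsion 𝒜 D L →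
      IsReducedPresentation 𝒜 D i p → ChainTorsion 𝒜 E K
  have hnil : P [] := fun L K F i p _ h => h𝒜.sub i h.1.injective h.1.chainFree.1
  have hPD : ¬ P D := fun hP => by
    obtain ⟨K, F, i, p, h⟩ := hG.exists_isReducedPresentation hR h𝒜 hD hGD hX.mem
    have hF := (h𝒜.isTorsionClass_chainTorsion D).extension i p h.1.exact h.1.surjective
      (hP (.of R X) K F i p hX h) hX
    have := h.1.chainFree.subsingleton hF
    exact not_subsingleton X h.1.surjective.subsingleton
  obtain ⟨Z, E, hE, hPE, hPZE⟩ := exists_suffix_cons_of_not hnil hPD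
  refine ⟨Z, E, hE, fun L _ _ hL => ?_, ?_⟩
  · obtain ⟨K, F, i, p, h⟩ := hG.exists_isReducedPresentation hR h𝒜 hD hGD hL.mem
    exact ⟨K, F, i, p, h.1, h.homVanishing h𝒜 hD hE hL (hPE (.of R L) K F i p hL h)⟩
  · simp only [P, not_forall] at hPZE
    obtain ⟨L, K, F, i, p, hL, h, hKZ⟩ := hPZE
    have hK : ChainTorsion 𝒜 E K := hPE L K F i p hL h
    obtain ⟨f, hf⟩ : ∃ f : K →ₗ[R] Z, f ≠ 0 := by
      by_contra! h0
      exact hKZ ⟨hK, h0⟩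
    exact ⟨L, K, F, i, p, h.1, h.homVanishing h𝒜 hD hE hL hK, f,
      (hD.isSplittingObject hE).hasSection K hK f hf⟩

end TorsionFreePresentations
section ChainCompletion

variable {𝒜 : ModuleClass R} {D E : List (ModCat R)} {Z M W : ModCat R}
variable {F G P X Y : Type} [AddCommGroup F] [Module R F] [AddCommGroup G] [Module R G]
  [AddCommGroup P] [Module R P] [AddCommGroup X] [Module R X] [AddCommGroup Y] [Module R Y]

theorem IsSplittingChain.extVanishes_of_chainFree [IsArtinianRing R] (h𝒜 : IsSerreClass 𝒜)
    (hD : IsSplittingChain 𝒜 D) (hX : ∀ Z ∈ D, ExtVanishes R Z X) (hF : ChainFree 𝒜 D F) :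
    ExtVanishes R F X :=
  hD.chainFree_induction h𝒜 (fun F _ _ => ExtVanishes R F X)
    (fun _ _ _ _ => extVanishes_of_subsingleton_left)
    (fun _ _ _ _ _ _ Z _ hE _ hF e => (ExtVanishes.prod_left
      (hX Z (hE.subset List.mem_cons_self)) hF).of_retract_left (.of_equiv e.symm)) hF

theorem IsSplittingChain.exists_approximation_by_newer (hR : HasLeftApproximations R)
    (h𝒜 : IsSerreClass 𝒜) (hD : IsSplittingChain 𝒜 D) (hZ : 𝒜 Z) :
    ∃ (M : ModCat R) (φ : Z →ₗ[R] M), ChainFree 𝒜 D M ∧ ChainTorsion 𝒜 (Z :: E) M ∧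
      ∀ Z' E', Z' :: E' <:+ D → Z :: E <:+ E' → ExtendsAlong φ Z' := by
  induction hD with
  | nil => exact ⟨.of R PUnit, 0, h𝒜.chainFree_of_subsingleton,
      (h𝒜.isTorsionClass_chainTorsion _).of_subsingleton,
      fun Z' E' h => absurd (List.eq_nil_of_suffix_nil h) (List.cons_ne_nil Z' E')⟩
  | @cons Z' D hZ' hD ih =>
    obtain ⟨M, φ, hM, hME, hφ⟩ := ih
    have hMD := hM.of_suffix (List.suffix_cons Z' D)
    by_cases hE : Z :: E <:+ D
    · have := h𝒜.finite hZ
      have := h𝒜.finite hZ'.mem.mem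
      obtain ⟨m, ψ, hψ⟩ := hR Z Z'
      refine ⟨.of R (M × (Fin m → Z')), φ.prod ψ, hMD.prod h𝒜
        (((hD.cons hZ').chainFree List.suffix_rfl).pi h𝒜 m),
        (h𝒜.isTorsionClass_chainTorsion _).prod hME
          ((h𝒜.isTorsionClass_chainTorsion _).pi (hZ'.mem.of_suffix hE) m), fun Y E' hY hE' g => ?_⟩
      rcases List.suffix_cons_iff.1 hY with h | hY
      · obtain ⟨rfl, rfl⟩ := List.cons.inj h
        obtain ⟨k, hk⟩ := hψ g
        exact ⟨k ∘ₗ LinearMap.snd R M _, hk⟩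
      · obtain ⟨k, hk⟩ := hφ Y E' hY hE' g
        exact ⟨k ∘ₗ LinearMap.fst R M _, hk⟩
    · refine ⟨M, φ, hMD, hME, fun Y E' hY hE' => ?_⟩
      rcases List.suffix_cons_iff.1 hY with h | hY
      · exact absurd ((List.cons.inj h).2 ▸ hE') hE
      · exact hφ Y E' hY hE'

theorem IsSplittingChain.extendsAlong_of_chainFree [IsArtinianRing R] (h𝒜 : IsSerreClass 𝒜)
    (hD : IsSplittingChain 𝒜 D) (hE : Z :: E <:+ D) {φ : Z →ₗ[R] M}
    (hφ : ∀ Z' E', Z' :: E' <:+ D → Z :: E <:+ E' → ExtendsAlong φ Z') (hF : ChainFree 𝒜 D F)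
    (hFE : ChainTorsion 𝒜 (Z :: E) F) : ExtendsAlong φ F := by
  refine hD.chainFree_induction h𝒜 (fun F _ _ => ChainTorsion 𝒜 (Z :: E) F → ExtendsAlong φ F)
    (fun _ _ _ _ _ _ => ⟨0, fun _ => Subsingleton.elim _ _⟩) ?_ hF hFE
  intro X F _ _ _ _ Z' E' hE' _ ih e hX u
  have hsnd : Function.Surjective (LinearMap.snd R Z' F) := LinearMap.snd_surjective
  have hnewer : Z :: E <:+ E' := by
    by_contra hnot
    have hsuff : Z' :: E' <:+ Z :: E := by
      rcases List.suffix_or_suffix_of_suffix hE hE' with h | h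
      · rcases List.suffix_cons_iff.1 h with h | h
        · exact h ▸ List.suffix_rfl
        · exact absurd h hnot
      · exact h
    have := (hD.isSplittingObject hE').nontrivial
    obtain ⟨z, hz⟩ := exists_ne (0 : Z')
    have h0 := hX.eq_zero_of_suffix hsuff (LinearMap.fst R Z' F ∘ₗ e.toLinearMap)
    exact hz ((congrArg Prod.fst (e.apply_symm_apply (z, 0))).symm.trans
      (LinearMap.congr_fun h0 (e.symm (z, 0))))
  obtain ⟨v₁, hv₁⟩ := hφ Z' E' hE' hnewer (LinearMap.fst R Z' F ∘ₗ e.toLinearMap ∘ₗ u)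
  obtain ⟨v₂, hv₂⟩ := ih ((h𝒜.isTorsionClass_chainTorsion _).quotient
    (LinearMap.snd R Z' F ∘ₗ e.toLinearMap) (hsnd.comp e.surjective) hX)
    (LinearMap.snd R Z' F ∘ₗ e.toLinearMap ∘ₗ u)
  refine ⟨e.symm.toLinearMap ∘ₗ v₁.prod v₂, fun x => ?_⟩
  have : v₁.prod v₂ (φ x) = e (u x) := Prod.ext (hv₁ x) (hv₂ x)
  rw [LinearMap.comp_apply, this]
  exact e.symm_apply_apply _

/-- A short exact sequence `0 → Z → M → W → 0` whose first map is a left approximation of `Z` by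
the torsion-free modules that are torsion for the subchain `Z :: E`. -/
structure IsPivotSequence (𝒜 : ModuleClass R) (D E : List (ModCat R)) (φ : Z →ₗ[R] M)
    (β : M →ₗ[R] W) : Prop where
  surjective : Function.Surjective β
  exact : Function.Exact φ β
  chainFree : ChainFree 𝒜 D M
  chainTorsion : ChainTorsion 𝒜 D W
  nontrivial : Nontrivial W
  extendsAlong : ∀ (F : Type) [AddCommGroup F] [Module R F], ChainFree 𝒜 D F →
    ChainTorsion 𝒜 (Z :: E) F → ExtendsAlong φ F

theorem IsSplittingChain.exists_isPivotSequence [IsArtinianRing R] (hR : HasLeftApproximations R)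
    (h𝒜 : IsSerreClass 𝒜) (hD : IsSplittingChain 𝒜 D) (hE : Z :: E <:+ D)
    (hext : ∀ (F : Type) [AddCommGroup F] [Module R F], ChainFree 𝒜 D F → ExtVanishes R F Z)
    {j : Z →ₗ[R] F} (hj : Function.Injective j) (hF : ChainFree 𝒜 D F)
    (hFE : ChainTorsion 𝒜 (Z :: E) F) :
    ∃ (M W : ModCat R) (φ : Z →ₗ[R] M) (β : M →ₗ[R] W), IsPivotSequence 𝒜 D E φ β := by
  have hZ := hD.isSplittingObject hE
  obtain ⟨M, φ, hM, hME, hφ⟩ := hD.exists_approximation_by_newer (E := E) hR h𝒜 hZ.mem.mem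
  have hφF (F : Type) [AddCommGroup F] [Module R F] (hF : ChainFree 𝒜 D F)
      (hFE : ChainTorsion 𝒜 (Z :: E) F) : ExtendsAlong φ F :=
    hD.extendsAlong_of_chainFree h𝒜 hE hφ hF hFE
  have hφinj : Function.Injective φ := by
    obtain ⟨k, hk⟩ := hφF F hF hFE j
    exact fun x y hxy => hj (by rw [← hk, ← hk, hxy])
  let S := LinearMap.range φ
  have hφS : Function.Exact φ S.mkQ := φ.exact_map_mkQ_range
  obtain ⟨F₀, W, hF₀, hW, ⟨e⟩⟩ := hD.exists_equiv_prod h𝒜 (h𝒜.isTorsionClass.quotientModule hM.1 S)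
  let ρ : M →ₗ[R] F₀ := LinearMap.fst R F₀ W ∘ₗ e.toLinearMap ∘ₗ S.mkQ
  let β : M →ₗ[R] W := LinearMap.snd R F₀ W ∘ₗ e.toLinearMap ∘ₗ S.mkQ
  have heφ (x : Z) : e (S.mkQ (φ x)) = 0 := by rw [hφS.apply_apply_eq_zero, map_zero]
  refine ⟨.of R (LinearMap.ker ρ), W,
    φ.codRestrict (LinearMap.ker ρ) fun x => congrArg Prod.fst (heφ x),
    β ∘ₗ (LinearMap.ker ρ).subtype, fun w => ?_, fun y => ⟨fun hy => ?_, ?_⟩,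
    hM.sub h𝒜 _ (LinearMap.ker ρ).injective_subtype, hW, ?_, fun F _ _ hF hFE u => ?_⟩
  · obtain ⟨x, hx⟩ := S.mkQ_surjective (e.symm (0, w))
    have hx' : e (S.mkQ x) = (0, w) := by rw [hx, e.apply_symm_apply]
    exact ⟨⟨x, congrArg Prod.fst hx'⟩, congrArg Prod.snd hx'⟩
  · have hey : e (S.mkQ y) = 0 := Prod.ext y.2 hy
    obtain ⟨x, hx⟩ := (hφS y).1 ((map_eq_zero_iff e e.injective).1 hey)
    exact ⟨x, Subtype.ext hx⟩
  · rintro ⟨x, rfl⟩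
    exact congrArg Prod.snd (heφ x)
  · by_contra hnW
    have : Subsingleton W := not_nontrivial_iff_subsingleton.1 hnW
    have hquot : ChainFree 𝒜 D (M ⧸ S) :=
      (hF₀.prod h𝒜 h𝒜.chainFree_of_subsingleton).equiv h𝒜 e.symm
    obtain ⟨r, hr⟩ := (hext _ hquot).extendsAlong hφinj S.mkQ_surjective hφS LinearMap.id
    have := hZ.nontrivial
    obtain ⟨z, hz⟩ := exists_ne (0 : Z)
    exact hz ((hr z).symm.trans (LinearMap.congr_fun (hME.2 r) (φ z)))
  · obtain ⟨k, hk⟩ := hφF F hF hFE u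
    exact ⟨k ∘ₗ (LinearMap.ker ρ).subtype, hk⟩

theorem IsSplittingObject.homVanishing_of_not_hasSection [IsArtinianRing R] {𝒯 : ModuleClass R}
    (hZ : IsSplittingObject 𝒯 Z) (h𝒯 : IsTorsionClass 𝒯) {d : Z →ₗ[R] P} {p : P →ₗ[R] Y}
    (hp : Function.Surjective p) (hdp : Function.Exact d p) (hsec : ¬ HasSection p)
    (hY : homVanishing 𝒯 Z Y) {q : P →ₗ[R] F} (hq : Function.Surjective q) :
    homVanishing 𝒯 Z F := by
  refine ⟨h𝒯.quotient q hq (h𝒯.extension d p hdp hp hZ.mem hY.1), fun g => ?_⟩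
  have hgqd : g ∘ₗ q ∘ₗ d = 0 := by
    by_contra hne
    have := h𝒯.finite hZ.mem
    let θ := LinearEquiv.ofBijective _ (IsNoetherian.bijective_of_surjective_endomorphism _
      (hZ.hasSection Z hZ.mem _ hne).surjective)
    exact hsec (hasSection_of_retraction hp hdp
      ⟨θ.symm.toLinearMap ∘ₗ g ∘ₗ q, fun x => θ.symm_apply_apply x⟩)
  have hgq : g ∘ₗ q = 0 := eq_zero_of_comp_eq_zero hp hdp hgqd hY.2
  rwa [← LinearMap.cancel_right hq, LinearMap.zero_comp]

/-- The lift `τ` comes from the torsion-free part of `P`, the submodule `L` from its torsion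
part. -/
theorem IsPivotSequence.exists_lift_of_square [IsArtinianRing R] (h𝒜 : IsSerreClass 𝒜)
    (hD : IsSplittingChain 𝒜 D) (hE : Z :: E <:+ D) {φ : Z →ₗ[R] M} {β : M →ₗ[R] W}
    (h : IsPivotSequence 𝒜 D E φ β) (hY : ChainTorsion 𝒜 D Y) {P : Type} [AddCommGroup P]
    [Module R P] (hP : 𝒜 P) {p₁ : P →ₗ[R] M} {p₂ : P →ₗ[R] Y} {f : Y →ₗ[R] W} {d : Z →ₗ[R] P}
    (hp : ∀ z, β (p₁ z) = f (p₂ z)) (hd : ∀ x, p₁ (d x) = φ x) (hp₂ : Function.Surjective p₂)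
    (hdp : Function.Exact d p₂) (hsec : ¬ HasSection p₂) :
    ∃ (τ : M →ₗ[R] Y) (L : Submodule R Y), (∀ x, f (τ x) = β x) ∧ ChainTorsion 𝒜 D L ∧
      (∀ y ∈ L, f y = 0) ∧ ∀ z, τ (φ z) ∈ L := by
  have hZ := hD.isSplittingObject hE
  obtain ⟨F, T, hF, hT, ⟨e⟩⟩ := hD.exists_equiv_prod h𝒜 hP
  let σ : F →ₗ[R] P := e.symm.toLinearMap ∘ₗ LinearMap.inl R F T
  let ι : T →ₗ[R] P := e.symm.toLinearMap ∘ₗ LinearMap.inr R F T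
  let q : P →ₗ[R] F := LinearMap.fst R F T ∘ₗ e.toLinearMap
  have hσι (z : P) : z = σ (q z) + ι (e z).2 := by
    refine e.injective (Eq.symm ((map_add e _ _).trans ?_))
    exact (congrArg₂ (· + ·) (e.apply_symm_apply (q z, 0)) (e.apply_symm_apply (0, (e z).2))).trans
      (Prod.ext (add_zero _) (zero_add _))
  have hp₁ι (t : T) : p₁ (ι t) = 0 := LinearMap.congr_fun (h.chainFree.2 T hT (p₁ ∘ₗ ι)) t
  have hfst : Function.Surjective (LinearMap.fst R F T) := LinearMap.fst_surjective
  have hq : Function.Surjective q := hfst.comp e.surjective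
  obtain ⟨u, hu⟩ := h.extendsAlong F hF (hZ.homVanishing_of_not_hasSection
    (h𝒜.isTorsionClass_chainTorsion E) hp₂ hdp hsec (hY.of_suffix hE) hq) (q ∘ₗ d)
  have hid : p₁ ∘ₗ σ ∘ₗ u - LinearMap.id = 0 := by
    refine eq_zero_of_comp_eq_zero h.surjective h.exact (LinearMap.ext fun x => ?_)
      (h.chainFree.2 W h.chainTorsion)
    have hx : φ x = p₁ (σ (q (d x))) := by
      rw [← hd]
      conv_lhs => rw [hσι (d x), map_add, hp₁ι, add_zero]
    exact sub_eq_zero.2 ((congrArg (fun y => p₁ (σ y)) (hu x)).trans hx.symm)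
  refine ⟨p₂ ∘ₗ σ ∘ₗ u, LinearMap.range (p₂ ∘ₗ ι), fun x => ?_,
    (h𝒜.isTorsionClass_chainTorsion D).quotient _ (p₂ ∘ₗ ι).surjective_rangeRestrict hT, ?_,
    fun z => ⟨-(e (d z)).2, ?_⟩⟩
  · exact (hp _).symm.trans (congrArg β (sub_eq_zero.1 (LinearMap.congr_fun hid x)))
  · rintro _ ⟨t, rfl⟩
    exact (hp _).symm.trans ((congrArg β (hp₁ι t)).trans (map_zero β))
  · have hz : p₂ (σ (q (d z))) + p₂ (ι (e (d z)).2) = 0 := by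
      rw [← map_add, ← hσι, hdp.apply_apply_eq_zero]
    rw [map_neg, LinearMap.comp_apply, ← eq_neg_of_add_eq_zero_left hz]
    exact (congrArg (fun y => p₂ (σ y)) (hu z)).symm

theorem IsPivotSequence.exists_lift_modulo_torsion [IsArtinianRing R] (h𝒜 : IsSerreClass 𝒜)
    (hD : IsSplittingChain 𝒜 D) (hE : Z :: E <:+ D) {φ : Z →ₗ[R] M} {β : M →ₗ[R] W}
    (h : IsPivotSequence 𝒜 D E φ β) (hY : ChainTorsion 𝒜 D Y) {f : Y →ₗ[R] W} (hf : f ≠ 0) :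
    ∃ (τ : M →ₗ[R] Y) (L : Submodule R Y), (∀ x, f (τ x) = β x) ∧ ChainTorsion 𝒜 D L ∧
      (∀ y ∈ L, f y = 0) ∧ ∀ z, τ (φ z) ∈ L := by
  let P := LinearMap.eqLocus (β ∘ₗ LinearMap.fst R M Y) (f ∘ₗ LinearMap.snd R M Y)
  let p₁ : P →ₗ[R] M := LinearMap.fst R M Y ∘ₗ P.subtype
  let p₂ : P →ₗ[R] Y := LinearMap.snd R M Y ∘ₗ P.subtype
  have hp (z : P) : β (p₁ z) = f (p₂ z) := z.2
  let d : Z →ₗ[R] P := (φ.prod 0).codRestrict P fun x =>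
    (h.exact.apply_apply_eq_zero x).trans (map_zero f).symm
  have hp₂ : Function.Surjective p₂ := fun y =>
    let ⟨x, hx⟩ := h.surjective (f y)
    ⟨⟨(x, y), hx⟩, rfl⟩
  have hdp : Function.Exact d p₂ := fun z => ⟨fun hz => by
    obtain ⟨x, hx⟩ := (h.exact (p₁ z)).1 (by rw [hp, hz, map_zero])
    exact ⟨x, Subtype.ext (Prod.ext hx hz.symm)⟩, by rintro ⟨x, rfl⟩; rfl⟩
  have hsec : ¬ HasSection p₂ := fun ⟨s, hs⟩ => hf <| LinearMap.ext fun y => by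
    rw [← hs y, ← hp]
    exact (congrArg β (LinearMap.congr_fun (h.chainFree.2 Y hY (p₁ ∘ₗ s)) y)).trans (map_zero β)
  exact h.exists_lift_of_square h𝒜 hD hE hY
    (h𝒜.submodule (h𝒜.isTorsionClass.prod h.chainFree.1 hY.mem) P) hp (fun _ => rfl) hp₂ hdp hsec

theorem IsPivotSequence.isSplittingObject [IsArtinianRing R] (h𝒜 : IsSerreClass 𝒜)
    (hD : IsSplittingChain 𝒜 D) (hE : Z :: E <:+ D) {φ : Z →ₗ[R] M} {β : M →ₗ[R] W}
    (h : IsPivotSequence 𝒜 D E φ β)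
    (hpres : ∀ (L : Type) [AddCommGroup L] [Module R L], ChainTorsion 𝒜 D L →
      ∃ (K F : ModCat R) (i : K →ₗ[R] F) (p : F →ₗ[R] L),
        IsTorsionFreePresentation 𝒜 D D i p ∧ ChainTorsion 𝒜 (Z :: E) F) :
    IsSplittingObject (ChainTorsion 𝒜 D) W := by
  refine ⟨h.chainTorsion, h.nontrivial, fun Y _ _ hY f hf => ?_⟩
  obtain ⟨τ, L, hτ, hL, hfL, hτL⟩ := h.exists_lift_modulo_torsion h𝒜 hD hE hY hf
  obtain ⟨K, F, i, p, hp, hF⟩ := hpres L hL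
  obtain ⟨g, hg⟩ := (hp.extVanishes Z (hE.subset List.mem_cons_self)).exists_lift hp.injective
    hp.surjective hp.exact ((τ ∘ₗ φ).codRestrict L hτL)
  obtain ⟨v, hv⟩ := h.extendsAlong F hp.chainFree hF g
  obtain ⟨t, ht⟩ := exists_factor_of_surjective h.surjective (τ - L.subtype ∘ₗ p ∘ₗ v)
    fun x hx => by
    obtain ⟨z, rfl⟩ := (h.exact x).1 hx
    have hz : (p (v (φ z)) : Y) = τ (φ z) := by rw [hv, hg]; rfl
    exact sub_eq_zero.2 hz.symm
  refine ⟨t, fun w => ?_⟩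
  obtain ⟨x, rfl⟩ := h.surjective w
  rw [ht, LinearMap.sub_apply, map_sub, hτ]
  exact (congrArg (β x - ·) (hfL _ (p (v x)).2)).trans (sub_zero _)

theorem IsSplittingChain.exists_isSplittingObject [IsArtinianRing R] (hR : IsHomFiniteOverCenter R)
    (h𝒜 : IsSerreClass 𝒜) (hG : IsProgenerator 𝒜 G) (hD : IsSplittingChain 𝒜 D)
    (hGD : ChainFree 𝒜 D G) (hX : ChainTorsion 𝒜 D X) [Nontrivial X] :
    ∃ W, IsSplittingObject (ChainTorsion 𝒜 D) W := by
  obtain ⟨Z, E, hE, hpres, L, K, F, i, p, h, hF, hKZ⟩ := hD.exists_pivot hR h𝒜 hG hGD hX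
  have hext (F : Type) [AddCommGroup F] [Module R F] (hF : ChainFree 𝒜 D F) : ExtVanishes R F Z :=
    hD.extVanishes_of_chainFree h𝒜 (fun Z' hZ' => (h.extVanishes Z' hZ').of_retract_right hKZ) hF
  obtain ⟨f, s, hs⟩ := hKZ
  have hj : Function.Injective (i ∘ₗ s) := h.injective.comp (Function.LeftInverse.injective hs)
  obtain ⟨M, W, φ, β, hφβ⟩ := hD.exists_isPivotSequence hR.hasLeftApproximations h𝒜 hE hext hj
    h.chainFree hF
  exact ⟨W, hφβ.isSplittingObject h𝒜 hD hE hpres⟩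

/-- A splitting chain that admits no nonzero torsion module. -/
def IsCompleteChain (𝒜 : ModuleClass R) (D : List (ModCat R)) : Prop :=
  IsSplittingChain 𝒜 D ∧
    ∀ (X : Type) [AddCommGroup X] [Module R X], ChainTorsion 𝒜 D X → Subsingleton X

theorem IsSplittingChain.exists_isCompleteChain [IsArtinianRing R] (hR : IsHomFiniteOverCenter R)
    (h𝒜 : IsSerreClass 𝒜) (hG : IsProgenerator 𝒜 G) (hΛ : IsTauTiltingFiniteRing R)
    (hD : IsSplittingChain 𝒜 D) (hGD : ChainFree 𝒜 D G) : ∃ D', IsCompleteChain 𝒜 D' := by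
  obtain ⟨n, f, hf⟩ := hΛ
  induction hr : n - D.length using Nat.strong_induction_on generalizing D with
  | _ r ih =>
  by_contra! hcomplete
  obtain ⟨X, _, _, hX, hXnontrivial⟩ : ∃ (X : Type) (_ : AddCommGroup X) (_ : Module R X),
      ChainTorsion 𝒜 D X ∧ Nontrivial X := by
    by_contra! h
    exact hcomplete D ⟨hD, fun X _ _ hX => h X _ _ hX⟩
  obtain ⟨W, hW⟩ := hD.exists_isSplittingObject hR h𝒜 hG hGD hX
  have hlt := (hD.cons hW).length_lt hR.hasLeftApproximations h𝒜 hG hf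
  rw [List.length_cons] at hlt
  obtain ⟨D', hD'⟩ := ih (n - (D.length + 1)) (by omega) (hD.cons hW)
    (hGD.of_suffix (List.suffix_cons W D)) rfl
  exact hcomplete D' hD'

end ChainCompletion

/-! ### Idempotents and the radical of an Artinian ring -/

theorem isUnit_one_sub_mul_comm {x y : R} : IsUnit (1 - x * y) ↔ IsUnit (1 - y * x) := by
  simpa only [spectrum.mem_iff, Units.val_one, map_one, not_iff_not] using
    spectrum.unit_mem_mul_comm (R := ℤ) (a := x) (b := y) (r := 1)

theorem exists_leftInverse_one_sub {x : R} (hx : x ∈ Ring.jacobson R) : ∃ z, z * (1 - x) = 1 := by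
  rw [← Ideal.jacobson_bot, Ideal.mem_jacobson_iff] at hx
  obtain ⟨z, hz⟩ := hx (-1)
  rw [Submodule.mem_bot, sub_eq_zero] at hz
  exact ⟨z, by rw [mul_sub, mul_one, ← hz]; noncomm_ring⟩

theorem mem_jacobson_iff {x : R} : x ∈ Ring.jacobson R ↔ ∀ y, IsUnit (1 - y * x) := by
  refine ⟨fun hx y => ?_, fun h => ?_⟩
  · obtain ⟨z, hz⟩ := exists_leftInverse_one_sub (Ideal.mul_mem_left _ y hx)
    -- `z = 1 - (-z * y) * x` is itself left invertible, so its right inverse is two-sided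
    obtain ⟨z', hz'⟩ := exists_leftInverse_one_sub (Ideal.mul_mem_left _ (-(z * y)) hx)
    have hzz : 1 - -(z * y) * x = z := by rw [← hz]; noncomm_ring
    rw [hzz] at hz'
    obtain rfl : z' = 1 - y * x := left_inv_eq_right_inv hz' hz
    exact ⟨⟨_, z, hz', hz⟩, rfl⟩
  · rw [← Ideal.jacobson_bot, Ideal.mem_jacobson_iff]
    intro y
    obtain ⟨z, hz⟩ := (h (-y)).exists_left_inv
    exact ⟨z, by rw [Submodule.mem_bot, ← hz]; noncomm_ring⟩

theorem exists_not_isNilpotent_mul {x : R} (hx : x ∉ Ring.jacobson R) :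
    ∃ r, ¬ IsNilpotent (r * x) := by
  by_contra! h
  exact hx (mem_jacobson_iff.2 fun y => (h y).isUnit_one_sub)

theorem exists_isIdempotentElem_mul [IsArtinianRing R] {z : R} (hz : ¬ IsNilpotent z) :
    ∃ y, IsIdempotentElem (y * z) ∧ y * z ≠ 0 := by
  -- Fitting's lemma for right multiplication by `z`
  let φ : R →ₗ[R] R := LinearMap.toSpanSingleton R R z
  have hφ : ∀ k y, (φ ^ k) y = y * z ^ k := fun k => by
    induction k with
    | zero => simp
    | succ k ih => intro y; rw [pow_succ', Module.End.mul_apply, ih, pow_succ, ← mul_assoc]; rfl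
  obtain ⟨n, hcompl, hn⟩ :=
    (φ.eventually_isCompl_ker_pow_range_pow.and (Filter.eventually_ge_atTop 1)).exists
  obtain ⟨κ, hκ, _, ⟨y, rfl⟩, hsum⟩ := Submodule.mem_sup.1
    (hcompl.codisjoint.eq_top ▸ Submodule.mem_top : (1 : R) ∈ _ ⊔ _)
  rw [LinearMap.mem_ker, hφ] at hκ
  rw [hφ] at hsum
  set p := z ^ n with hp
  have hκ' : κ = 1 - y * p := eq_sub_of_add_eq hsum
  have hyp : y * p * p = p := by rw [hκ', sub_mul, one_mul, sub_eq_zero] at hκ; exact hκ.symm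
  have hidem : y * p - y * p * (y * p) = 0 := by
    refine Submodule.disjoint_def.1 hcompl.disjoint _ ?_ ⟨y - y * p * y, ?_⟩
    · rw [LinearMap.mem_ker, hφ, ← hp, sub_mul, mul_assoc (y * p) (y * p), hyp, hyp, sub_self]
    · rw [hφ, ← hp, sub_mul, mul_assoc (y * p)]
  have hfactor : y * p = y * z ^ (n - 1) * z := by
    rw [mul_assoc, ← pow_succ, Nat.sub_add_cancel hn]
  refine ⟨y * z ^ (n - 1), hfactor ▸ (sub_eq_zero.1 hidem).symm, fun h0 => hz ⟨n, ?_⟩⟩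
  rw [← hp, ← hyp, hfactor, h0, zero_mul]

theorem IsPrimitiveIdem.eq_of_mul_eq {e p : R} (he : IsPrimitiveIdem R e) (hp : IsIdempotentElem p)
    (hp0 : p ≠ 0) (hep : e * p = p) (hpe : p * e = p) : p = e := by
  obtain ⟨hee, -, hindec⟩ := he
  have hcompl : IsIdempotentElem (e - p) := by
    rw [IsIdempotentElem, mul_sub, sub_mul, sub_mul, hee.eq, hpe, hep, hp.eq, sub_self, sub_zero]
  have hor := hindec p (e - p) hp hcompl (by rw [mul_sub, hpe, hp.eq, sub_self])
    (by rw [sub_mul, hep, hp.eq, sub_self]) (add_sub_cancel _ _)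
  exact (sub_eq_zero.1 (hor.resolve_left hp0)).symm

theorem IsPrimitiveIdem.exists_mul_eq [IsArtinianRing R] {e x : R} (he : IsPrimitiveIdem R e)
    (hxe : x * e = x) (hx : x ∉ Ring.jacobson R) : ∃ r, r * x = e := by
  obtain ⟨s, hs⟩ := exists_not_isNilpotent_mul hx
  obtain ⟨y, hidem, hne⟩ := exists_isIdempotentElem_mul hs
  set p := y * (s * x) with hp
  have hpe : p * e = p := by rw [hp, mul_assoc, mul_assoc, hxe]
  have hep : e * (e * p) = e * p := by rw [← mul_assoc, he.1.eq]
  refine ⟨e * y * s, ?_⟩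
  calc e * y * s * x = e * p := by simp only [hp, mul_assoc]
    _ = e := he.eq_of_mul_eq (by rw [IsIdempotentElem, mul_assoc, ← mul_assoc p, hpe, hidem.eq])
      (fun h0 => hne (by rw [← hidem.eq]; nth_rw 1 [← hpe]; rw [mul_assoc, h0, mul_zero]))
      hep (by rw [mul_assoc, hpe])

theorem IsPrimitiveIdem.op {e : R} (he : IsPrimitiveIdem R e) :
    IsPrimitiveIdem Rᵐᵒᵖ (MulOpposite.op e) := by
  obtain ⟨hee, he0, hindec⟩ := he
  refine ⟨congrArg MulOpposite.op hee, fun h => he0 (MulOpposite.op_injective h), ?_⟩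
  intro p q hp hq hpq hqp hpqe
  exact (hindec p.unop q.unop (congrArg MulOpposite.unop hp) (congrArg MulOpposite.unop hq)
    (congrArg MulOpposite.unop hqp) (congrArg MulOpposite.unop hpq)
    (congrArg MulOpposite.unop hpqe)).imp (fun h => MulOpposite.unop_injective h)
    (fun h => MulOpposite.unop_injective h)

/-- Murray–von Neumann equivalence. For idempotents it says that `R e` and `R f` are isomorphic. -/
def IdempotentEquivalent (e f : R) : Prop :=
  ∃ x y, x * y = e ∧ y * x = f

theorem IdempotentEquivalent.symm {e f : R} :
    IdempotentEquivalent e f → IdempotentEquivalent f e :=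
  fun ⟨x, y, hxy, hyx⟩ => ⟨y, x, hyx, hxy⟩

theorem IdempotentEquivalent.trans {e f g : R} (he : IsIdempotentElem e) (hg : IsIdempotentElem g) :
    IdempotentEquivalent e f → IdempotentEquivalent f g → IdempotentEquivalent e g := by
  rintro ⟨x, y, rfl, hyx⟩ ⟨z, t, hzt, rfl⟩
  refine ⟨x * z, t * y, ?_, ?_⟩
  · calc x * z * (t * y) = x * (z * t) * y := by simp only [mul_assoc]
      _ = x * y * (x * y) := by rw [hzt, ← hyx]; simp only [mul_assoc]
      _ = x * y := he
  · calc t * y * (x * z) = t * (y * x) * z := by simp only [mul_assoc]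
      _ = t * z * (t * z) := by rw [hyx, ← hzt]; simp only [mul_assoc]
      _ = t * z := hg

theorem IdempotentEquivalent.exists_eq_mul_mul {e f : R} (he : IsIdempotentElem e) :
    IdempotentEquivalent e f → ∃ s t, e = s * f * t := by
  rintro ⟨x, y, rfl, rfl⟩
  exact ⟨x, y, by rw [← mul_assoc x, mul_assoc, he.eq]⟩

theorem IsPrimitiveIdem.idempotentEquivalent [IsArtinianRing R] {e f r : R}
    (he : IsPrimitiveIdem R e) (hf : IsPrimitiveIdem R f) (hr : e * r * f ∉ Ring.jacobson R) :
    IdempotentEquivalent e f := by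
  obtain ⟨t, ht⟩ := hf.exists_mul_eq (by rw [mul_assoc, hf.1.eq]) hr
  set x := e * r * f with hx
  have hex : e * x = x := by rw [hx, ← mul_assoc, ← mul_assoc, he.1.eq]
  have hxf : x * f = x := by rw [hx, mul_assoc, hf.1.eq]
  have hyx : f * t * e * x = f := by rw [mul_assoc, hex, mul_assoc, ht, hf.1.eq]
  set y := f * t * e with hy
  have hye : y * e = y := by rw [hy, mul_assoc, he.1.eq]
  have hxy : x * y * x = x := by rw [mul_assoc, hyx, hxf]
  refine ⟨x, y, he.eq_of_mul_eq ?_ (fun h0 => hf.2.1 ?_) ?_ ?_, hyx⟩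
  · rw [IsIdempotentElem, ← mul_assoc, hxy]
  · rw [← hyx, ← hxy, h0, zero_mul, mul_zero]
  · rw [← mul_assoc, hex]
  · rw [mul_assoc, hye]

section Nakayama

variable {M : Type*} [AddCommGroup M] [Module R M]

theorem le_of_le_sup_jacobson_smul {N L : Submodule R M} (hN : N.FG)
    (h : N ≤ L ⊔ Ring.jacobson R • N) : N ≤ L := by
  have hmap : N.map L.mkQ ≤ Ring.jacobson R • N.map L.mkQ := by
    rw [← Submodule.map_smul'']
    refine (Submodule.map_mono h).trans (le_of_eq ?_)
    rw [Submodule.map_sup, Submodule.mkQ_map_self, bot_sup_eq]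
  rw [← L.ker_mkQ, LinearMap.le_ker_iff_map]
  exact (hN.map _).eq_bot_of_le_jacobson_smul hmap

end Nakayama

section NilpotentIdeal

variable {J : Ideal R} [J.IsTwoSided] {S : NonUnitalSubsemiring R}

theorem exists_mem_pow_sub_mem_pow_succ (hS : ∀ x, ∃ b ∈ S, x - b ∈ J)
    (hSJ : ∀ x ∈ J, ∃ b ∈ S, b ∈ J ∧ x - b ∈ J ^ 2) (k : ℕ) :
    ∀ x ∈ J ^ k, ∃ b ∈ S, b ∈ J ^ k ∧ x - b ∈ J ^ (k + 1) := by
  induction k with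
  | zero =>
    intro x _
    obtain ⟨b, hb, hxb⟩ := hS x
    exact ⟨b, hb, by simp only [Submodule.pow_zero, Ideal.one_eq_top, Submodule.mem_top],
      by rwa [zero_add, Submodule.pow_one]⟩
  | succ k ih =>
    intro x hx
    rw [Ideal.IsTwoSided.pow_succ] at hx
    induction hx using Submodule.mul_induction_on' with
    | mem_mul_mem y hy z hz =>
      obtain ⟨c, hcS, hc, hzc⟩ := ih z hz
      obtain ⟨b, hbS, hb, hyb⟩ := hSJ y hy
      refine ⟨b * c, S.mul_mem hbS hcS, ?_, ?_⟩
      · rw [Ideal.IsTwoSided.pow_succ]; exact Ideal.mul_mem_mul hb hc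
      · have hsplit : y * z - b * c = b * (z - c) + (y - b) * z := by noncomm_ring
        rw [hsplit]
        refine Ideal.add_mem _ ?_ ?_
        · rw [Ideal.IsTwoSided.pow_succ]; exact Ideal.mul_mem_mul hb hzc
        · rw [show k + 1 + 1 = 2 + k by omega, Ideal.IsTwoSided.pow_add]
          exact Ideal.mul_mem_mul hyb hz
    | add y _ z _ hy hz =>
      obtain ⟨b, hbS, hb, hyb⟩ := hy
      obtain ⟨c, hcS, hc, hzc⟩ := hz
      exact ⟨b + c, S.add_mem hbS hcS, Ideal.add_mem _ hb hc,
        add_sub_add_comm y z b c ▸ Ideal.add_mem _ hyb hzc⟩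

theorem mem_of_forall_exists_sub_mem (hJ : IsNilpotent J) (hS : ∀ x, ∃ b ∈ S, x - b ∈ J)
    (hSJ : ∀ x ∈ J, ∃ b ∈ S, b ∈ J ∧ x - b ∈ J ^ 2) (r : R) : r ∈ S := by
  have happrox : ∀ k, ∃ b ∈ S, r - b ∈ J ^ k := by
    intro k
    induction k with
    | zero =>
      exact ⟨0, S.zero_mem, by simp only [Submodule.pow_zero, Ideal.one_eq_top, Submodule.mem_top]⟩
    | succ k ih =>
      obtain ⟨b, hb, hrb⟩ := ih
      obtain ⟨c, hc, -, hrc⟩ := exists_mem_pow_sub_mem_pow_succ hS hSJ k _ hrb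
      exact ⟨b + c, S.add_mem hb hc, by rwa [← sub_sub]⟩
  obtain ⟨N, hN⟩ := hJ
  obtain ⟨b, hb, hrb⟩ := happrox N
  rw [hN, Submodule.zero_eq_bot, Submodule.mem_bot, sub_eq_zero] at hrb
  exact hrb ▸ hb

end NilpotentIdeal

section Independent

variable {ι : Type*} {M X : Type*} [AddCommGroup M] [Module R M] [AddCommGroup X] [Module R X]

theorem eq_zero_of_iSupIndep {p : ι → Submodule R M} (hp : iSupIndep p)
    (hX : ∀ i, ∀ f : X →ₗ[R] p i, f = 0) (f : X →ₗ[R] M) (hf : ∀ x, f x ∈ ⨆ i, p i) : f = 0 := by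
  classical
  let Φ := DFinsupp.lsum ℕ fun i => (p i).subtype
  have hΦ : Function.Injective Φ := hp.dfinsupp_lsum_injective
  choose a ha using fun x => (Submodule.mem_iSup_iff_exists_dfinsupp _ _).1 (hf x)
  let g : X →ₗ[R] Π₀ i, p i :=
    { toFun := a
      map_add' := fun x y => hΦ (by rw [map_add]; simp only [Φ, ha, map_add])
      map_smul' := fun r x => hΦ (by rw [map_smul]; simp only [Φ, ha, map_smul, RingHom.id_apply]) }
  ext x
  have hgx : a x = 0 := by
    ext i
    exact congrArg Subtype.val (LinearMap.congr_fun (hX i (DFinsupp.lapply i ∘ₗ g)) x)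
  rw [← ha, hgx, map_zero, LinearMap.zero_apply]

end Independent

/-! ### Branches of a directed forest -/

section Branch

variable {V : Type*} {G H : SimpleGraph V} {Edge : V → V → Prop} {C S : Finset V} {y c c' : V}

theorem eq_of_reachable_of_isAcyclic (hG : G.IsAcyclic) (hHG : H ≤ G) (hy : ∀ v, ¬ H.Adj y v)
    (hc : G.Adj y c) (hc' : G.Adj y c') (hreach : H.Reachable c' c) : c' = c := by
  by_contra hne
  have hbridge := SimpleGraph.isBridge_iff.1 (SimpleGraph.isAcyclic_iff_forall_adj_isBridge.1 hG hc)
  refine hbridge (SimpleGraph.Reachable.trans (SimpleGraph.Adj.reachable ?_) (hreach.mono ?_))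
  · rw [SimpleGraph.deleteEdges_adj, Set.mem_singleton_iff, Sym2.congr_right]
    exact ⟨hc', hne⟩
  · intro u w huw
    rw [SimpleGraph.deleteEdges_adj, Set.mem_singleton_iff, Sym2.eq_iff]
    refine ⟨hHG huw, ?_⟩
    rintro (⟨rfl, -⟩ | ⟨-, rfl⟩)
    exacts [hy _ huw, hy _ huw.symm]

/-- `S` is a branch of the directed graph on `C`, hanging on its remainder by the single edge
`y ⟶ c`: no edge within `C` leaves `S`, and no other edge within `C` enters it. -/
structure IsBranch (Edge : V → V → Prop) (C S : Finset V) (y c : V) : Prop where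
  subset : S ⊆ C
  base_notMem : y ∉ S
  root_mem : c ∈ S
  mem_of_edge {u w : V} : Edge u w → u ∈ S → w ∈ C → w ∈ S
  eq_of_edge {u w : V} : Edge u w → u ∈ C → u ∉ S → w ∈ S → u = y ∧ w = c

theorem IsBranch.ssubset (h : IsBranch Edge C S y c) (hy : y ∈ C) : S ⊂ C :=
  ⟨h.subset, fun hCS => h.base_notMem (hCS hy)⟩

/-- Pairwise disjoint branches of the directed graph on `C`, one for each edge of `C`
leaving `y`. -/
structure IsBranchSystem (Edge : V → V → Prop) (C : Finset V) (y : V) (S : V → Finset V) :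
    Prop where
  isBranch {c : V} : c ∈ C → Edge y c → IsBranch Edge C (S c) y c
  disjoint {c c' : V} : Edge y c → Edge y c' → c ≠ c' → Disjoint (S c) (S c')

theorem exists_isBranchSystem (hG : (SimpleGraph.fromRel Edge).IsAcyclic)
    (hasymm : ∀ u w, Edge u w → ¬ Edge w u) (C : Finset V) (y : V) :
    ∃ S, IsBranchSystem Edge C y S := by
  classical
  let G := SimpleGraph.fromRel Edge
  let H := ((⊤ : G.Subgraph).induce (C.erase y)).spanningCoe
  have hG_adj : ∀ {u w}, Edge u w → G.Adj u w := fun {u w} h =>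
    (SimpleGraph.fromRel_adj _ _ _).2 ⟨fun he => hasymm u w h (he ▸ he ▸ h), Or.inl h⟩
  have hH : ∀ {u w}, H.Adj u w ↔ u ∈ C.erase y ∧ w ∈ C.erase y ∧ G.Adj u w := by
    simp only [H, SimpleGraph.Subgraph.spanningCoe_adj, SimpleGraph.Subgraph.induce_adj,
      SimpleGraph.Subgraph.top_adj, Finset.mem_coe, implies_true]
  have hcomponent : ∀ {c c'}, G.Adj y c → G.Adj y c' → H.Reachable c' c → c' = c :=
    eq_of_reachable_of_isAcyclic hG (fun u w h => (hH.1 h).2.2)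
      (fun v h => Finset.notMem_erase y C (hH.1 h).1)
  let S : V → Finset V := fun c => (C.erase y).filter (H.Reachable c)
  have hS : ∀ {c v}, v ∈ S c ↔ v ∈ C.erase y ∧ H.Reachable c v := Finset.mem_filter
  have hclosed : ∀ {c u w}, u ∈ S c → w ∈ C.erase y → G.Adj u w → w ∈ S c := fun hu hw h =>
    hS.2 ⟨hw, (hS.1 hu).2.trans (hH.2 ⟨(hS.1 hu).1, hw, h⟩).reachable⟩
  refine ⟨S, fun {c} hc hyc => ⟨fun v hv => Finset.mem_of_mem_erase (hS.1 hv).1,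
    fun hy => Finset.notMem_erase y C (hS.1 hy).1,
    hS.2 ⟨Finset.mem_erase.2 ⟨(hG_adj hyc).ne', hc⟩, .refl c⟩, fun {u w} h hu hw => ?_,
    fun {u w} h hu huS hw => ?_⟩, fun hc hc' hne => Finset.disjoint_left.2 fun v hv hv' =>
      hne (hcomponent (hG_adj hc') (hG_adj hc) ((hS.1 hv).2.trans (hS.1 hv').2.symm))⟩
  · by_cases hwy : w = y
    · subst hwy
      obtain rfl := hcomponent (hG_adj h).symm (hG_adj hyc) (hS.1 hu).2
      exact absurd h (hasymm _ _ hyc)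
    · exact hclosed hu (Finset.mem_erase.2 ⟨hwy, hw⟩) (hG_adj h)
  · by_cases huy : u = y
    · subst huy
      exact ⟨rfl, (hcomponent (hG_adj h) (hG_adj hyc) (hS.1 hw).2).symm⟩
    · exact absurd (hclosed hw (Finset.mem_erase.2 ⟨huy, hu⟩) (hG_adj h).symm) huS

end Branch

/-! ### Forest presentations -/

section ForestPresentation

/-- A description of `R`, up to the square of its radical, by a directed forest. The blocks `η v`
are orthogonal idempotents with sum `1`, the block `η v` is generated by the primitive idempotent
`ε v`, and an edge `u ⟶ w` stands for a single generator `arrow w u` of `ε w * rad R * ε u` modulo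
`(rad R) ^ 2`; between distinct blocks without an edge `rad R` is contained in `(rad R) ^ 2`.
Blocks rather than primitive idempotents are used so that `R` need not be basic. -/
structure ForestPresentation (R : Type) [Ring R] (V : Type) [Fintype V] where
  η : V → R
  ε : V → R
  arrow : V → V → R
  Edge : V → V → Prop
  completeOrthogonal : CompleteOrthogonalIdempotents η
  isPrimitiveIdem : ∀ v, IsPrimitiveIdem R (ε v)
  η_mul_ε : ∀ v, η v * ε v = ε v
  η_mem_closure : ∀ v, η v ∈ AddSubmonoid.closure {z | ∃ s t, z = s * ε v * t}
  mem_jacobson : ∀ u w, u ≠ w → ∀ r, η w * r * η u ∈ Ring.jacobson R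
  mem_jacobson_sq : ∀ u w, ¬ Edge u w → ∀ r ∈ Ring.jacobson R, η w * r * η u ∈ Ring.jacobson R ^ 2
  ε_mul_arrow : ∀ w u, ε w * arrow w u = arrow w u
  arrow_mul_ε : ∀ w u, arrow w u * ε u = arrow w u
  exists_sub_mem : ∀ u w, Edge u w → ∀ r ∈ Ring.jacobson R,
    ∃ c, ε w * r * ε u - c * arrow w u ∈ Ring.jacobson R ^ 2
  edge_asymm : ∀ u w, Edge u w → ¬ Edge w u
  isAcyclic : (SimpleGraph.fromRel Edge).IsAcyclic

namespace ForestPresentation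

variable {V : Type} [Fintype V] (T : ForestPresentation R V)

theorem η_mul_η_of_ne {v w : V} (h : v ≠ w) : T.η v * T.η w = 0 :=
  T.completeOrthogonal.ortho h

theorem η_mul_η_self (v : V) : T.η v * T.η v = T.η v :=
  T.completeOrthogonal.idem v

theorem ε_mul_ε (v : V) : T.ε v * T.ε v = T.ε v :=
  (T.isPrimitiveIdem v).1

theorem η_mul_arrow (w u : V) : T.η w * T.arrow w u = T.arrow w u := by
  rw [← T.ε_mul_arrow, ← mul_assoc, T.η_mul_ε]

theorem sum_η_mul (r : R) : ∑ w, T.η w * r = r := by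
  rw [← Finset.sum_mul, T.completeOrthogonal.complete, one_mul]

theorem sum_mul_η (r : R) : ∑ u, r * T.η u = r := by
  rw [← Finset.mul_sum, T.completeOrthogonal.complete, mul_one]

theorem exists_mem_sub_mem (B : AddSubmonoid R) (I : Ideal R) (r : R)
    (h : ∀ w u, ∃ b ∈ B, T.η w * r * T.η u - b ∈ I) : ∃ b ∈ B, r - b ∈ I := by
  choose b hb hbI using h
  refine ⟨∑ w, ∑ u, b w u, sum_mem fun w _ => sum_mem fun u _ => hb w u, ?_⟩
  have hr : r = ∑ w, ∑ u, T.η w * r * T.η u := by simp only [T.sum_mul_η, T.sum_η_mul]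
  rw [hr, ← Finset.sum_sub_distrib]
  simp only [← Finset.sum_sub_distrib]
  exact sum_mem fun w _ => sum_mem fun u _ => hbI w u

theorem exists_η_mul_sub_mem {u w : V} (hE : T.Edge u w) {r : R} (hr : r ∈ Ring.jacobson R) :
    ∃ c, T.η w * r * T.ε u - c * T.arrow w u ∈ Ring.jacobson R ^ 2 := by
  refine AddSubmonoid.closure_induction
    (motive := fun z _ => ∃ c, z * r * T.ε u - c * T.arrow w u ∈ Ring.jacobson R ^ 2)
    ?_ ⟨0, by simp only [zero_mul, sub_self, zero_mem]⟩ ?_ (T.η_mem_closure w)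
  · rintro _ ⟨s, t, rfl⟩
    obtain ⟨c, hc⟩ := T.exists_sub_mem u w hE (t * r) (Ideal.mul_mem_left _ _ hr)
    refine ⟨s * c, ?_⟩
    have hfactor : s * T.ε w * t * r * T.ε u - s * c * T.arrow w u =
        s * (T.ε w * (t * r) * T.ε u - c * T.arrow w u) := by
      simp only [mul_sub, mul_assoc]
    rw [hfactor]
    exact Ideal.mul_mem_left _ s hc
  · rintro a b - - ⟨c, hc⟩ ⟨d, hd⟩
    refine ⟨c + d, ?_⟩
    rw [add_mul, add_mul, add_mul, add_sub_add_comm]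
    exact add_mem hc hd

variable [IsArtinianRing R]

theorem induction {P : R → Prop} (zero : P 0) (add : ∀ x y, P x → P y → P (x + y))
    (mul : ∀ x y, P x → P y → P (x * y)) (loop : ∀ v r, P (T.η v * r * T.η v))
    (edge : ∀ u w, T.Edge u w → ∀ r ∈ Ring.jacobson R, P (T.η w * r * T.η u)) (r : R) : P r := by
  let S : NonUnitalSubsemiring R :=
    { carrier := {x | P x}, zero_mem' := zero, add_mem' := add _ _, mul_mem' := mul _ _ }
  refine mem_of_forall_exists_sub_mem (IsSemiprimaryRing.isNilpotent (R := R)) (S := S)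
    (fun x => T.exists_mem_sub_mem S.toAddSubmonoid _ x fun w u => ?_) (fun x hx => ?_) r
  · by_cases hwu : u = w
    · subst hwu
      exact ⟨_, loop u x, by rw [sub_self]; exact zero_mem _⟩
    · exact ⟨0, zero, by rw [sub_zero]; exact T.mem_jacobson u w hwu x⟩
  · suffices h : ∃ b ∈ S.toAddSubmonoid ⊓ (Ring.jacobson R).toAddSubmonoid,
        x - b ∈ Ring.jacobson R ^ 2 from
      let ⟨b, ⟨hbS, hbJ⟩, hxb⟩ := h
      ⟨b, hbS, hbJ, hxb⟩
    refine T.exists_mem_sub_mem _ _ x fun w u => ?_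
    have hmem : T.η w * x * T.η u ∈ Ring.jacobson R :=
      Ideal.mul_mem_right _ _ (Ideal.mul_mem_left _ _ hx)
    by_cases hwu : u = w
    · subst hwu
      exact ⟨_, ⟨loop u x, hmem⟩, by rw [sub_self]; exact zero_mem _⟩
    by_cases hE : T.Edge u w
    · exact ⟨_, ⟨edge u w hE x hx, hmem⟩, by rw [sub_self]; exact zero_mem _⟩
    · exact ⟨0, zero_mem _, by rw [sub_zero]; exact T.mem_jacobson_sq u w hE x hx⟩

theorem mul_ε_mem_span (u : V) {r : R} (hr : r ∈ Ring.jacobson R) :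
    r * T.ε u ∈ Submodule.span R {z | ∃ w, T.Edge u w ∧ z = T.arrow w u} := by
  let L := Submodule.span R {z | ∃ w, T.Edge u w ∧ z = T.arrow w u}
  let N := Submodule.map (LinearMap.toSpanSingleton R R (T.ε u)) (Ring.jacobson R)
  have mem_N : ∀ x ∈ Ring.jacobson R, x * T.ε u ∈ N := fun x hx => Submodule.mem_map_of_mem hx
  have mul_ε_mem : ∀ x ∈ Ring.jacobson R ^ 2, x * T.ε u ∈ Ring.jacobson R • N := by
    intro x hx
    rw [Ideal.IsTwoSided.pow_succ, Submodule.pow_one] at hx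
    refine Submodule.mul_induction_on hx (fun a ha b hb => ?_) fun a b ha hb => ?_
    · rw [mul_assoc]
      exact Submodule.smul_mem_smul ha (mem_N b hb)
    · rw [add_mul]
      exact add_mem ha hb
  refine le_of_le_sup_jacobson_smul (N := N) (L := L) (IsNoetherian.noetherian N) ?_ (mem_N r hr)
  rintro _ ⟨x, hx, rfl⟩
  change x * T.ε u ∈ L ⊔ Ring.jacobson R • N
  rw [← T.sum_η_mul (x * T.ε u)]
  refine sum_mem fun w _ => ?_
  rw [← mul_assoc]
  by_cases hE : T.Edge u w
  · obtain ⟨c, hc⟩ := T.exists_η_mul_sub_mem hE hx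
    have hsplit : T.η w * x * T.ε u =
        c * T.arrow w u + (T.η w * x * T.ε u - c * T.arrow w u) * T.ε u := by
      simp only [sub_mul, mul_assoc, T.ε_mul_ε, T.arrow_mul_ε, add_sub_cancel]
    rw [hsplit]
    exact add_mem (Submodule.mem_sup_left (L.smul_mem c (Submodule.subset_span ⟨w, hE, rfl⟩)))
      (Submodule.mem_sup_right (mul_ε_mem _ hc))
  · have hmem := mul_ε_mem _ (T.mem_jacobson_sq u w hE x hx)
    rw [mul_assoc, T.η_mul_ε] at hmem
    exact Submodule.mem_sup_right hmem

end ForestPresentation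

end ForestPresentation

/-! ### Modules supported on a set of vertices -/

section SupportedModules

variable {V : Type} {η : V → R} {C S : Finset V} {X Y : Type} [AddCommGroup X] [Module R X]
  [AddCommGroup Y] [Module R Y]

/-- The finitely generated modules on which the elements `η v` with `v ∉ C` act by zero. -/
def SupportedOn (η : V → R) (C : Finset V) : ModuleClass R := fun X _ _ =>
  Module.Finite R X ∧ ∀ v ∉ C, ∀ x : X, η v • x = 0

theorem SupportedOn.mono (hX : SupportedOn η S X) (hSC : S ⊆ C) : SupportedOn η C X :=
  ⟨hX.1, fun v hv => hX.2 v fun h => hv (hSC h)⟩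

theorem isSerreClass_supportedOn [IsArtinianRing R] (hη : ∀ v, IsIdempotentElem (η v)) :
    IsSerreClass (SupportedOn η C) where
  finite hA := hA.1
  zero := ⟨inferInstance, fun _ _ _ => rfl⟩
  middle {A B Z} _ _ _ _ _ _ i p hip hA hZ := by
    have := hA.1
    have := hZ.1
    refine ⟨⟨Submodule.fg_of_fg_map_of_fg_inf_ker p (IsNoetherian.noetherian _) ?_⟩,
      fun v hv x => ?_⟩
    · rw [top_inf_eq, LinearMap.exact_iff.1 hip]
      exact Module.Finite.iff_fg.1 inferInstance
    · obtain ⟨a, ha⟩ := (hip (η v • x)).1 (by rw [map_smul, hZ.2 v hv])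
      rw [← hη v, mul_smul, ← ha, ← map_smul, hA.2 v hv, map_zero]

/-- The largest quotient of the regular module that is supported on `C`. -/
abbrev SupportQuotient (η : V → R) (C : Finset V) : Type :=
  R ⧸ Submodule.span R {z | ∃ v ∉ C, ∃ r, z = η v * r}

namespace SupportQuotient

/-- The class of `r` in the largest quotient of the regular module supported on `C`. -/
def proj (η : V → R) (C : Finset V) : R →ₗ[R] SupportQuotient η C :=
  Submodule.mkQ _

theorem proj_surjective : Function.Surjective (proj η C) :=
  Submodule.mkQ_surjective _

theorem proj_mul (r s : R) : proj η C (r * s) = r • proj η C s :=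
  map_smul _ r s

theorem supportedOn : SupportedOn η C (SupportQuotient η C) := by
  refine ⟨inferInstance, fun v hv x => ?_⟩
  obtain ⟨r, rfl⟩ := proj_surjective x
  rw [← proj_mul]
  exact (Submodule.Quotient.mk_eq_zero _).2 (Submodule.subset_span ⟨v, hv, r, rfl⟩)

/-- The linear map from `SupportQuotient η C` that sends the class of `1` to `x`. -/
def lift (hX : SupportedOn η C X) (x : X) : SupportQuotient η C →ₗ[R] X :=
  Submodule.liftQ _ (LinearMap.toSpanSingleton R X x) (by
    rw [Submodule.span_le]
    rintro _ ⟨v, hv, r, rfl⟩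
    rw [SetLike.mem_coe, LinearMap.mem_ker, LinearMap.toSpanSingleton_apply, mul_smul,
      hX.2 v hv])

theorem lift_proj (hX : SupportedOn η C X) (x : X) (r : R) : lift hX x (proj η C r) = r • x := rfl

theorem isProgenerator : IsProgenerator (SupportedOn η C) (SupportQuotient η C) where
  mem := supportedOn
  exists_surjective X _ _ hX := by
    have := hX.1
    obtain ⟨m, s, hs⟩ := Module.Finite.exists_fin (R := R) (M := X)
    refine ⟨m, LinearMap.lsum R (fun _ => SupportQuotient η C) ℕ fun i => lift hX (s i), ?_⟩
    rw [← LinearMap.range_eq_top, eq_top_iff, ← hs, Submodule.span_le]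
    rintro _ ⟨i, rfl⟩
    refine ⟨Pi.single i (proj η C 1), ?_⟩
    rw [LinearMap.lsum_piSingle, lift_proj, one_smul]
  hasSection f hX hf := by
    obtain ⟨x, hx⟩ := hf (proj η C 1)
    refine ⟨lift hX x, fun q => ?_⟩
    obtain ⟨r, rfl⟩ := proj_surjective q
    rw [lift_proj, map_smul, hx, ← proj_mul, mul_one]

end SupportQuotient

end SupportedModules

/-! ### The arrow modules of a forest presentation -/

namespace ForestPresentation

open SupportQuotient

variable {V : Type} [Fintype V] (T : ForestPresentation R V) {C S : Finset V} {y c : V}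
  {X Y : Type} [AddCommGroup X] [Module R X] [AddCommGroup Y] [Module R Y]

theorem isSerreClass_supportedOn [IsArtinianRing R] (C : Finset V) :
    IsSerreClass (SupportedOn T.η C) :=
  PaperSilting.isSerreClass_supportedOn T.η_mul_η_self

theorem eq_zero_of_forall_smul_eq_zero {x : X} (hx : ∀ v, T.η v • x = 0) : x = 0 := by
  rw [← one_smul R x, ← T.completeOrthogonal.complete, Finset.sum_smul]
  exact Finset.sum_eq_zero fun v _ => hx v

/-- The elements of `X` supported on a branch `S`. They form a submodule because no edge within
`C` leaves `S`. -/
def supportedPart [IsArtinianRing R] (hS : IsBranch T.Edge C S y c) (hX : SupportedOn T.η C X) :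
    Submodule R X where
  carrier := {x | ∀ v ∉ S, T.η v • x = 0}
  zero_mem' v _ := smul_zero _
  add_mem' {x z} hx hz v hv := by rw [smul_add, hx v hv, hz v hv, add_zero]
  smul_mem' r := by
    refine T.induction (P := fun r => ∀ {x : X}, (∀ v ∉ S, T.η v • x = 0) →
      ∀ v ∉ S, T.η v • r • x = 0) ?_ ?_ ?_ ?_ ?_ r
    · intro x _ v _
      rw [zero_smul, smul_zero]
    · intro p q hp hq x hx v hv
      rw [add_smul, smul_add, hp hx v hv, hq hx v hv, add_zero]
    · intro p q hp hq x hx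
      rw [mul_smul]
      exact hp (hq hx)
    · intro u r x hx v hv
      by_cases hvu : v = u
      · rw [mul_smul, hx u (hvu ▸ hv), smul_zero, smul_zero]
      · rw [← mul_smul, mul_assoc, ← mul_assoc, T.η_mul_η_of_ne hvu, zero_mul, zero_smul]
    · intro u w hE r _ x hx v hv
      by_cases hvw : v = w
      · by_cases hu : u ∈ S
        · rw [mul_assoc, mul_smul, hX.2 w fun hw => (hvw ▸ hv) (hS.mem_of_edge hE hu hw), smul_zero]
        · rw [mul_smul, hx u hu, smul_zero, smul_zero]
      · rw [← mul_smul, mul_assoc, ← mul_assoc, T.η_mul_η_of_ne hvw, zero_mul, zero_smul]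

theorem supportedOn_supportedPart [IsArtinianRing R] (hS : IsBranch T.Edge C S y c)
    (hX : SupportedOn T.η C X) : SupportedOn T.η S (T.supportedPart hS hX) := by
  have := hX.1
  exact ⟨inferInstance, fun v hv x => Subtype.ext (x.2 v hv)⟩

/-- The submodule of `SupportQuotient T.η C` generated by the arrow `y ⟶ c`. -/
def arrowModule (C : Finset V) (y c : V) : Submodule R (SupportQuotient T.η C) :=
  Submodule.span R {proj T.η C (T.arrow c y)}

theorem proj_arrow_mem (C : Finset V) (y c : V) : proj T.η C (T.arrow c y) ∈ T.arrowModule C y c :=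
  Submodule.mem_span_singleton_self _

theorem arrowModule_le_supportedPart [IsArtinianRing R] (hS : IsBranch T.Edge C S y c) :
    T.arrowModule C y c ≤ T.supportedPart hS supportedOn := by
  refine (Submodule.span_singleton_le_iff_mem _ _).2 fun v hv => ?_
  have hvc : v ≠ c := fun h => hv (h ▸ hS.root_mem)
  rw [← T.η_mul_arrow, ← proj_mul, ← mul_assoc, T.η_mul_η_of_ne hvc, zero_mul, map_zero]

theorem supportedOn_arrowModule [IsArtinianRing R] (hS : IsBranch T.Edge C S y c) :
    SupportedOn T.η S (T.arrowModule C y c) :=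
  ⟨inferInstance, fun v hv x => Subtype.ext (T.arrowModule_le_supportedPart hS x.2 v hv)⟩

theorem proj_mul_ε_mem_iSup [IsArtinianRing R] (C : Finset V) (y : V) {j : R}
    (hj : j ∈ Ring.jacobson R) :
    proj T.η C (j * T.ε y) ∈ ⨆ w : {w // w ∈ C ∧ T.Edge y w}, T.arrowModule C y w := by
  have hmem := Submodule.mem_map_of_mem (f := proj T.η C) (T.mul_ε_mem_span y hj)
  rw [Submodule.map_span] at hmem
  refine Submodule.span_le.2 ?_ hmem
  rintro _ ⟨_, ⟨w, hw, rfl⟩, rfl⟩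
  by_cases hwC : w ∈ C
  · exact Submodule.mem_iSup_of_mem ⟨w, hwC, hw⟩ (T.proj_arrow_mem C y w)
  · rw [SetLike.mem_coe, ← T.η_mul_arrow, proj_mul, supportedOn.2 w hwC]
    exact zero_mem _

variable {B : V → Finset V}

theorem iSupIndep_arrowModule [IsArtinianRing R] (hB : IsBranchSystem T.Edge C y B) :
    iSupIndep fun w : {w // w ∈ C ∧ T.Edge y w} => T.arrowModule C y w := by
  refine fun w => Submodule.disjoint_def.2 fun x hx hx' =>
    T.eq_zero_of_forall_smul_eq_zero fun v => ?_
  by_cases hv : v ∈ B w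
  · refine Submodule.iSup_induction _ (motive := fun x => T.η v • x = 0) hx' (fun w' x hx => ?_)
      (smul_zero _) fun x z hx hz => by rw [smul_add, hx, hz, add_zero]
    refine Submodule.iSup_induction _ (motive := fun x => T.η v • x = 0) hx (fun hne x hx => ?_)
      (smul_zero _) fun x z hx hz => by rw [smul_add, hx, hz, add_zero]
    have hdisj := hB.disjoint w.2.2 w'.2.2 fun h => hne (Subtype.ext h.symm)
    exact T.arrowModule_le_supportedPart (hB.isBranch w'.2.1 w'.2.2) hx v
      (Finset.disjoint_left.1 hdisj hv)
  · exact T.arrowModule_le_supportedPart (hB.isBranch w.2.1 w.2.2) hx v hv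

theorem proj_η_mul_mem_arrowModule [IsArtinianRing R] (hB : IsBranchSystem T.Edge C y B)
    (hc : c ∈ C) (hyc : T.Edge y c) {j : R} (hj : j ∈ Ring.jacobson R) :
    proj T.η C (T.η c * j * T.ε y) ∈ T.arrowModule C y c := by
  rw [mul_assoc, proj_mul]
  refine Submodule.iSup_induction _ (motive := fun x => T.η c • x ∈ T.arrowModule C y c)
    (T.proj_mul_ε_mem_iSup C y hj) (fun w x hx => ?_) (by rw [smul_zero]; exact zero_mem _)
    fun x z hx hz => by rw [smul_add]; exact add_mem hx hz
  by_cases hwc : (w : V) = c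
  · exact Submodule.smul_mem _ _ (hwc ▸ hx)
  · have hcw : c ∉ B w :=
      Finset.disjoint_left.1 (hB.disjoint hyc w.2.2 (Ne.symm hwc)) (hB.isBranch hc hyc).root_mem
    rw [T.arrowModule_le_supportedPart (hB.isBranch w.2.1 w.2.2) hx c hcw]
    exact zero_mem _

theorem η_mul_sum_of_mem {v : V} (hv : v ∈ S) : T.η v * ∑ w ∈ S, T.η w = T.η v := by
  rw [Finset.mul_sum, Finset.sum_eq_single_of_mem v hv fun w _ h => T.η_mul_η_of_ne h.symm,
    T.η_mul_η_self]

theorem η_mul_sum_of_notMem {v : V} (hv : v ∉ S) : T.η v * ∑ w ∈ S, T.η w = 0 := by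
  rw [Finset.mul_sum]
  exact Finset.sum_eq_zero fun w hw => T.η_mul_η_of_ne fun h => hv (h ▸ hw)

theorem sum_mul_η_of_mem {v : V} (hv : v ∈ S) : (∑ w ∈ S, T.η w) * T.η v = T.η v := by
  rw [Finset.sum_mul, Finset.sum_eq_single_of_mem v hv fun w _ h => T.η_mul_η_of_ne h,
    T.η_mul_η_self]

theorem sum_mul_η_of_notMem {v : V} (hv : v ∉ S) : (∑ w ∈ S, T.η w) * T.η v = 0 := by
  rw [Finset.sum_mul]
  exact Finset.sum_eq_zero fun w hw => T.η_mul_η_of_ne fun h => hv (h ▸ hw)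

theorem commute_sum_η {u w : V} (huw : u ∈ S ↔ w ∈ S) (r : R) :
    Commute (∑ v ∈ S, T.η v) (T.η w * r * T.η u) := by
  rw [commute_iff_eq, mul_assoc _ (T.η u), ← mul_assoc, ← mul_assoc]
  by_cases hw : w ∈ S
  · rw [T.sum_mul_η_of_mem hw, T.η_mul_sum_of_mem (huw.2 hw)]
  · rw [T.sum_mul_η_of_notMem hw, T.η_mul_sum_of_notMem (mt huw.1 hw), zero_mul, zero_mul,
      mul_zero]

theorem sum_smul_of_supportedOn (hX : SupportedOn T.η S X) (x : X) :
    (∑ w ∈ S, T.η w) • x = x := by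
  refine sub_eq_zero.1 (T.eq_zero_of_forall_smul_eq_zero fun v => ?_)
  rw [smul_sub, ← mul_smul]
  by_cases hv : v ∈ S
  · rw [T.η_mul_sum_of_mem hv, sub_self]
  · rw [hX.2 v hv, T.η_mul_sum_of_notMem hv, zero_smul, sub_self]

section Extension

variable [IsArtinianRing R] (hS : IsBranch T.Edge C S y c) (hX : SupportedOn T.η C X)

/-- The additive projection of `X` onto its part supported on `S`. It is not linear: it fails to
commute with the arrow `y ⟶ c`. -/
def projection : X →+ T.supportedPart hS hX where
  toFun x := ⟨(∑ w ∈ S, T.η w) • x, fun v hv => by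
    rw [← mul_smul, T.η_mul_sum_of_notMem hv, zero_smul]⟩
  map_zero' := Subtype.ext (smul_zero _)
  map_add' x z := Subtype.ext (smul_add _ x z)

theorem coe_projection (x : X) :
    (T.projection hS hX x : X) = (∑ w ∈ S, T.η w) • x := rfl

theorem projection_coe (x : T.supportedPart hS hX) : T.projection hS hX x = x :=
  Subtype.ext (congrArg Subtype.val
    (T.sum_smul_of_supportedOn (T.supportedOn_supportedPart hS hX) x) :)

theorem projection_smul_of_commute {r : R} (hr : Commute (∑ w ∈ S, T.η w) r) (x : X) :
    T.projection hS hX (r • x) = r • T.projection hS hX x := by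
  refine Subtype.ext ?_
  rw [Submodule.coe_smul, coe_projection, coe_projection, ← mul_smul, ← mul_smul, hr.eq]

theorem projection_η_smul_of_notMem {v : V} (hv : v ∉ S) (x : X) :
    T.projection hS hX (T.η v • x) = 0 := by
  refine Subtype.ext ?_
  rw [coe_projection, ← mul_smul, T.sum_mul_η_of_notMem hv, zero_smul]
  rfl

theorem projection_η_smul_of_mem {v : V} (hv : v ∈ S) (x : X) :
    (T.projection hS hX (T.η v • x) : X) = T.η v • x := by
  rw [coe_projection, ← mul_smul, T.sum_mul_η_of_mem hv]

variable {T hX} (hB : IsBranchSystem T.Edge C y B) (hc : c ∈ C) (hyc : T.Edge y c)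
  (hM : ∀ f : T.arrowModule C y c →ₗ[R] Y, f = 0)
  (g : T.supportedPart (hB.isBranch hc hyc) hX →ₗ[R] Y)
include hM

theorem map_projection_η_mul_ε_smul {j : R} (hj : j ∈ Ring.jacobson R) (x : X) :
    g (T.projection (hB.isBranch hc hyc) hX ((T.η c * j * T.ε y) • x)) = 0 := by
  let ψ : T.arrowModule C y c →ₗ[R] T.supportedPart (hB.isBranch hc hyc) hX :=
    (lift hX x ∘ₗ (T.arrowModule C y c).subtype).codRestrict _ fun z v hv => by
      rw [LinearMap.comp_apply, ← map_smul, ← map_smul,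
        (T.supportedOn_arrowModule (hB.isBranch hc hyc)).2 v hv, map_zero, map_zero]
  have hψ : ψ ⟨_, T.proj_η_mul_mem_arrowModule hB hc hyc hj⟩ =
      T.projection (hB.isBranch hc hyc) hX ((T.η c * j * T.ε y) • x) := by
    refine Subtype.ext ?_
    have hη : (T.η c * j * T.ε y) • x = T.η c • (j * T.ε y) • x := by rw [mul_assoc, mul_smul]
    rw [hη, T.projection_η_smul_of_mem _ hX (hB.isBranch hc hyc).root_mem, ← hη]
    rfl
  rw [← hψ]
  exact LinearMap.congr_fun (hM (g ∘ₗ ψ)) _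

theorem map_projection_η_mul_η_smul {j : R} (hj : j ∈ Ring.jacobson R) (x : X) :
    g (T.projection (hB.isBranch hc hyc) hX ((T.η c * j * T.η y) • x)) = 0 := by
  refine AddSubmonoid.closure_induction (motive := fun z _ =>
    g (T.projection (hB.isBranch hc hyc) hX ((T.η c * j * z) • x)) = 0) ?_ ?_ ?_
    (T.η_mem_closure y)
  · rintro _ ⟨s, t, rfl⟩
    rw [← mul_assoc, mul_smul, ← mul_assoc, mul_assoc (T.η c)]
    exact map_projection_η_mul_ε_smul hB hc hyc hM g (Ideal.mul_mem_right s _ hj) (t • x)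
  · rw [mul_zero, zero_smul, map_zero, map_zero]
  · intro a b _ _ ha hb
    rw [mul_add, add_smul, map_add, map_add, ha, hb, add_zero]

theorem map_projection_smul (hY : SupportedOn T.η (B c) Y) (r : R) (x : X) :
    g (T.projection (hB.isBranch hc hyc) hX (r • x)) =
      r • g (T.projection (hB.isBranch hc hyc) hX x) := by
  refine T.induction (P := fun r => ∀ x, g (T.projection (hB.isBranch hc hyc) hX (r • x)) =
    r • g (T.projection (hB.isBranch hc hyc) hX x)) ?_ ?_ ?_ ?_ ?_ r x
  · intro x
    rw [zero_smul, zero_smul, map_zero, map_zero]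
  · intro q r hq hr x
    rw [add_smul, map_add, map_add, hq, hr, add_smul]
  · intro q r hq hr x
    rw [mul_smul, hq, hr, mul_smul]
  · intro v r x
    rw [T.projection_smul_of_commute _ _ (T.commute_sum_η Iff.rfl r), map_smul]
  · intro u w hE r hr x
    by_cases hw : w ∈ B c
    · by_cases hu : u ∈ B c
      · rw [T.projection_smul_of_commute _ _ (T.commute_sum_η (iff_of_true hu hw) r), map_smul]
      · rw [mul_smul _ _ (g _), hY.2 u hu, smul_zero]
        by_cases huC : u ∈ C
        · obtain ⟨rfl, rfl⟩ := (hB.isBranch hc hyc).eq_of_edge hE huC hu hw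
          exact map_projection_η_mul_η_smul hB hc hyc hM g hr x
        · rw [mul_smul, hX.2 u huC, smul_zero, map_zero, map_zero]
    · rw [mul_assoc, mul_smul, mul_smul (T.η w), T.projection_η_smul_of_notMem _ _ hw, hY.2 w hw,
        map_zero]

theorem exists_extension_of_supportedPart (hY : SupportedOn T.η (B c) Y) :
    ∃ f : X →ₗ[R] Y, ∀ x : T.supportedPart (hB.isBranch hc hyc) hX, f x = g x :=
  ⟨{ toFun x := g (T.projection (hB.isBranch hc hyc) hX x)
     map_add' x z := by rw [map_add, map_add]
     map_smul' := map_projection_smul hB hc hyc hM g hY },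
    fun x => congrArg g (T.projection_coe _ _ x)⟩

end Extension

end ForestPresentation

theorem IsPrimitiveIdem.bijective_of_hasSection [IsArtinianRing R] {e : R}
    (he : IsPrimitiveIdem R e) {M D : Type} [AddCommGroup M] [Module R M] [AddCommGroup D]
    [Module R D] [Nontrivial D] {α : M} (hα : Submodule.span R {α} = ⊤) (heα : e • α = α)
    {f : M →ₗ[R] D} (hf : HasSection f) : Function.Bijective f := by
  obtain ⟨s, hs⟩ := hf
  have hspan : ∀ m, ∃ r : R, r • α = m := fun m =>
    Submodule.mem_span_singleton.1 (hα ▸ Submodule.mem_top)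
  obtain ⟨z₀, hz₀⟩ := hspan (s (f α))
  let z := z₀ * e
  have hzα : z • α = s (f α) := by rw [mul_smul, heα, hz₀]
  have hze : z * e = z := by rw [mul_assoc, he.1]
  suffices hsurj : Function.Surjective s from
    ⟨fun m m' h => by
      obtain ⟨d, rfl⟩ := hsurj m
      obtain ⟨d', rfl⟩ := hsurj m'
      rw [hs, hs] at h
      rw [h], fun d => ⟨s d, hs d⟩⟩
  by_cases hzJ : z ∈ Ring.jacobson R
  · exfalso
    obtain ⟨t, ht⟩ := exists_leftInverse_one_sub hzJ
    have hfα : f α = 0 := by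
      have h : (1 - z) • f α = 0 := by
        rw [sub_smul, one_smul, ← map_smul, hzα, hs, sub_self]
      rw [← one_smul R (f α), ← ht, mul_smul, h, smul_zero]
    obtain ⟨d, hd⟩ := exists_ne (0 : D)
    obtain ⟨r, hr⟩ := hspan (s d)
    exact hd (by rw [← hs d, ← hr, map_smul, hfα, smul_zero])
  · obtain ⟨r, hr⟩ := he.exists_mul_eq hze hzJ
    intro m
    obtain ⟨q, rfl⟩ := hspan m
    refine ⟨q • r • f α, ?_⟩
    rw [map_smul, map_smul, ← hzα, ← mul_smul r, hr, heα]

/-! ### Complete chains for the sets of vertices -/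

section Merging

variable {𝒜 ℬ : ModuleClass R} {D : List (ModCat R)} {ι : Type} {X : Type} [AddCommGroup X]
  [Module R X]

theorem ChainTorsion.mono
    (h : ∀ (M : Type) [AddCommGroup M] [Module R M], 𝒜 M → ℬ M) (hX : ChainTorsion 𝒜 D X) :
    ChainTorsion ℬ D X := by
  induction D with
  | nil => exact h X hX
  | cons Z D ih => exact ⟨ih hX.1, hX.2⟩

theorem exists_isSplittingChain_forall_chainFree (h𝒜 : IsSerreClass 𝒜) (s : Finset ι)
    (M : ι → ModCat R) (h : ∀ i ∈ s, ∃ E, IsSplittingChain 𝒜 E ∧ ChainFree 𝒜 E (M i)) :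
    ∃ D, IsSplittingChain 𝒜 D ∧ ∀ i ∈ s, ChainFree 𝒜 D (M i) := by
  classical
  induction s using Finset.induction_on with
  | empty => exact ⟨[], .nil, fun i hi => absurd hi (Finset.notMem_empty i)⟩
  | insert i s _ ih =>
    obtain ⟨D, hD, hfree⟩ := ih fun j hj => h j (Finset.mem_insert_of_mem hj)
    obtain ⟨E, hE, hfreeE⟩ := h i (Finset.mem_insert_self i s)
    obtain ⟨D', hDD', hD', htors⟩ := hD.exists_merge h𝒜 hE
    exact ⟨D', hD', (Finset.forall_mem_insert _ _ _).2
      ⟨⟨hfreeE.1, fun Y _ _ hY => hfreeE.2 Y (htors Y hY)⟩,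
        fun j hj => (hfree j hj).of_suffix hDD'⟩⟩

theorem IsSplittingChain.exists_extension_forall_chainFree (h𝒜 : IsSerreClass 𝒜)
    (hD : IsSplittingChain 𝒜 D) (s : Finset ι) (P : ι → ModCat R) (hP : ∀ i ∈ s, 𝒜 (P i))
    (hs : ∀ i ∈ s, ∀ (Y : Type) [AddCommGroup Y] [Module R Y], ChainTorsion 𝒜 D Y →
      ∀ f : Y →ₗ[R] P i, f ≠ 0 → HasSection f) :
    ∃ D', D <:+ D' ∧ IsSplittingChain 𝒜 D' ∧ ∀ i ∈ s, ChainFree 𝒜 D' (P i) := by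
  classical
  induction s using Finset.induction_on with
  | empty => exact ⟨D, List.suffix_rfl, hD, fun i hi => absurd hi (Finset.notMem_empty i)⟩
  | insert i s _ ih =>
    obtain ⟨hPi, hPs⟩ := (Finset.forall_mem_insert _ _ _).1 hP
    obtain ⟨D₁, hDD₁, hD₁, hfree⟩ := ih hPs fun j hj => hs j (Finset.mem_insert_of_mem hj)
    obtain ⟨D₂, hD₁₂, hD₂, hfreei⟩ := hD₁.exists_extension_chainFree h𝒜 hPi
      fun Y _ _ hY => hs i (Finset.mem_insert_self i s) Y (hY.of_suffix hDD₁)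
    exact ⟨D₂, hDD₁.trans hD₁₂, hD₂, (Finset.forall_mem_insert _ _ _).2
      ⟨hfreei, fun j hj => (hfree j hj).of_suffix hD₁₂⟩⟩

end Merging

namespace ForestPresentation

open SupportQuotient

variable {V : Type} [Fintype V] (T : ForestPresentation R V) [IsArtinianRing R] {C : Finset V}
  {y c : V} {X : Type} [AddCommGroup X] [Module R X] {D : List (ModCat R)}

section Branch

variable {T} {B : V → Finset V} (hB : IsBranchSystem T.Edge C y B) (hc : c ∈ C)
  (hyc : T.Edge y c)

theorem chainTorsion_supportedPart (hD : IsSplittingChain (SupportedOn T.η (B c)) D)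
    (hM : ChainTorsion (SupportedOn T.η (B c)) D (T.arrowModule C y c))
    (hX : SupportedOn T.η C X) (hXD : ChainTorsion (SupportedOn T.η C) D X) :
    ChainTorsion (SupportedOn T.η (B c)) D (T.supportedPart (hB.isBranch hc hyc) hX) := by
  induction hD with
  | nil => exact T.supportedOn_supportedPart _ hX
  | cons hZ _ ih =>
    refine ⟨ih hM.1 hXD.1, fun g => LinearMap.ext fun x => ?_⟩
    obtain ⟨f, hf⟩ := exists_extension_of_supportedPart hB hc hyc hM.2 g hZ.mem.mem
    rw [← hf, hXD.2 f, LinearMap.zero_apply, LinearMap.zero_apply]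

include hB hc hyc

theorem isSplittingObject_of_branch {Z : ModCat R}
    (hD : IsSplittingChain (SupportedOn T.η (B c)) D)
    (hM : ChainTorsion (SupportedOn T.η (B c)) D (T.arrowModule C y c))
    (hZ : IsSplittingObject (ChainTorsion (SupportedOn T.η (B c)) D) Z) :
    IsSplittingObject (ChainTorsion (SupportedOn T.η C) D) Z where
  mem := hZ.mem.mono fun _ _ _ h => h.mono (hB.isBranch hc hyc).subset
  nontrivial := hZ.nontrivial
  hasSection X _ _ hXD f hf := by
    have hX : SupportedOn T.η C X := hXD.mem
    let X' := T.supportedPart (hB.isBranch hc hyc) hX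
    refine (hZ.hasSection X' (chainTorsion_supportedPart hB hc hyc hD hM hX hXD)
      (f ∘ₗ X'.subtype) fun hfX' => hf (LinearMap.ext fun x => ?_)).of_comp
    calc f x = f ((∑ w ∈ B c, T.η w) • x) := by
          rw [map_smul, T.sum_smul_of_supportedOn hZ.mem.mem]
      _ = (f ∘ₗ X'.subtype) (T.projection (hB.isBranch hc hyc) hX x) := rfl
      _ = 0 := by rw [hfX', LinearMap.zero_apply]

theorem isSplittingChain_of_branch {Z : ModCat R}
    (hD : IsSplittingChain (SupportedOn T.η (B c)) (Z :: D))
    (hM : ChainTorsion (SupportedOn T.η (B c)) D (T.arrowModule C y c)) :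
    IsSplittingChain (SupportedOn T.η C) (Z :: D) := by
  induction D generalizing Z with
  | nil =>
    cases hD with
    | cons hZ hnil => exact .cons (isSplittingObject_of_branch hB hc hyc hnil hM hZ) .nil
  | cons Z' D ih =>
    cases hD with
    | cons hZ hD => exact .cons (isSplittingObject_of_branch hB hc hyc hD hM hZ) (ih hD hM.1)

theorem exists_chainFree_arrowModule (hD : IsCompleteChain (SupportedOn T.η (B c)) D) :
    ∃ E, IsSplittingChain (SupportedOn T.η C) E ∧
      ChainFree (SupportedOn T.η C) E (T.arrowModule C y c) := by
  let M := T.arrowModule C y c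
  have h𝒜 := T.isSerreClass_supportedOn C
  by_cases hMD : ChainTorsion (SupportedOn T.η (B c)) D M
  · have : Subsingleton M := hD.2 M hMD
    exact ⟨[], .nil, h𝒜.chainFree_of_subsingleton⟩
  obtain ⟨Z, E, hZE, hME, f, hf⟩ :=
    hD.1.exists_hasSection (T.supportedOn_arrowModule (hB.isBranch hc hyc)) hMD
  have := (hD.1.isSplittingObject hZE).nontrivial
  let α : M := ⟨proj T.η C (T.arrow c y), T.proj_arrow_mem C y c⟩
  have hα : Submodule.span R {α} = ⊤ := by
    refine eq_top_iff.2 fun ⟨m, hm⟩ _ => ?_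
    obtain ⟨r, rfl⟩ := Submodule.mem_span_singleton.1 hm
    exact Submodule.mem_span_singleton.2 ⟨r, rfl⟩
  have hεα : T.ε c • α = α := Subtype.ext <| by
    rw [Submodule.coe_smul, ← proj_mul, T.ε_mul_arrow]
  have hbij := (T.isPrimitiveIdem c).bijective_of_hasSection hα hεα hf
  have hE := isSplittingChain_of_branch hB hc hyc (hD.1.of_suffix hZE) hME
  exact ⟨Z :: E, hE,
    (hE.chainFree List.suffix_rfl).equiv h𝒜 (LinearEquiv.ofBijective f hbij).symm⟩

end Branch

/-- The submodule of `SupportQuotient T.η C` generated by the class of `ε y`. -/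
def vertexModule (C : Finset V) (y : V) : Submodule R (SupportQuotient T.η C) :=
  Submodule.span R {proj T.η C (T.ε y)}

omit [IsArtinianRing R] in
theorem mem_vertexModule {q : SupportQuotient T.η C} :
    q ∈ T.vertexModule C y ↔ ∃ r, proj T.η C (r * T.ε y) = q := by
  simp only [vertexModule, Submodule.mem_span_singleton, proj_mul]

theorem hasSection_of_forall_arrowModule (hX : SupportedOn T.η C X)
    (hM : ∀ w ∈ C, T.Edge y w → ∀ f : X →ₗ[R] T.arrowModule C y w, f = 0)
    (f : X →ₗ[R] T.vertexModule C y) (hf : f ≠ 0) : HasSection f := by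
  obtain ⟨B, hB⟩ := exists_isBranchSystem T.isAcyclic T.edge_asymm C y
  obtain ⟨x, r, hr, hrJ⟩ : ∃ x r, proj T.η C (r * T.ε y) = f x ∧ r * T.ε y ∉ Ring.jacobson R := by
    by_contra! h
    refine hf (LinearMap.ext fun x => Subtype.ext ?_)
    refine LinearMap.congr_fun (eq_zero_of_iSupIndep (T.iSupIndep_arrowModule hB)
      (fun w => hM w w.2.1 w.2.2) ((T.vertexModule C y).subtype ∘ₗ f) fun x => ?_) x
    obtain ⟨r, hr⟩ := T.mem_vertexModule.1 (f x).2
    have hmem := T.proj_mul_ε_mem_iSup C y (h x r hr)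
    rwa [mul_assoc, T.ε_mul_ε, hr] at hmem
  obtain ⟨r', hr'⟩ :=
    (T.isPrimitiveIdem y).exists_mul_eq (by rw [mul_assoc, T.ε_mul_ε]) hrJ
  have hfx : (f (T.ε y • r' • x) : SupportQuotient T.η C) = proj T.η C (T.ε y) := by
    rw [map_smul, map_smul, Submodule.coe_smul, Submodule.coe_smul, ← hr, ← proj_mul, ← proj_mul,
      hr', T.ε_mul_ε]
  refine ⟨lift hX (T.ε y • r' • x) ∘ₗ (T.vertexModule C y).subtype, fun q => Subtype.ext ?_⟩
  obtain ⟨s, hs⟩ := T.mem_vertexModule.1 q.2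
  rw [LinearMap.comp_apply, Submodule.subtype_apply, ← hs, lift_proj, map_smul, Submodule.coe_smul,
    hfx, ← proj_mul, mul_assoc, T.ε_mul_ε]

omit [IsArtinianRing R] in
theorem eq_zero_of_forall_vertexModule
    (hX : ∀ y ∈ C, ∀ f : X →ₗ[R] T.vertexModule C y, f = 0)
    (g : X →ₗ[R] SupportQuotient T.η C) : g = 0 := by
  refine LinearMap.ext fun x => ?_
  obtain ⟨z, hz⟩ := proj_surjective (g x)
  have hε (v : V) (s : R) : proj T.η C (z * (s * T.ε v)) = 0 := by
    by_cases hv : v ∈ C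
    · let ρ : SupportQuotient T.η C →ₗ[R] T.vertexModule C v :=
        (lift supportedOn (proj T.η C (s * T.ε v))).codRestrict _ fun q => by
          obtain ⟨r, rfl⟩ := proj_surjective q
          exact Submodule.smul_mem _ _ (T.mem_vertexModule.2 ⟨s, rfl⟩)
      rw [proj_mul, ← lift_proj supportedOn, hz]
      exact congrArg Subtype.val (LinearMap.congr_fun (hX v hv (ρ ∘ₗ g)) x)
    · rw [← T.η_mul_ε, proj_mul, proj_mul, proj_mul, supportedOn.2 v hv, smul_zero, smul_zero]
  have hη (v : V) : proj T.η C (z * T.η v) = 0 := by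
    refine AddSubmonoid.closure_induction (motive := fun m _ => proj T.η C (z * m) = 0) ?_
      (by rw [mul_zero, map_zero]) (fun a b _ _ ha hb => by rw [mul_add, map_add, ha, hb, add_zero])
      (T.η_mem_closure v)
    rintro _ ⟨s, t, rfl⟩
    rw [← mul_assoc, proj_mul, ← lift_proj supportedOn (proj T.η C t), hε, map_zero]
  rw [← hz, ← T.sum_mul_η z, map_sum, LinearMap.zero_apply]
  exact Finset.sum_eq_zero fun v _ => hη v

theorem exists_chainFree_supportQuotient
    (hC : ∀ S ⊂ C, ∃ D, IsCompleteChain (SupportedOn T.η S) D) :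
    ∃ D, IsSplittingChain (SupportedOn T.η C) D ∧
      ChainFree (SupportedOn T.η C) D (SupportQuotient T.η C) := by
  classical
  have h𝒜 := T.isSerreClass_supportedOn C
  obtain ⟨D, hD, hDfree⟩ := exists_isSplittingChain_forall_chainFree h𝒜
    ((C ×ˢ C).filter fun p => T.Edge p.1 p.2) (fun p => .of R (T.arrowModule C p.1 p.2)) (by
      rintro ⟨y, c⟩ hp
      obtain ⟨hyc, hE⟩ := Finset.mem_filter.1 hp
      obtain ⟨hy, hc⟩ := Finset.mem_product.1 hyc
      obtain ⟨B, hB⟩ := exists_isBranchSystem T.isAcyclic T.edge_asymm C y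
      obtain ⟨D, hD⟩ := hC (B c) ((hB.isBranch hc hE).ssubset hy)
      exact exists_chainFree_arrowModule hB hc hE hD)
  obtain ⟨D', -, hD', hD'free⟩ := hD.exists_extension_forall_chainFree h𝒜 C
    (fun y => .of R (T.vertexModule C y)) (fun y _ => h𝒜.submodule supportedOn _)
    fun y hy X _ _ hX => T.hasSection_of_forall_arrowModule hX.mem fun w hw hE =>
      (hDfree (y, w) (Finset.mem_filter.2 ⟨Finset.mem_product.2 ⟨hy, hw⟩, hE⟩)).2 X hX
  exact ⟨D', hD', supportedOn, fun X _ _ hX =>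
    T.eq_zero_of_forall_vertexModule fun y hy => (hD'free y hy).2 X hX⟩

theorem exists_isCompleteChain (hR : IsHomFiniteOverCenter R) (hτ : IsTauTiltingFiniteRing R)
    (C : Finset V) : ∃ D, IsCompleteChain (SupportedOn T.η C) D := by
  induction C using Finset.strongInduction with
  | H C ih =>
    obtain ⟨D, hD, hfree⟩ := T.exists_chainFree_supportQuotient ih
    exact hD.exists_isCompleteChain hR (T.isSerreClass_supportedOn C) isProgenerator hτ hfree

end ForestPresentation

theorem IsIndecMod.nonempty_iso_of_hasSection {M Z : ModCat R} [Nontrivial Z] (hM : IsIndecMod M)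
    {f : M →ₗ[R] Z} (hf : HasSection f) : Nonempty (M ≅ Z) := by
  obtain ⟨e⟩ := hf.nonempty_equiv_prod_ker
  have hZK : Nonempty (M ≅ Z ⊞ ModuleCat.of R (LinearMap.ker f)) :=
    ⟨e.toModuleIso ≪≫ (ModuleCat.biprodIsoProd Z (.of R (LinearMap.ker f))).symm⟩
  rcases hM.2 _ _ hZK with hZ | hK
  · exact absurd (ModuleCat.subsingleton_of_isZero hZ) (not_subsingleton Z)
  · have hker : Subsingleton (LinearMap.ker f) := ModuleCat.subsingleton_of_isZero hK
    have hinj := LinearMap.ker_eq_bot.1 (Submodule.subsingleton_iff_eq_bot.1 hker)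
    exact ⟨(LinearEquiv.ofBijective f ⟨hinj, hf.surjective⟩).toModuleIso⟩

theorem IsCompleteChain.isRepFiniteRing {𝒜 : ModuleClass R} {D : List (ModCat R)}
    (h𝒜 : ∀ (X : Type) [AddCommGroup X] [Module R X], Module.Finite R X → 𝒜 X)
    (hD : IsCompleteChain 𝒜 D) : IsRepFiniteRing R := by
  refine ⟨D.length, D.get, fun M hfg hM => ?_⟩
  have hMD : ¬ ChainTorsion 𝒜 D M := fun h =>
    hM.1 (have := hD.2 M h; ModuleCat.isZero_of_subsingleton M)
  obtain ⟨Z, E, hZE, -, f, hf⟩ := hD.1.exists_hasSection (h𝒜 M hfg) hMD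
  have := (hD.1.isSplittingObject hZE).nontrivial
  obtain ⟨i, hi⟩ := List.mem_iff_get.1 (hZE.subset List.mem_cons_self)
  exact ⟨i, hi ▸ hM.nonempty_iso_of_hasSection hf⟩

theorem ForestPresentation.isRepFiniteRing {V : Type} [Fintype V] (T : ForestPresentation R V)
    [IsArtinianRing R] (hR : IsHomFiniteOverCenter R) (hτ : IsTauTiltingFiniteRing R) :
    IsRepFiniteRing R := by
  obtain ⟨D, hD⟩ := T.exists_isCompleteChain hR hτ Finset.univ
  exact hD.isRepFiniteRing fun X _ _ hX => ⟨hX, fun v hv => absurd (Finset.mem_univ v) hv⟩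

/-! ### From tree quiver algebras to forest presentations -/

theorem isHomFiniteOverCenter_of_finiteDimensional (K : Type) [Field K] [Algebra K R]
    [FiniteDimensional K R] : IsHomFiniteOverCenter R := by
  intro M N _ _ _ _ _ _
  let _ : Module K M := Module.compHom M (algebraMap K R)
  let _ : Module K N := Module.compHom N (algebraMap K R)
  have : IsScalarTower K R M := ⟨fun k r m => by rw [Algebra.smul_def, mul_smul]; rfl⟩
  have : IsScalarTower K R N := ⟨fun k r m => by rw [Algebra.smul_def, mul_smul]; rfl⟩
  have : Module.Finite K M := Module.Finite.trans R M
  have : Module.Finite K N := Module.Finite.trans R N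
  have : SMulCommClass R K N := IsScalarTower.to_smulCommClass'
  have : Module.Finite K (M →ₗ[R] N) :=
    Module.Finite.of_injective (LinearMap.restrictScalarsₗ K R M N K)
      (LinearMap.restrictScalars_injective K)
  obtain ⟨m, φ, hφ⟩ := Module.Finite.exists_fin (R := K) (M := M →ₗ[R] N)
  refine ⟨m, φ, fun g => ?_⟩
  obtain ⟨c, rfl⟩ := (Submodule.mem_span_range_iff_exists_fun K).1 (hφ ▸ Submodule.mem_top (x := g))
  refine ⟨fun j => ⟨algebraMap K R (c j), Subring.mem_center_iff.2 fun r =>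
    (Algebra.commutes (c j) r).symm⟩, fun x => ?_⟩
  rw [LinearMap.sum_apply]
  refine Finset.sum_congr rfl fun j _ => ?_
  rw [LinearMap.smul_apply, ← algebraMap_smul R, ← map_smul]
  rfl

section IdempotentClasses

variable {ι V : Type} [Fintype ι] {e : ι → R}

theorem completeOrthogonalIdempotents_sum_fiber [Fintype V] [DecidableEq V]
    (he : CompleteOrthogonalIdempotents e) (π : ι → V) :
    CompleteOrthogonalIdempotents fun v => ∑ i with π i = v, e i := by
  refine (CompleteOrthogonalIdempotents.iff_ortho_complete).2 ⟨fun v w hvw => ?_, ?_⟩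
  · simp only [Finset.sum_mul_sum]
    refine Finset.sum_eq_zero fun i hi => Finset.sum_eq_zero fun j hj => he.ortho ?_
    rintro rfl
    exact hvw ((Finset.mem_filter.1 hi).2.symm.trans (Finset.mem_filter.1 hj).2)
  · rw [Finset.sum_fiberwise, he.complete]

theorem mul_mul_mem_of_mem_closure {I I' : Ideal R} [I.IsTwoSided] [I'.IsTwoSided] {x y a b : R}
    (hxy : ∀ r ∈ I, x * r * y ∈ I')
    (ha : a ∈ AddSubmonoid.closure {z | ∃ s t, z = s * x * t})
    (hb : b ∈ AddSubmonoid.closure {z | ∃ s t, z = s * y * t}) :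
    ∀ r ∈ I, a * r * b ∈ I' := by
  intro r hr
  induction ha using AddSubmonoid.closure_induction with
  | zero => simp only [zero_mul, zero_mem]
  | add a a' _ _ ha ha' => rw [add_mul, add_mul]; exact add_mem ha ha'
  | mem a ha =>
    obtain ⟨s, t, rfl⟩ := ha
    induction hb using AddSubmonoid.closure_induction with
    | zero => simp only [mul_zero, zero_mem]
    | add b b' _ _ hb hb' => rw [mul_add]; exact add_mem hb hb'
    | mem b hb =>
      obtain ⟨s', t', rfl⟩ := hb
      have hfactor : s * x * t * r * (s' * y * t') = s * (x * (t * r * s') * y) * t' := by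
        simp only [mul_assoc]
      rw [hfactor]
      exact Ideal.mul_mem_right _ _ (Ideal.mul_mem_left _ _
        (hxy _ (Ideal.mul_mem_right _ _ (Ideal.mul_mem_left _ _ hr))))

/-- The arrows of the Gabriel quiver, for left modules: `e w * (rad R / rad² R) * e u ≠ 0`. -/
def IsArrow (e : ι → R) (u w : ι) : Prop :=
  ∃ r ∈ Ring.jacobson R, e w * r * e u ∉ Ring.jacobson R ^ 2

theorem exists_arrow_generator (K : Type) [Field K] [Algebra K R] {f g : R}
    (hmult : ∀ r ∈ Ring.jacobson R, ∀ r' ∈ Ring.jacobson R, ∃ a b : K, (a ≠ 0 ∨ b ≠ 0) ∧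
      a • (f * r * g) + b • (f * r' * g) ∈ Ring.jacobson R ^ 2) :
    ∃ a, ∀ r ∈ Ring.jacobson R, ∃ c, f * r * g - c * (f * a * g) ∈ Ring.jacobson R ^ 2 := by
  by_cases hfg : ∀ r ∈ Ring.jacobson R, f * r * g ∈ Ring.jacobson R ^ 2
  · exact ⟨0, fun r hr => ⟨0, by simpa only [zero_mul, sub_zero] using hfg r hr⟩⟩
  push Not at hfg
  obtain ⟨s, hs, hs2⟩ := hfg
  have smul_mem (k : K) {x : R} (hx : x ∈ Ring.jacobson R ^ 2) : k • x ∈ Ring.jacobson R ^ 2 := by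
    rw [Algebra.smul_def]
    exact Ideal.mul_mem_left _ _ hx
  refine ⟨s, fun r hr => ?_⟩
  obtain ⟨a, b, hab, hrel⟩ := hmult r hr s hs
  have ha : a ≠ 0 := by
    rintro rfl
    rw [zero_smul, zero_add] at hrel
    have hb : b ≠ 0 := hab.resolve_left (not_not.2 rfl)
    exact hs2 (by simpa only [inv_smul_smul₀ hb] using smul_mem b⁻¹ hrel)
  refine ⟨algebraMap K R (-(a⁻¹ * b)), ?_⟩
  have hmem := smul_mem a⁻¹ hrel
  rwa [smul_add, inv_smul_smul₀ ha, smul_smul, ← sub_neg_eq_add, ← neg_smul,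
    Algebra.smul_def (-(a⁻¹ * b))] at hmem

/-- The relation on indices that `R e i` and `R e j` are isomorphic. -/
def idempotentSetoid (hprim : ∀ i, IsPrimitiveIdem R (e i)) : Setoid ι where
  r i j := IdempotentEquivalent (e i) (e j)
  iseqv :=
    { refl := fun i => ⟨e i, e i, (hprim i).1, (hprim i).1⟩
      symm := IdempotentEquivalent.symm
      trans := fun {i _ k} => IdempotentEquivalent.trans (hprim i).1 (hprim k).1 }

theorem sum_fiber_mem_closure [DecidableEq V] {v : V} {f : R} (π : ι → V)
    (hidem : ∀ i, IsIdempotentElem (e i)) (hπ : ∀ i, π i = v → IdempotentEquivalent (e i) f) :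
    ∑ i with π i = v, e i ∈ AddSubmonoid.closure {z | ∃ s t, z = s * f * t} :=
  sum_mem fun i hi => AddSubmonoid.subset_closure
    ((hπ i (Finset.mem_filter.1 hi).2).exists_eq_mul_mul (hidem i))

open Classical in
theorem exists_forestPresentation [IsArtinianRing R] (he : CompleteOrthogonalIdempotents e)
    (hprim : ∀ i, IsPrimitiveIdem R (e i)) (hasymm : ∀ u w, IsArrow e u w → ¬ IsArrow e w u)
    (hgen : ∀ u w, ∃ a, ∀ r ∈ Ring.jacobson R,
      ∃ c, e w * r * e u - c * (e w * a * e u) ∈ Ring.jacobson R ^ 2)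
    (hacyclic : (SimpleGraph.fromRel (IsArrow e)).IsAcyclic) :
    ∃ (V : Type) (_ : Fintype V), Nonempty (ForestPresentation R V) := by
  let S : Setoid ι := idempotentSetoid hprim
  let π : ι → Quotient S := Quotient.mk S
  choose a ha using hgen
  have hclosure (v : Quotient S) := sum_fiber_mem_closure (v := v) (f := e v.out) π
    (fun i => (hprim i).1) fun i hi => Quotient.exact (hi.trans v.out_eq.symm)
  refine ⟨Quotient S, inferInstance, ⟨{
    η := fun v => ∑ i with π i = v, e i
    ε := fun v => e v.out
    arrow := fun w u => e w.out * a u.out w.out * e u.out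
    Edge := fun u w => IsArrow e u.out w.out
    completeOrthogonal := completeOrthogonalIdempotents_sum_fiber he π
    isPrimitiveIdem := fun v => hprim v.out
    η_mul_ε := fun v => ?_
    η_mem_closure := hclosure
    mem_jacobson := fun u w huw r => ?_
    mem_jacobson_sq := fun u w hedge => ?_
    ε_mul_arrow := fun w u => by rw [← mul_assoc, ← mul_assoc, (hprim w.out).1.eq]
    arrow_mul_ε := fun w u => by rw [mul_assoc, (hprim u.out).1.eq]
    exists_sub_mem := fun u w _ => ha u.out w.out
    edge_asymm := fun u w => hasymm u.out w.out
    isAcyclic := ?_ }⟩⟩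
  · rw [Finset.sum_mul, Finset.sum_eq_single_of_mem v.out
      (Finset.mem_filter.2 ⟨Finset.mem_univ _, v.out_eq⟩) (fun i _ hi => he.ortho hi),
      (hprim v.out).1.eq]
  · refine mul_mul_mem_of_mem_closure (I := ⊤) (fun s _ => ?_) (hclosure w) (hclosure u) r trivial
    by_contra hs
    exact huw (Quotient.out_equiv_out.1 ((hprim w.out).idempotentEquivalent (hprim u.out) hs)).symm
  · refine mul_mul_mem_of_mem_closure (fun r hr => ?_) (hclosure w) (hclosure u)
    by_contra hr2
    exact hedge ⟨r, hr, hr2⟩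
  · refine hacyclic.comap (f := ⟨Quotient.out, fun {u w} huw => ?_⟩) Quotient.out_injective
    rw [SimpleGraph.fromRel_adj] at huw ⊢
    exact ⟨Quotient.out_injective.ne huw.1, huw.2⟩

end IdempotentClasses

section Opposite

open MulOpposite

variable {Λ : Type} [Ring Λ]

theorem inRad_iff_op_mem_jacobson {x : Λ} : InRad Λ x ↔ op x ∈ Ring.jacobson Λᵐᵒᵖ := by
  rw [mem_jacobson_iff, opEquiv.surjective.forall]
  refine forall_congr' fun y => ?_
  rw [isUnit_one_sub_mul_comm, ← isUnit_op]
  rfl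

theorem inRadSq_iff_op_mem_jacobson_sq {x : Λ} :
    InRadSq Λ x ↔ op x ∈ Ring.jacobson Λᵐᵒᵖ ^ 2 := by
  have hsq : Ring.jacobson Λᵐᵒᵖ ^ 2 = Ring.jacobson Λᵐᵒᵖ * Ring.jacobson Λᵐᵒᵖ := by
    rw [show 2 = 1 + 1 from rfl, Ideal.IsTwoSided.pow_add, Submodule.pow_one]
  rw [hsq]
  constructor
  · intro hx
    induction hx using AddSubgroup.closure_induction with
    | mem z hz =>
      obtain ⟨a, b, ha, hb, rfl⟩ := hz
      exact Ideal.mul_mem_mul (inRad_iff_op_mem_jacobson.1 hb) (inRad_iff_op_mem_jacobson.1 ha)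
    | zero => exact zero_mem _
    | add p q _ _ hp hq => exact add_mem hp hq
    | neg p _ hp => exact neg_mem hp
  · intro hx
    rw [← unop_op x]
    refine Submodule.mul_induction_on (C := fun y => InRadSq Λ y.unop) hx (fun p hp q hq => ?_)
      fun p q => AddSubgroup.add_mem _
    exact AddSubgroup.subset_closure ⟨q.unop, p.unop, inRad_iff_op_mem_jacobson.2 hq,
      inRad_iff_op_mem_jacobson.2 hp, rfl⟩

variable {n : ℕ} {e : Fin n → Λ}

theorem inRadSq_mul_mul_iff {i j : Fin n} {x : Λ} :
    InRadSq Λ (e i * x * e j) ↔ op (e j) * op x * op (e i) ∈ Ring.jacobson Λᵐᵒᵖ ^ 2 := by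
  rw [inRadSq_iff_op_mem_jacobson_sq, op_mul, op_mul, mul_assoc]

theorem hasArrow_iff_isArrow_op {i j : Fin n} :
    HasArrow Λ e i j ↔ IsArrow (fun k => op (e k)) i j := by
  rw [IsArrow, opEquiv.surjective.exists]
  exact exists_congr fun x => and_congr inRad_iff_op_mem_jacobson inRadSq_mul_mul_iff.not

theorem IsCompletePrimitiveFamily.completeOrthogonalIdempotents_op
    (he : IsCompletePrimitiveFamily Λ e) :
    CompleteOrthogonalIdempotents fun i => op (e i) :=
  CompleteOrthogonalIdempotents.iff_ortho_complete.2
    ⟨fun i j hij => congrArg op (he.2.1 j i hij.symm),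
      (map_sum opAddEquiv e Finset.univ).symm.trans (congrArg op he.2.2)⟩

theorem ArrowMultLE1.exists_arrow_generator_op {K : Type} [Field K] [Algebra K Λ]
    (hmult : ArrowMultLE1 Λ K e) (u w : Fin n) :
    ∃ a, ∀ r ∈ Ring.jacobson Λᵐᵒᵖ, ∃ c, op (e w) * r * op (e u) - c * (op (e w) * a * op (e u)) ∈
      Ring.jacobson Λᵐᵒᵖ ^ 2 := by
  refine exists_arrow_generator K fun r hr r' hr' => ?_
  obtain ⟨a, b, hab, hrel⟩ := hmult u w r.unop r'.unop
    (inRad_iff_op_mem_jacobson.2 hr) (inRad_iff_op_mem_jacobson.2 hr')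
  refine ⟨a, b, hab, ?_⟩
  simpa only [MulOpposite.op_add, MulOpposite.op_smul, op_mul, op_unop, mul_assoc] using
    inRadSq_iff_op_mem_jacobson_sq.1 hrel

end Opposite

theorem tau_tilting_finite_tree_quiver_algebra_is_rep_finite_general
    (K Λ : Type) [Field K] [Ring Λ] [Algebra K Λ] [FiniteDimensional K Λ] {n : ℕ} {e : Fin n → Λ}
    (he : IsCompletePrimitiveFamily Λ e) (hasymm : ∀ i j, ¬ (HasArrow Λ e i j ∧ HasArrow Λ e j i))
    (hmult : ArrowMultLE1 Λ K e) (hacyclic : (QuiverGraph Λ e).IsAcyclic)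
    (ht : IsTauTiltingFinite Λ) : IsRepFinite Λ := by
  have : FiniteDimensional K Λᵐᵒᵖ := Module.Finite.equiv (MulOpposite.opLinearEquiv K)
  have : IsArtinianRing Λᵐᵒᵖ := IsArtinianRing.of_finite K Λᵐᵒᵖ
  have harrow : HasArrow Λ e = IsArrow fun i => MulOpposite.op (e i) :=
    funext₂ fun _ _ => propext hasArrow_iff_isArrow_op
  rw [QuiverGraph] at hacyclic
  rw [harrow] at hacyclic hasymm
  obtain ⟨V, _, ⟨T⟩⟩ := exists_forestPresentation he.completeOrthogonalIdempotents_op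
    (fun i => (he.1 i).op) (fun u w huw hwu => hasymm u w ⟨huw, hwu⟩)
    hmult.exists_arrow_generator_op hacyclic
  exact T.isRepFiniteRing (isHomFiniteOverCenter_of_finiteDimensional K) ht

/-- Corollary 4.4 of the paper.  Every τ-tilting-finite
finite-dimensional algebra over an algebraically closed field whose quiver has
underlying graph a tree is representation-finite. -/
theorem tau_tilting_finite_tree_quiver_algebra_is_rep_finite
    (K Λ : Type) [Field K] [IsAlgClosed K] [Ring Λ] [Algebra K Λ] [FiniteDimensional K Λ]
    (htree : IsTreeQuiverAlgebra Λ K)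
    (ht : IsTauTiltingFinite Λ) :
    IsRepFinite Λ := by
  obtain ⟨_, _, he, -, hasymm, hmult, htree⟩ := htree
  exact tau_tilting_finite_tree_quiver_algebra_is_rep_finite_general K Λ he hasymm hmult
    htree.isAcyclic ht

end PaperSilting
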